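/- Let n ≥ 2 and 0 < α < 1. Let Ω ⊂ ℝⁿ be a bounded domain with 0 ∈ ∂Ω and let u solve Δu = f in Ω∩B₁ and u = g on ∂Ω∩B₁. Suppose u ∈ C^{1,α}(0), f ∈ C^{α}(0), g ∈ C^{2,α}(0), ∂Ω ∈ C^{1,α}(0), and u(0) = |Du(0)| = 0 and |Dg(0)| = 0. Then u ∈ C^{2,α}(0): there exist a constant C, depending only on n, α and ‖∂Ω∩B₁‖_{C^{1,α}(0)}, and a homogeneous polynomial P of degree 2 such that |u(x) − P(x)| ≤ C|x|^{2+α}(‖u‖_{L^∞(Ω∩B₁)} + ‖f‖_{C^{α}(0)} + ‖g‖_{C^{2,α}(0)}) for all x ∈ Ω∩B₁, |D²u(0)| ≤ C(‖u‖_{L^∞(Ω∩B₁)} + ‖f‖_{C^{α}(0)} + ‖g‖_{C^{2,α}(0)}), and moreover ΔP = f(0) and P(x′,0) ≡ P_g(x′,0). -/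

import Mathlib

open MvPolynomial Metric Set MeasureTheory Bornology

noncomputable section

/-- `ℝⁿ` with the Euclidean norm. -/
abbrev En (n : ℕ) := EuclideanSpace ℝ (Fin n)

variable {n : ℕ}

/-- Evaluation of a multivariate polynomial at a point of `ℝⁿ`. -/
def peval (P : MvPolynomial (Fin n) ℝ) (x : En n) : ℝ :=
  MvPolynomial.eval (fun i => x i) P

/-- Total degree of a monomial (multi-index). -/
def mdeg (d : Fin n →₀ ℕ) : ℕ := d.sum fun _ e => e

/-- `σ!` for a multi-index `σ`. -/
def mfact (d : Fin n →₀ ℕ) : ℕ := d.prod fun _ e => Nat.factorial e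

/-- The norm `‖P‖ = Σ_σ |a_σ|` of a polynomial `P = Σ_σ (a_σ/σ!) x^σ`. -/
def pnorm (P : MvPolynomial (Fin n) ℝ) : ℝ :=
  ∑ d ∈ P.support, (mfact d : ℝ) * |MvPolynomial.coeff d P|

/-- `|D^i P(0)|`, the Euclidean norm of the `i`-th derivative of `P` at `0`. -/
def derivNorm (i : ℕ) (P : MvPolynomial (Fin n) ℝ) : ℝ :=
  Real.sqrt (∑ d ∈ P.support.filter (fun d => mdeg d = i),
    ((mfact d : ℝ) * MvPolynomial.coeff d P) ^ 2)

/-- Polynomial Laplacian. -/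
def plap (P : MvPolynomial (Fin n) ℝ) : MvPolynomial (Fin n) ℝ :=
  ∑ i, MvPolynomial.pderiv i (MvPolynomial.pderiv i P)

/-- The index of the last coordinate. -/
def lastIdx (n : ℕ) [NeZero n] : Fin n :=
  ⟨n - 1, Nat.sub_lt (Nat.pos_of_ne_zero (NeZero.ne n)) Nat.one_pos⟩

variable [NeZero n]

/-- The last coordinate `x_n`. -/
def xn (x : En n) : ℝ := x (lastIdx n)

/-- `|x′|`, the norm of the first `n-1` coordinates. -/
def xpn (x : En n) : ℝ :=
  Real.sqrt (∑ i ∈ Finset.univ.erase (lastIdx n), (x i) ^ 2)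

/-- Substitution of the polynomial `q` for the last variable `x_n`. -/
def substLast (q P : MvPolynomial (Fin n) ℝ) : MvPolynomial (Fin n) ℝ :=
  MvPolynomial.aeval (fun i => if i = lastIdx n then q else MvPolynomial.X i) P

/-- The pointwise Laplacian of `u` at `x` (sum of pure second derivatives). -/
def lapAt (u : En n → ℝ) (x : En n) : ℝ :=
  ∑ i, fderiv ℝ (fderiv ℝ u) x (EuclideanSpace.single i 1) (EuclideanSpace.single i 1)

/-- `u` is a (classical) solution of `Δu = f` in `Ω ∩ B₁`, `u = g` on `∂Ω ∩ B₁`. -/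
def SolvesDirichlet (Ω : Set (En n)) (u f g : En n → ℝ) : Prop :=
  ContinuousOn u (closure Ω ∩ ball 0 1) ∧
  (∀ x ∈ Ω ∩ ball (0 : En n) 1,
    DifferentiableAt ℝ u x ∧ DifferentiableAt ℝ (fderiv ℝ u) x ∧ lapAt u x = f x) ∧
  (∀ x ∈ frontier Ω ∩ ball (0 : En n) 1, u x = g x)

/-- `u` is a (classical) solution of the oblique derivative problem `Δu = f` in `Ω ∩ B₁`,
`β·Du = g` on `∂Ω ∩ B₁`, with `‖β‖_∞ ≤ 1` and `β·e_n ≥ a₀`; `Du` is the (continuous up to the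
boundary) gradient of `u`. -/
def SolvesOblique (Ω : Set (En n)) (u f g : En n → ℝ) (β Du : En n → En n) (a₀ : ℝ) : Prop :=
  ContinuousOn u (closure Ω ∩ ball 0 1) ∧
  ContinuousOn Du (closure Ω ∩ ball 0 1) ∧
  (∀ x ∈ Ω ∩ ball (0 : En n) 1,
    DifferentiableAt ℝ u x ∧ (∀ i, fderiv ℝ u x (EuclideanSpace.single i 1) = Du x i) ∧
    DifferentiableAt ℝ (fderiv ℝ u) x ∧ lapAt u x = f x) ∧
  (∀ x ∈ frontier Ω ∩ ball (0 : En n) 1,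
    (∑ i, β x i * Du x i) = g x ∧ ‖β x‖ ≤ 1 ∧ a₀ ≤ β x (lastIdx n))

/-- `∂Ω ∈ C^{m,α}(0)` with polynomial `P_Ω = P` and constant `K`. -/
def DomainCmα (m : ℕ) (α K : ℝ) (P : MvPolynomial (Fin n) ℝ) (Ω : Set (En n)) : Prop :=
  P.totalDegree ≤ m ∧ MvPolynomial.coeff 0 P = 0 ∧
  MvPolynomial.pderiv (lastIdx n) P = 0 ∧
  (1 ≤ m → ∀ i, MvPolynomial.coeff (Finsupp.single i 1) P = 0) ∧
  (∀ x : En n, ‖x‖ < 1 → xn x > peval P x + K * (xpn x) ^ ((m : ℝ) + α) → x ∈ Ω) ∧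
  (∀ x : En n, ‖x‖ < 1 → xn x < peval P x - K * (xpn x) ^ ((m : ℝ) + α) → x ∉ Ω)

/-- `∂Ω ∈ C^{1,α}(0)` with constant `K` (the degree-one polynomial is necessarily `0`). -/
def Domain1α (α K : ℝ) (Ω : Set (En n)) : Prop :=
  (∀ x : En n, ‖x‖ < 1 → xn x > K * (xpn x) ^ ((1 : ℝ) + α) → x ∈ Ω) ∧
  (∀ x : En n, ‖x‖ < 1 → xn x < -(K * (xpn x) ^ ((1 : ℝ) + α)) → x ∉ Ω)

/-- `[∂Ω∩B₁]_{C^{0,1}(0)} ≤ δ`. -/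
def DomainLip (δ : ℝ) (Ω : Set (En n)) : Prop :=
  (∀ x : En n, ‖x‖ < 1 → xn x > δ * xpn x → x ∈ Ω) ∧
  (∀ x : En n, ‖x‖ < 1 → xn x < -(δ * xpn x) → x ∉ Ω)

/-- `osc_{B₁} ∂Ω ≤ δ`. -/
def FrontierOscLe (Ω : Set (En n)) (δ : ℝ) : Prop :=
  ∀ x ∈ frontier Ω ∩ ball (0 : En n) 1, ∀ y ∈ frontier Ω ∩ ball (0 : En n) 1,
    xn x - xn y ≤ δ

/-- The `L^n` norm of `f` on a set `S ⊆ ℝⁿ`. -/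
def LnNorm (n : ℕ) (S : Set (En n)) (f : En n → ℝ) : ℝ :=
  (∫ x in S, |f x| ^ (n : ℝ)) ^ ((n : ℝ)⁻¹)

/-- `∂Ω` is `C^{m,α}` at the point `x₀` with constants `K, r₀`: after an isometric change of
coordinates `φ` taking `x₀` to `0`, the boundary is trapped between `P_Ω(x′) ± K|x′|^{m+α}`. -/
def BoundaryPtCmα (m : ℕ) (α K r₀ : ℝ) (Ω : Set (En n)) (x₀ : En n) : Prop :=
  ∃ (φ : En n ≃ᵢ En n) (P : MvPolynomial (Fin n) ℝ), φ x₀ = 0 ∧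
    P.totalDegree ≤ m ∧ MvPolynomial.coeff 0 P = 0 ∧
    MvPolynomial.pderiv (lastIdx n) P = 0 ∧
    (1 ≤ m → ∀ i, MvPolynomial.coeff (Finsupp.single i 1) P = 0) ∧
    (∀ y : En n, ‖y‖ < r₀ → xn y > peval P y + K * (xpn y) ^ ((m : ℝ) + α) → φ.symm y ∈ Ω) ∧
    (∀ y : En n, ‖y‖ < r₀ → xn y < peval P y - K * (xpn y) ^ ((m : ℝ) + α) → φ.symm y ∉ Ω)

/-- `∂Ω ∩ B₁ ∈ C^{m,α}`: pointwise `C^{m,α}` with constants uniform on compact subsets. -/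
def BoundaryCmα (m : ℕ) (α : ℝ) (Ω : Set (En n)) : Prop :=
  ∀ S : Set (En n), IsCompact S → S ⊆ frontier Ω ∩ ball (0 : En n) 1 →
    ∃ K r₀ : ℝ, 0 ≤ K ∧ 0 < r₀ ∧ ∀ x₀ ∈ S, BoundaryPtCmα m α K r₀ Ω x₀

/-- `∂Ω ∩ B₁ ∈ C^∞`. -/
def BoundarySmooth (Ω : Set (En n)) : Prop :=
  ∀ m : ℕ, 1 ≤ m → ∀ α : ℝ, 0 < α → α ≤ 1 → BoundaryCmα m α Ω

/-- `u ∈ C^∞(Ω̄ ∩ B₁)`: near every point of `Ω̄ ∩ B₁`, `u` agrees on `Ω` with a globally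
smooth function. -/
def SmoothUpToBoundary (Ω : Set (En n)) (u : En n → ℝ) : Prop :=
  ∀ x₀ ∈ closure Ω ∩ ball (0 : En n) 1, ∃ ε : ℝ, 0 < ε ∧ ∃ v : En n → ℝ,
    ContDiff ℝ (⊤ : ℕ∞) v ∧ ∀ x ∈ Ω ∩ ball x₀ ε, v x = u x

/-!
Subtract the homogeneous quadratic polynomial that has Laplacian `f(0)` and agrees with `P_g` on
`{xₙ = 0}`. In a ball of radius `r` the difference then has Laplacian of order `r ^ α`, boundary
values of order `r ^ (2 + α)`, and a boundary within `r ^ (1 + α)` of `{xₙ = 0}`.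

Comparison with explicit quadratic barriers bounds such a function linearly in the distance to the
boundary. Applied to the difference of the function and its reflection in a tangential coordinate,
the same comparison bounds tangential differences; two of these and the linear bound together show
that second tangential differences are cubic in the ratio of the scales. Hence, up to that order and
the size of the data, the function has the form `(A + ∑ᵢ bᵢ xᵢ) xₙ` with `bₙ = 0`.

The constant `A` is where `Du(0) = 0` enters. On the scales `r₀ θᵏ` one approximates by the
polynomials with `A = 0`, the errors being measured by the weight `r ^ (1 + α) (r + ε)`. For each
`ε > 0` the `C^{1,α}` decay of the solution makes the error finite in this weight, and passing to
the next scale halves it up to the data, so it is bounded by the data independently of `ε`. At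
`ε = 0` this is the estimate of order `2 + α`, and the coefficients converge.
-/

open Filter Topology Function
open Fintype (card)

/-! ### Half boxes and reflections -/

variable {ι : Type*}

theorem isClosed_setOf_le_apply (l : ι) (a : ℝ) : IsClosed {x : ι → ℝ | a ≤ x l} :=
  isClosed_le continuous_const (continuous_apply l)

theorem setOf_le_apply_mem_nhds {l : ι} {x : ι → ℝ} {a : ℝ} (hx : a < x l) :
    {y : ι → ℝ | a ≤ y l} ∈ 𝓝 x :=
  (continuous_apply l).continuousAt.eventually (Ici_mem_nhds hx)

variable [Fintype ι]

/-- The half of the cube of radius `R` on which the coordinate `l` is nonnegative. -/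
def halfBox (l : ι) (R : ℝ) : Set (ι → ℝ) := {x | ‖x‖ ≤ R ∧ 0 ≤ x l}

section HalfBox

variable {l : ι} {R R' : ℝ} {x τ : ι → ℝ}

theorem abs_apply_le_of_norm_le (hx : ‖x‖ ≤ R) (i : ι) : |x i| ≤ R :=
  (norm_le_pi_norm x i).trans hx

theorem halfBox_subset (h : R ≤ R') : halfBox l R ⊆ halfBox l R' :=
  fun _ hx => ⟨hx.1.trans h, hx.2⟩

theorem mem_halfBox_of_mem_closedBall {p : ι → ℝ} (hp : ‖p‖ ≤ R) (hx : x ∈ closedBall p R')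
    (hxl : 0 ≤ x l) : x ∈ halfBox l (R + R') :=
  ⟨(norm_le_norm_add_norm_sub' x p).trans (add_le_add hp (mem_closedBall_iff_norm.1 hx)), hxl⟩

theorem add_mem_halfBox (hx : x ∈ halfBox l R) (hτ : ‖τ‖ ≤ R') (hτl : τ l = 0) :
    x + τ ∈ halfBox l (R + R') :=
  ⟨(norm_add_le x τ).trans (add_le_add hx.1 hτ), by simpa [hτl] using hx.2⟩

end HalfBox

variable [DecidableEq ι]

theorem norm_update_le {R : ℝ} {x : ι → ℝ} (hx : ‖x‖ ≤ R) (i : ι) {a : ℝ} (ha : |a| ≤ R) :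
    ‖update x i a‖ ≤ R := by
  refine (pi_norm_le_iff_of_nonneg ((norm_nonneg x).trans hx)).2 fun j => ?_
  rcases eq_or_ne j i with rfl | hj
  · simpa using ha
  · simpa [hj] using abs_apply_le_of_norm_le hx j

/-- The reflection about `p` of the coordinates in `J`. -/
def reflect {ι : Type*} [DecidableEq ι] (J : Finset ι) (p x : ι → ℝ) : ι → ℝ :=
  J.piecewise (fun j => 2 * p j - x j) x

section Reflect

variable {ι : Type*} [DecidableEq ι] {J : Finset ι} {p x : ι → ℝ} {j : ι}

theorem reflect_apply_of_mem (hj : j ∈ J) : reflect J p x j = 2 * p j - x j :=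
  J.piecewise_eq_of_mem _ _ hj

theorem reflect_apply_of_notMem (hj : j ∉ J) : reflect J p x j = x j :=
  J.piecewise_eq_of_notMem _ _ hj

theorem continuous_reflect : Continuous (reflect J p) := by
  refine continuous_pi fun j => ?_
  by_cases hj : j ∈ J
  · simp only [reflect_apply_of_mem hj]; fun_prop
  · simp only [reflect_apply_of_notMem hj]; fun_prop

theorem norm_reflect_sub [Fintype ι] : ‖reflect J p x - p‖ = ‖x - p‖ := by
  simp only [Pi.norm_def, NNReal.coe_inj]
  refine Finset.sup_congr rfl fun j _ => ?_
  by_cases hj : j ∈ J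
  · rw [Pi.sub_apply, Pi.sub_apply, reflect_apply_of_mem hj, ← nnnorm_neg]
    congr 1
    ring
  · rw [Pi.sub_apply, Pi.sub_apply, reflect_apply_of_notMem hj]

end Reflect

/-! ### A pointwise Laplacian and the maximum principle -/

/-- `HasLaplacian w x L`: the sum of the symmetric second difference quotients of `w` at `x` in
the coordinate directions tends to `L`. This holds for the classical Laplacian, and unlike it is
stable under differences and reflections without any differentiability bookkeeping. -/
def HasLaplacian (w : (ι → ℝ) → ℝ) (x : ι → ℝ) (L : ℝ) : Prop :=
  Tendsto (fun t : ℝ => ∑ i, (w (x + Pi.single i t) + w (x - Pi.single i t) - 2 * w x) / t ^ 2)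
    (𝓝[>] 0) (𝓝 L)

namespace HasLaplacian

variable {w v : (ι → ℝ) → ℝ} {x : ι → ℝ} {L M : ℝ}

theorem add (hw : HasLaplacian w x L) (hv : HasLaplacian v x M) :
    HasLaplacian (fun y => w y + v y) x (L + M) := by
  refine (Tendsto.add hw hv).congr fun t => ?_
  rw [← Finset.sum_add_distrib]
  exact Finset.sum_congr rfl fun i _ => by ring

theorem const_mul (c : ℝ) (hw : HasLaplacian w x L) :
    HasLaplacian (fun y => c * w y) x (c * L) := by
  refine (Tendsto.const_mul c hw).congr fun t => ?_
  rw [Finset.mul_sum]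
  exact Finset.sum_congr rfl fun i _ => by ring

theorem neg (hw : HasLaplacian w x L) : HasLaplacian (fun y => -w y) x (-L) := by
  simpa only [neg_one_mul] using hw.const_mul (-1)

theorem sub (hw : HasLaplacian w x L) (hv : HasLaplacian v x M) :
    HasLaplacian (fun y => w y - v y) x (L - M) := by
  simpa only [sub_eq_add_neg] using hw.add hv.neg

theorem of_secondDiff_eq (D : ι → ℝ)
    (h : ∀ i t, w (x + Pi.single i t) + w (x - Pi.single i t) - 2 * w x = D i * t ^ 2) :
    HasLaplacian w x (∑ i, D i) := by
  refine tendsto_const_nhds.congr' ?_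
  filter_upwards [self_mem_nhdsWithin] with t (ht : 0 < t)
  exact Finset.sum_congr rfl fun i _ => by rw [h, mul_div_cancel_right₀ _ (pow_pos ht 2).ne']

theorem comp_add_right (c : ι → ℝ) (hw : HasLaplacian w (x + c) L) :
    HasLaplacian (fun y => w (y + c)) x L := by
  simpa only [HasLaplacian, add_right_comm x c, sub_add_eq_add_sub] using hw

theorem comp_reflect {J : Finset ι} {p : ι → ℝ} (hw : HasLaplacian w (reflect J p x) L) :
    HasLaplacian (fun y => w (reflect J p y)) x L := by
  refine Tendsto.congr (fun t => Finset.sum_congr rfl fun i _ => ?_) hw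
  beta_reduce
  by_cases hi : i ∈ J
  · have hadd : ∀ s, reflect J p (x + Pi.single i s) = reflect J p x - Pi.single i s := fun s => by
      funext j
      rcases eq_or_ne j i with rfl | hj
      · simp only [reflect_apply_of_mem hi, Pi.sub_apply, Pi.add_apply, Pi.single_eq_same]; ring
      · simp [reflect, Finset.piecewise, hj]
    rw [hadd, sub_eq_add_neg x, ← Pi.single_neg, hadd, Pi.single_neg, sub_neg_eq_add,
      add_comm (w _) (w _)]
  · have hadd : ∀ s, reflect J p (x + Pi.single i s) = reflect J p x + Pi.single i s := fun s => by
      funext j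
      rcases eq_or_ne j i with rfl | hj
      · simp [reflect_apply_of_notMem hi]
      · simp [reflect, Finset.piecewise, hj]
    rw [hadd, sub_eq_add_neg x, ← Pi.single_neg, hadd, Pi.single_neg, ← sub_eq_add_neg]

theorem nonpos_of_isLocalMax (hw : HasLaplacian w x L) (hmax : IsLocalMax w x) : L ≤ 0 := by
  have tendsto_line : ∀ i, Tendsto (fun t : ℝ => x + Pi.single i t) (𝓝 0) (𝓝 x) := fun i => by
    have h : Continuous fun t : ℝ => x + Pi.single i t :=
      continuous_const.add (continuous_single (A := fun _ => ℝ) i)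
    simpa using h.tendsto 0
  have tendsto_line' : ∀ i, Tendsto (fun t : ℝ => x - Pi.single i t) (𝓝 0) (𝓝 x) := fun i => by
    have h : Continuous fun t : ℝ => x - Pi.single i t :=
      continuous_const.sub (continuous_single (A := fun _ => ℝ) i)
    simpa using h.tendsto 0
  have hev : ∀ᶠ t in 𝓝[>] (0 : ℝ), ∀ i, w (x + Pi.single i t) ≤ w x ∧ w (x - Pi.single i t) ≤ w x :=
    nhdsWithin_le_nhds <| eventually_all.2 fun i =>
      ((tendsto_line i).eventually hmax).and ((tendsto_line' i).eventually hmax)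
  refine le_of_tendsto hw ?_
  filter_upwards [hev] with t ht
  exact Finset.sum_nonpos fun i _ =>
    div_nonpos_of_nonpos_of_nonneg (by linarith [ht i]) (sq_nonneg t)

end HasLaplacian

theorem hasLaplacian_sum_quadratic (a b c x : ι → ℝ) (d : ℝ) :
    HasLaplacian (fun y => d + ∑ i, (a i * (y i - c i) ^ 2 + b i * (y i - c i))) x
      (∑ i, 2 * a i) := by
  refine HasLaplacian.of_secondDiff_eq _ fun i t => ?_
  have hrest : ∀ s : ℝ, ∑ j, (a j * ((x + Pi.single i s : ι → ℝ) j - c j) ^ 2 +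
      b j * ((x + Pi.single i s : ι → ℝ) j - c j)) =
      ∑ j, (a j * (x j - c j) ^ 2 + b j * (x j - c j)) +
        (a i * s ^ 2 + 2 * a i * s * (x i - c i) + b i * s) := fun s => by
    rw [← sub_eq_iff_eq_add', ← Finset.sum_sub_distrib, Finset.sum_eq_single i]
    · simp only [Pi.add_apply, Pi.single_eq_same]; ring
    · intro j _ hj
      simp [Pi.single_eq_of_ne hj]
    · simp
  rw [sub_eq_add_neg x, ← Pi.single_neg, hrest, hrest]
  ring

theorem nonpos_of_laplacian_nonneg [Nonempty ι] {K : Set (ι → ℝ)} (hK : IsCompact K)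
    {v : (ι → ℝ) → ℝ} (hv : ContinuousOn v K)
    (h : ∀ x ∈ K, v x ≤ 0 ∨ (K ∈ 𝓝 x ∧ ∃ L, HasLaplacian v x L ∧ 0 ≤ L)) :
    ∀ x ∈ K, v x ≤ 0 := by
  let q : (ι → ℝ) → ℝ := fun y => ∑ i, y i ^ 2
  have hq : Continuous q := by fun_prop
  have hq_laplacian : ∀ x, HasLaplacian q x (∑ _i : ι, 2 * 1) := fun x => by
    simpa [q] using hasLaplacian_sum_quadratic (1 : ι → ℝ) 0 0 x 0
  obtain ⟨B, hB⟩ := hK.bddAbove_image hq.continuousOn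
  have hqB : ∀ x ∈ K, q x ≤ B := fun x hx => hB (mem_image_of_mem q hx)
  -- `v + δ (q - B)` has positive Laplacian, so it has no interior maximum.
  have perturbed : ∀ δ > 0, ∀ x ∈ K, v x + δ * (q x - B) ≤ 0 := by
    intro δ hδ x hx
    obtain ⟨z, hzK, hz⟩ := hK.exists_isMaxOn ⟨x, hx⟩
      (hv.add (continuousOn_const.mul (hq.continuousOn.sub continuousOn_const)) :
        ContinuousOn (fun y => v y + δ * (q y - B)) K)
    refine (hz hx).trans ?_
    rcases h z hzK with hz0 | ⟨hzn, L, hL, hL0⟩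
    · exact add_nonpos hz0 (mul_nonpos_of_nonneg_of_nonpos hδ.le (sub_nonpos.2 (hqB z hzK)))
    · have hmax : IsLocalMax (fun y => v y + δ * q y) z := by
        filter_upwards [hzn] with y hy
        have hyz : v y + δ * (q y - B) ≤ v z + δ * (q z - B) := hz hy
        linarith
      have hpos : 0 < δ * ∑ _i : ι, (2 * 1 : ℝ) :=
        mul_pos hδ (Finset.sum_pos (fun _ _ => by norm_num) Finset.univ_nonempty)
      have := (hL.add ((hq_laplacian z).const_mul δ)).nonpos_of_isLocalMax hmax
      linarith
  intro x hx
  have hlim : Tendsto (fun δ : ℝ => v x + δ * (q x - B)) (𝓝[>] 0) (𝓝 (v x + 0 * (q x - B))) :=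
    (Continuous.tendsto (by fun_prop) 0).mono_left nhdsWithin_le_nhds
  have := le_of_tendsto hlim (by filter_upwards [self_mem_nhdsWithin] with δ hδ
                                 exact perturbed δ hδ x hx)
  simpa using this

theorem abs_le_of_barrier [Nonempty ι] {K : Set (ι → ℝ)} (hK : IsCompact K) {w φ : (ι → ℝ) → ℝ}
    (hw : ContinuousOn w K) (hφ : ContinuousOn φ K)
    (h : ∀ x ∈ K, |w x| ≤ φ x ∨
      (K ∈ 𝓝 x ∧ ∃ L Λ, HasLaplacian w x L ∧ HasLaplacian φ x Λ ∧ |L| ≤ -Λ)) :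
    ∀ x ∈ K, |w x| ≤ φ x := by
  have upper : ∀ x ∈ K, w x - φ x ≤ 0 := by
    refine nonpos_of_laplacian_nonneg hK (hw.sub hφ) fun x hx => (h x hx).imp ?_ ?_
    · exact fun hle => sub_nonpos.2 ((le_abs_self _).trans hle)
    · rintro ⟨hn, L, Λ, hL, hΛ, hle⟩
      exact ⟨hn, _, hL.sub hΛ, by linarith [neg_abs_le L]⟩
  have lower : ∀ x ∈ K, -w x - φ x ≤ 0 := by
    refine nonpos_of_laplacian_nonneg hK (hw.neg.sub hφ) fun x hx => (h x hx).imp ?_ ?_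
    · exact fun hle => sub_nonpos.2 ((neg_le_abs _).trans hle)
    · rintro ⟨hn, L, Λ, hL, hΛ, hle⟩
      exact ⟨hn, _, hL.neg.sub hΛ, by linarith [le_abs_self L]⟩
  exact fun x hx => abs_le.2 ⟨by linarith [lower x hx], by linarith [upper x hx]⟩

/-! ### Comparison with quadratic barriers -/

/-- The quadratic barrier centred at `p`, at length scale `r`: for nonnegative coefficients it is
concave in the direction `l` and convex in the other directions. -/
def barrier (l : ι) (p : ι → ℝ) (r c₀ c₁ c₂ c₃ : ℝ) (y : ι → ℝ) : ℝ :=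
  c₀ + (c₁ * ((y l - p l) / r) - c₂ * ((y l - p l) / r) ^ 2) +
    c₃ * ∑ j ∈ Finset.univ.erase l, ((y j - p j) / r) ^ 2

section Barrier

variable {l : ι} {p y : ι → ℝ} {r c₀ c₁ c₂ c₃ : ℝ}

theorem continuous_barrier : Continuous (barrier l p r c₀ c₁ c₂ c₃) := by
  unfold barrier
  fun_prop

theorem hasLaplacian_barrier :
    HasLaplacian (barrier l p r c₀ c₁ c₂ c₃) y (2 * (c₃ * (card ι - 1) - c₂) / r ^ 2) := by
  have hcard : ((Finset.univ.erase l).card : ℝ) = card ι - 1 := by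
    rw [Finset.card_erase_of_mem (Finset.mem_univ l), Finset.card_univ,
      Nat.cast_pred (Fintype.card_pos_iff.2 ⟨l⟩)]
  let a : ι → ℝ := update (fun _ => c₃ / r ^ 2) l (-c₂ / r ^ 2)
  let b : ι → ℝ := Pi.single l (c₁ / r)
  have ha : ∀ i ∈ Finset.univ.erase l, a i = c₃ / r ^ 2 := fun i hi =>
    update_of_ne (Finset.ne_of_mem_erase hi) _ _
  have hb : ∀ i ∈ Finset.univ.erase l, b i = 0 := fun i hi =>
    Pi.single_eq_of_ne (Finset.ne_of_mem_erase hi) _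
  have hsplit : ∀ f : ι → ℝ, ∑ i, f i = f l + ∑ i ∈ Finset.univ.erase l, f i := fun f =>
    (Finset.add_sum_erase _ f (Finset.mem_univ l)).symm
  convert hasLaplacian_sum_quadratic a b p y c₀ using 1
  · funext z
    have hrest : ∑ i ∈ Finset.univ.erase l, (a i * (z i - p i) ^ 2 + b i * (z i - p i)) =
        c₃ * ∑ i ∈ Finset.univ.erase l, ((z i - p i) / r) ^ 2 := by
      rw [Finset.mul_sum]
      exact Finset.sum_congr rfl fun i hi => by rw [ha i hi, hb i hi]; ring
    rw [barrier, hsplit, hrest]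
    simp only [a, b, update_self, Pi.single_eq_same]
    ring
  · rw [hsplit, Finset.sum_congr rfl fun i hi => congrArg (2 * ·) (ha i hi), Finset.sum_const,
      nsmul_eq_mul, hcard]
    simp only [a, update_self]
    ring

theorem sum_erase_div_sq_nonneg : 0 ≤ ∑ j ∈ Finset.univ.erase l, ((y j - p j) / r) ^ 2 :=
  Finset.sum_nonneg fun _ _ => sq_nonneg _

theorem le_barrier (hy₀ : 0 ≤ (y l - p l) / r) (hy₁ : (y l - p l) / r ≤ 1) (hc₂ : 0 ≤ c₂)
    (hc₁ : c₂ ≤ c₁) (hc₃ : 0 ≤ c₃) : c₀ ≤ barrier l p r c₀ c₁ c₂ c₃ y := by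
  have hside := mul_nonneg hc₃ (sum_erase_div_sq_nonneg (l := l) (p := p) (y := y) (r := r))
  have hconcave := mul_nonneg hc₂ (mul_nonneg hy₀ (sub_nonneg.2 hy₁))
  have hlinear := mul_nonneg (sub_nonneg.2 hc₁) hy₀
  unfold barrier
  linarith

theorem le_barrier_of_top (hr : r ≠ 0) (hy : y l - p l = r) (hc₃ : 0 ≤ c₃) :
    c₀ + (c₁ - c₂) ≤ barrier l p r c₀ c₁ c₂ c₃ y := by
  have hside := mul_nonneg hc₃ (sum_erase_div_sq_nonneg (l := l) (p := p) (y := y) (r := r))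
  rw [barrier, hy, div_self hr]
  linarith

theorem le_barrier_of_side {j : ι} (hj : j ≠ l) {k : ℝ} (hk : 0 ≤ k) (hr : 0 < r)
    (hyj : k * r ≤ |y j - p j|) (hy₀ : 0 ≤ (y l - p l) / r) (hy₁ : (y l - p l) / r ≤ 1)
    (hc₂ : 0 ≤ c₂) (hc₁ : c₂ ≤ c₁) (hc₃ : 0 ≤ c₃) :
    c₀ + c₃ * k ^ 2 ≤ barrier l p r c₀ c₁ c₂ c₃ y := by
  have hle : k ^ 2 ≤ ((y j - p j) / r) ^ 2 := by
    rw [← sq_abs (_ / r), abs_div, abs_of_pos hr]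
    exact pow_le_pow_left₀ hk ((le_div_iff₀ hr).2 hyj) 2
  have hsum : ((y j - p j) / r) ^ 2 ≤ ∑ i ∈ Finset.univ.erase l, ((y i - p i) / r) ^ 2 :=
    Finset.single_le_sum (f := fun i => ((y i - p i) / r) ^ 2) (fun _ _ => sq_nonneg _)
      (Finset.mem_erase.2 ⟨hj, Finset.mem_univ j⟩)
  have hside := mul_le_mul_of_nonneg_left (hle.trans hsum) hc₃
  have hconcave := mul_nonneg hc₂ (mul_nonneg hy₀ (sub_nonneg.2 hy₁))
  have hlinear := mul_nonneg (sub_nonneg.2 hc₁) hy₀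
  unfold barrier
  linarith

theorem barrier_of_axis (hy : ∀ j ≠ l, y j = p j) :
    barrier l p r c₀ c₁ c₂ c₃ y =
      c₀ + (c₁ * ((y l - p l) / r) - c₂ * ((y l - p l) / r) ^ 2) := by
  rw [barrier, Finset.sum_eq_zero fun j hj => by simp [hy j (Finset.ne_of_mem_erase hj)], mul_zero,
    add_zero]

end Barrier

section Axis

variable {l : ι} {F : Set (ι → ℝ)} {w : (ι → ℝ) → ℝ} {p x : ι → ℝ} {r S E : ℝ}

theorem abs_le_barrier (hF : IsClosed F) (hw : ContinuousOn w (F ∩ closedBall p r)) (hr : 0 < r)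
    (hS₀ : 0 ≤ S) (hE₀ : 0 ≤ E) (hp : ∀ y ∈ F, p l ≤ y l) (hS : ∀ y ∈ F ∩ closedBall p r, |w y| ≤ S)
    (hE : ∀ y ∈ F, ‖y - p‖ < r →
      |w y| ≤ E ∨ (F ∈ 𝓝 y ∧ ∃ L, HasLaplacian w y L ∧ r ^ 2 * |L| ≤ E)) :
    ∀ y ∈ F ∩ closedBall p r,
      |w y| ≤ barrier l p r E ((card ι + 1) * S + 2 * E) (card ι * S + E) S y := by
  have : Nonempty ι := ⟨l⟩
  have hc₂ : 0 ≤ card ι * S + E := by positivity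
  have hc₁ : card ι * S + E ≤ (card ι + 1) * S + 2 * E := by linarith
  refine abs_le_of_barrier ((isCompact_closedBall p r).inter_left hF) hw
    continuous_barrier.continuousOn ?_
  intro y hyK
  have ⟨hyF, hy⟩ := hyK
  rw [mem_closedBall_iff_norm] at hy
  have hy₀ : 0 ≤ (y l - p l) / r := div_nonneg (sub_nonneg.2 (hp y hyF)) hr.le
  have hyl : y l - p l ≤ r := (le_abs_self _).trans ((norm_le_pi_norm (y - p) l).trans hy)
  have hy₁ : (y l - p l) / r ≤ 1 := (div_le_one hr).2 hyl
  rcases hy.lt_or_eq with hlt | heq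
  · refine (hE y hyF hlt).imp (fun hle => hle.trans (le_barrier hy₀ hy₁ hc₂ hc₁ hS₀)) ?_
    rintro ⟨hyn, L, hL, hLE⟩
    have hball : closedBall p r ∈ 𝓝 y := closedBall_mem_nhds_of_mem (mem_ball_iff_norm.2 hlt)
    refine ⟨inter_mem hyn hball, L, _, hL, hasLaplacian_barrier, ?_⟩
    rw [← neg_div, le_div_iff₀' (pow_pos hr 2)]
    linarith
  · obtain ⟨j, hj⟩ : ∃ j, r ≤ |y j - p j| := by
      by_contra! hlt
      exact heq.not_lt ((pi_norm_lt_iff hr).2 hlt)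
    refine Or.inl ((hS y hyK).trans ?_)
    rcases eq_or_ne j l with rfl | hjl
    · rw [abs_of_nonneg (sub_nonneg.2 (hp y hyF))] at hj
      exact le_trans (by linarith) (le_barrier_of_top hr.ne' (hyl.antisymm hj) hS₀)
    · have := le_barrier_of_side (c₀ := E) hjl zero_le_one hr (by rwa [one_mul]) hy₀ hy₁ hc₂ hc₁ hS₀
      linarith

theorem abs_le_on_axis (hF : IsClosed F) (hw : ContinuousOn w (F ∩ closedBall p r)) (hr : 0 < r)
    (hE₀ : 0 ≤ E) (hp : ∀ y ∈ F, p l ≤ y l) (hS : ∀ y ∈ F ∩ closedBall p r, |w y| ≤ S)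
    (hE : ∀ y ∈ F, ‖y - p‖ < r →
      |w y| ≤ E ∨ (F ∈ 𝓝 y ∧ ∃ L, HasLaplacian w y L ∧ r ^ 2 * |L| ≤ E))
    (hx : x ∈ F ∩ closedBall p r) (hxp : ∀ j ≠ l, x j = p j) :
    |w x| ≤ (card ι + 1) * S * ((x l - p l) / r) + 2 * E := by
  have hS₀ : 0 ≤ S := (abs_nonneg _).trans (hS x hx)
  have hle := abs_le_barrier hF hw hr hS₀ hE₀ hp hS hE x hx
  rw [barrier_of_axis hxp] at hle
  have h₁ := mul_nonneg hS₀ (sq_nonneg ((x l - p l) / r))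
  have h₂ := mul_nonneg hE₀ (sq_nonneg (1 - (x l - p l) / r))
  have h₃ := mul_nonneg (Nat.cast_nonneg (α := ℝ) (card ι)) h₁
  linarith

end Axis

/-! ### Almost harmonic functions in a half box -/

/-- `w` is bounded by `S` on the half box of radius `R`, by `E` on its flat face, and its Laplacian
inside is at most `E / R ^ 2`. -/
structure AlmostHarmonic (l : ι) (R S E : ℝ) (w : (ι → ℝ) → ℝ) : Prop where
  continuousOn : ContinuousOn w (halfBox l R)
  bound : ∀ x ∈ halfBox l R, |w x| ≤ S
  bound_face : ∀ x ∈ halfBox l R, x l = 0 → |w x| ≤ E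
  laplacian : ∀ x, ‖x‖ < R → 0 < x l → ∃ L, HasLaplacian w x L ∧ R ^ 2 * |L| ≤ E

namespace AlmostHarmonic

variable {l : ι} {R S E : ℝ} {w : (ι → ℝ) → ℝ}

theorem bound_nonneg (h : AlmostHarmonic l R S E w) (hR : 0 ≤ R) : 0 ≤ S :=
  (abs_nonneg _).trans (h.bound 0 ⟨by simpa using hR, le_rfl⟩)

theorem error_nonneg (h : AlmostHarmonic l R S E w) (hR : 0 ≤ R) : 0 ≤ E :=
  (abs_nonneg _).trans (h.bound_face 0 ⟨by simpa using hR, le_rfl⟩ rfl)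

theorem abs_le_of_height (h : AlmostHarmonic l R S E w) (hR : 0 < R) {x : ι → ℝ}
    (hx : x ∈ halfBox l (R / 2)) :
    |w x| ≤ 2 * (card ι + 1) * S * (x l / R) + 2 * E := by
  set p := update x l 0
  have hpl : p l = 0 := update_self ..
  have hp : ‖p‖ ≤ R / 2 := norm_update_le hx.1 l (by simpa using (half_pos hR).le)
  have hxp : ‖x - p‖ ≤ R / 2 := (pi_norm_le_iff_of_nonneg (half_pos hR).le).2 fun j => by
    rcases eq_or_ne j l with rfl | hj
    · simpa [hpl] using abs_apply_le_of_norm_le hx.1 j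
    · simpa [p, hj] using (half_pos hR).le
  have hsub : {y | 0 ≤ y l} ∩ closedBall p (R / 2) ⊆ halfBox l R := fun y hy =>
    add_halves R ▸ mem_halfBox_of_mem_closedBall hp hy.2 hy.1
  have := abs_le_on_axis (l := l) (isClosed_setOf_le_apply l 0) (h.continuousOn.mono hsub)
    (half_pos hR) (h.error_nonneg hR.le) (fun y hy => hpl.trans_le hy)
    (fun y hy => h.bound y (hsub hy)) (fun y hy hyp => ?_) ⟨hx.2, mem_closedBall_iff_norm.2 hxp⟩
    (fun j hj => by simp [p, hj])
  · rw [hpl, sub_zero, div_div_eq_mul_div, mul_div_right_comm] at this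
    linarith
  · rcases (show 0 ≤ y l from hy).eq_or_lt with hyl | hyl
    · exact Or.inl (h.bound_face y (hsub ⟨hy, mem_closedBall_iff_norm.2 hyp.le⟩) hyl.symm)
    · have hyR : ‖y‖ < R := by linarith [norm_le_norm_add_norm_sub' y p]
      obtain ⟨L, hL, hLE⟩ := h.laplacian y hyR hyl
      refine Or.inr ⟨setOf_le_apply_mem_nhds hyl, L, hL, le_trans ?_ hLE⟩
      gcongr
      linarith

theorem reflect_singleton_apply_of_ne {ι : Type*} [DecidableEq ι] {i j : ι} (hj : j ≠ i)
    (p z : ι → ℝ) : reflect {i} p z j = z j :=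
  reflect_apply_of_notMem (by simpa using hj)

theorem reflect_mem_halfBox {i : ι} (hi : l ≠ i) {p z : ι → ℝ} (hp : ‖p‖ ≤ R / 2)
    (hz : z ∈ closedBall p (R / 2)) (hzl : 0 ≤ z l) : reflect {i} p z ∈ halfBox l R := by
  rw [mem_closedBall_iff_norm, ← norm_reflect_sub (J := {i}), ← mem_closedBall_iff_norm] at hz
  exact add_halves R ▸ mem_halfBox_of_mem_closedBall hp hz
    (hzl.trans_eq (reflect_singleton_apply_of_ne hi p z).symm)

theorem sub_reflect_small_or_hasLaplacian (h : AlmostHarmonic l R S E w) (hR : 0 ≤ R) {i : ι}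
    (hi : l ≠ i) {p z : ι → ℝ} (hp : ‖p‖ ≤ R / 2) (hz : ‖z - p‖ < R / 2) (hzl : 0 ≤ z l)
    (hzi : p i ≤ z i) :
    |w z - w (reflect {i} p z)| ≤ 2 * E ∨ (0 < z l ∧ p i < z i ∧
      ∃ L, HasLaplacian (fun y => w y - w (reflect {i} p y)) z L ∧ (R / 2) ^ 2 * |L| ≤ 2 * E) := by
  have hball : z ∈ closedBall p (R / 2) := mem_closedBall_iff_norm.2 hz.le
  have hTl : reflect {i} p z l = z l := reflect_singleton_apply_of_ne hi p z
  have hTz : ‖reflect {i} p z - p‖ < R / 2 := norm_reflect_sub.trans_lt hz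
  rcases hzl.eq_or_lt with hzl₀ | hzl₀
  · have h₁ := h.bound_face z (add_halves R ▸ mem_halfBox_of_mem_closedBall hp hball hzl) hzl₀.symm
    have h₂ := h.bound_face _ (reflect_mem_halfBox hi hp hball hzl) (hTl.trans hzl₀.symm)
    exact Or.inl ((abs_sub _ _).trans (by linarith))
  rcases hzi.eq_or_lt with hzi₀ | hzi₀
  · have hfix : reflect {i} p z = z := funext fun j => by
      rcases eq_or_ne j i with rfl | hj
      · rw [reflect_apply_of_mem (Finset.mem_singleton_self j)]; linarith
      · exact reflect_singleton_apply_of_ne hj p z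
    exact Or.inl (by simpa [hfix] using h.error_nonneg hR)
  · obtain ⟨L, hL, hLE⟩ := h.laplacian z (by linarith [norm_le_norm_add_norm_sub' z p]) hzl₀
    obtain ⟨L', hL', hLE'⟩ := h.laplacian (reflect {i} p z)
      (by linarith [norm_le_norm_add_norm_sub' (reflect {i} p z) p]) (hzl₀.trans_eq hTl.symm)
    refine Or.inr ⟨hzl₀, hzi₀, L - L', hL.sub hL'.comp_reflect, ?_⟩
    calc (R / 2) ^ 2 * |L - L'| ≤ R ^ 2 * (|L| + |L'|) := by
          gcongr
          · linarith
          · exact abs_sub L L'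
      _ ≤ 2 * E := by linarith

theorem abs_sub_reflect_le (h : AlmostHarmonic l R S E w) (hR : 0 < R) {i : ι} (hi : l ≠ i)
    {p x : ι → ℝ} (hp : ‖p‖ ≤ R / 2) (hxp : ∀ j ≠ i, x j = p j) (hpx : p i ≤ x i)
    (hx : x ∈ closedBall p (R / 2)) (hxl : 0 ≤ x l) :
    |w x - w (reflect {i} p x)| ≤ 4 * (card ι + 1) * S * ((x i - p i) / R) + 4 * E := by
  have hE₀ := h.error_nonneg hR.le
  let F : Set (ι → ℝ) := {z | 0 ≤ z l} ∩ {z | p i ≤ z i}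
  have hsub : F ∩ closedBall p (R / 2) ⊆ halfBox l R := fun z hz =>
    add_halves R ▸ mem_halfBox_of_mem_closedBall hp hz.2 hz.1.1
  have hreflect : MapsTo (reflect {i} p) (F ∩ closedBall p (R / 2)) (halfBox l R) := fun z hz =>
    reflect_mem_halfBox hi hp hz.2 hz.1.1
  have := abs_le_on_axis (l := i) (F := F) (w := fun z => w z - w (reflect {i} p z)) (S := 2 * S)
    (E := 2 * E) ((isClosed_setOf_le_apply l 0).inter (isClosed_setOf_le_apply i (p i)))
    ((h.continuousOn.mono hsub).sub
      (h.continuousOn.comp continuous_reflect.continuousOn hreflect))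
    (half_pos hR) (by positivity) (fun z hz => hz.2)
    (fun z hz => (abs_sub _ _).trans
      (by linarith [h.bound z (hsub hz), h.bound _ (hreflect hz)]))
    (fun z hz hzp => (h.sub_reflect_small_or_hasLaplacian hR.le hi hp hzp hz.1 hz.2).imp_right
      fun ⟨hzl, hzi, hL⟩ =>
        ⟨inter_mem (setOf_le_apply_mem_nhds hzl) (setOf_le_apply_mem_nhds hzi), hL⟩)
    ⟨⟨hxl, hpx⟩, hx⟩ hxp
  rw [div_div_eq_mul_div, mul_div_right_comm] at this
  linarith

theorem abs_update_sub_le_of_le (h : AlmostHarmonic l R S E w) (hR : 0 < R) {x : ι → ℝ} {i : ι}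
    (hi : l ≠ i) {a : ℝ} (ha : x i ≤ a) (hx : x ∈ halfBox l (R / 2))
    (hxa : update x i a ∈ halfBox l (R / 2)) :
    |w (update x i a) - w x| ≤ 2 * (card ι + 1) * S * ((a - x i) / R) + 4 * E := by
  have hxi := abs_le.1 (abs_apply_le_of_norm_le hx.1 i)
  have hai := abs_le.1 (abs_apply_le_of_norm_le hxa.1 i)
  rw [update_self] at hai
  let p := update x i ((x i + a) / 2)
  have hpi : p i = (x i + a) / 2 := update_self ..
  have hball : update x i a ∈ closedBall p (R / 2) := by
    refine mem_closedBall_iff_norm.2 ((pi_norm_le_iff_of_nonneg (half_pos hR).le).2 fun j => ?_)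
    rcases eq_or_ne j i with rfl | hj
    · rw [Pi.sub_apply, update_self, hpi, Real.norm_eq_abs, abs_le]
      constructor <;> linarith
    · simpa [p, hj] using (half_pos hR).le
  have hreflect : reflect {i} p (update x i a) = x := funext fun j => by
    rcases eq_or_ne j i with rfl | hj
    · rw [reflect_apply_of_mem (Finset.mem_singleton_self j), hpi, update_self]; ring
    · rw [reflect_singleton_apply_of_ne hj, update_of_ne hj]
  have := h.abs_sub_reflect_le hR hi (p := p)
    (norm_update_le hx.1 i (abs_le.2 ⟨by linarith, by linarith⟩))
    (fun j hj => by simp [p, hj]) (by rw [hpi, update_self]; linarith) hball hxa.2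
  rw [hreflect, update_self, hpi, show a - (x i + a) / 2 = (a - x i) / 2 by ring,
    div_right_comm _ 2] at this
  linarith

theorem abs_update_sub_le (h : AlmostHarmonic l R S E w) (hR : 0 < R) {x : ι → ℝ} {i : ι}
    (hi : l ≠ i) {a : ℝ} (hx : x ∈ halfBox l (R / 2)) (hxa : update x i a ∈ halfBox l (R / 2)) :
    |w (update x i a) - w x| ≤ 2 * (card ι + 1) * S * (|a - x i| / R) + 4 * E := by
  rcases le_total (x i) a with hle | hle
  · rw [abs_of_nonneg (sub_nonneg.2 hle)]
    exact h.abs_update_sub_le_of_le hR hi hle hx hxa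
  · rw [abs_of_nonpos (sub_nonpos.2 hle), neg_sub, abs_sub_comm]
    have := h.abs_update_sub_le_of_le hR hi (x := update x i a) (a := x i) (by simpa using hle) hxa
      (by simpa using hx)
    simpa using this

theorem abs_add_sub_le (h : AlmostHarmonic l R S E w) (hR : 0 < R) {x τ : ι → ℝ} (hτl : τ l = 0)
    (hx : x ∈ halfBox l (R / 2)) (hxτ : x + τ ∈ halfBox l (R / 2)) :
    |w (x + τ) - w x| ≤ card ι * (2 * (card ι + 1) * S * (‖τ‖ / R) + 4 * E) := by
  have hS₀ := h.bound_nonneg hR.le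
  have hE₀ := h.error_nonneg hR.le
  have hmem : ∀ J : Finset ι, J.piecewise (x + τ) x ∈ halfBox l (R / 2) := fun J => by
    refine ⟨(pi_norm_le_iff_of_nonneg (half_pos hR).le).2 fun j => ?_, ?_⟩
    · exact J.piecewise_cases (x + τ) x (‖·‖ ≤ R / 2) (abs_apply_le_of_norm_le hxτ.1 j)
        (abs_apply_le_of_norm_le hx.1 j)
    · exact J.piecewise_cases (x + τ) x (0 ≤ ·) hxτ.2 hx.2
  have partial_sum : ∀ J : Finset ι, |w (J.piecewise (x + τ) x) - w x| ≤
      J.card * (2 * (card ι + 1) * S * (‖τ‖ / R) + 4 * E) := by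
    intro J
    induction J using Finset.induction_on with
    | empty => simp
    | insert i J hiJ ih =>
      have hstep : |w ((insert i J).piecewise (x + τ) x) - w (J.piecewise (x + τ) x)| ≤
          2 * (card ι + 1) * S * (‖τ‖ / R) + 4 * E := by
        rw [Finset.piecewise_insert]
        rcases eq_or_ne l i with rfl | hi
        · have hsame : update (J.piecewise (x + τ) x) l ((x + τ) l) = J.piecewise (x + τ) x := by
            rw [update_eq_self_iff, Finset.piecewise_eq_of_notMem _ _ _ hiJ]
            simp [hτl]
          rw [hsame, sub_self, abs_zero]
          positivity
        · refine (h.abs_update_sub_le hR hi (hmem J)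
            (by rw [← Finset.piecewise_insert]; exact hmem _)).trans ?_
          rw [Finset.piecewise_eq_of_notMem _ _ _ hiJ, Pi.add_apply, add_sub_cancel_left]
          gcongr
          exact norm_le_pi_norm τ i
      rw [Finset.card_insert_of_notMem hiJ]
      push_cast
      have := abs_sub_le (w ((insert i J).piecewise (x + τ) x)) (w (J.piecewise (x + τ) x)) (w x)
      linarith
  simpa using partial_sum Finset.univ

theorem translate_sub (h : AlmostHarmonic l R S E w) (hR : 0 < R) {τ : ι → ℝ} (hτl : τ l = 0)
    (hτ : ‖τ‖ ≤ R / 4) :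
    AlmostHarmonic l (R / 4) (card ι * (2 * (card ι + 1) * S * (‖τ‖ / R) + 4 * E)) (2 * E)
      (fun x => w (x + τ) - w x) where
  continuousOn := by
    refine ContinuousOn.sub (h.continuousOn.comp (by fun_prop) fun x hx => ?_)
      (h.continuousOn.mono (halfBox_subset (by linarith)))
    exact halfBox_subset (by linarith) (add_mem_halfBox hx hτ hτl)
  bound x hx := h.abs_add_sub_le hR hτl (halfBox_subset (by linarith) hx)
    (halfBox_subset (by linarith) (add_mem_halfBox hx hτ hτl))
  bound_face x hx hxl := by
    have h₁ := h.bound_face x (halfBox_subset (by linarith) hx) hxl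
    have h₂ := h.bound_face (x + τ) (halfBox_subset (by linarith) (add_mem_halfBox hx hτ hτl))
      (by simp [hτl, hxl])
    exact (abs_sub _ _).trans (by linarith)
  laplacian x hx hxl := by
    obtain ⟨L, hL, hLE⟩ := h.laplacian x (by linarith) hxl
    obtain ⟨L', hL', hLE'⟩ := h.laplacian (x + τ) (by linarith [norm_add_le x τ])
      (by simpa [hτl] using hxl)
    refine ⟨L' - L, (hL'.comp_add_right τ).sub hL, ?_⟩
    calc (R / 4) ^ 2 * |L' - L| ≤ R ^ 2 * (|L'| + |L|) := by
          gcongr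
          · linarith
          · exact abs_sub L' L
      _ ≤ 2 * E := by linarith

end AlmostHarmonic

theorem exists_abs_second_difference_le (ι : Type*) [Fintype ι] [DecidableEq ι] :
    ∃ C : ℝ, 1 ≤ C ∧ ∀ {l : ι} {R S E d : ℝ} {w : (ι → ℝ) → ℝ}, AlmostHarmonic l R S E w →
      0 < d → 32 * d ≤ R → ∀ {x τ τ' : ι → ℝ}, x ∈ halfBox l d → τ l = 0 → τ' l = 0 →
      ‖τ‖ ≤ d → ‖τ'‖ ≤ d →
      |w (x + τ' + τ) - w (x + τ') - (w (x + τ) - w x)| ≤ C * (S * (d / R) ^ 3 + E) := by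
  set N : ℝ := (card ι : ℝ)
  refine ⟨512 * N ^ 2 * (N + 1) ^ 3 + (N ^ 2 * (N + 1) ^ 2 + 8 * N * (N + 1)) + 8, ?_, ?_⟩
  · have : 0 ≤ 512 * N ^ 2 * (N + 1) ^ 3 + (N ^ 2 * (N + 1) ^ 2 + 8 * N * (N + 1)) := by positivity
    linarith
  intro l R S E d w h hd hdR x τ τ' hx hτl hτl' hτ hτ'
  have hR : 0 < R := by linarith
  have hS₀ := h.bound_nonneg hR.le
  have hE₀ := h.error_nonneg hR.le
  have h₁ := h.translate_sub hR hτl (by linarith)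
  have h₂ := h₁.translate_sub (by positivity) hτl' (by linarith)
  have h₃ := h₂.abs_le_of_height (by positivity) (halfBox_subset (by linarith) hx)
  have hxd : x l / (R / 4 / 4) ≤ 16 * (d / R) := by
    rw [show x l / (R / 4 / 4) = 16 * (x l / R) by field_simp; norm_num]
    gcongr
    exact (le_abs_self _).trans (abs_apply_le_of_norm_le hx.1 l)
  have hτd : ‖τ'‖ / (R / 4) ≤ 4 * (d / R) := by
    rw [show ‖τ'‖ / (R / 4) = 4 * (‖τ'‖ / R) by field_simp]
    gcongr
  have hs : d / R ≤ 1 / 32 := by rw [div_le_div_iff₀ hR (by norm_num)]; linarith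
  have hxl : 0 ≤ x l := hx.2
  calc _ ≤ 2 * (N + 1) * (N * (2 * (N + 1) * (N * (2 * (N + 1) * S * (d / R) + 4 * E)) *
          (4 * (d / R)) + 4 * (2 * E))) * (16 * (d / R)) + 2 * (2 * (2 * E)) := by
        refine h₃.trans ?_
        gcongr
    _ = 512 * N ^ 2 * (N + 1) ^ 3 * (S * (d / R) ^ 3) +
          (N ^ 2 * (N + 1) ^ 2 * (32 * (d / R)) ^ 2 + 8 * N * (N + 1) * (32 * (d / R)) + 8) * E :=
        by ring
    _ ≤ 512 * N ^ 2 * (N + 1) ^ 3 * (S * (d / R) ^ 3) +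
          (N ^ 2 * (N + 1) ^ 2 * 1 ^ 2 + 8 * N * (N + 1) * 1 + 8) * E := by
        gcongr <;> linarith
    _ ≤ _ := by
        have h₁ : 0 ≤ 512 * N ^ 2 * (N + 1) ^ 3 * E := by positivity
        have h₂ : 0 ≤ (N ^ 2 * (N + 1) ^ 2 + 8 * N * (N + 1) + 8) * (S * (d / R) ^ 3) := by
          positivity
        linarith

/-! ### Functions with small second differences -/

theorem le_of_second_difference_ge {f : ℝ → ℝ} {a b κ : ℝ} (hf : ContinuousOn f (Icc a b))
    (ha : f a = 0) (hb : f b = 0)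
    (h : ∀ x t, x - t ∈ Icc a b → x + t ∈ Icc a b → -κ ≤ f (x + t) + f (x - t) - 2 * f x) :
    ∀ x ∈ Icc a b, f x ≤ κ := by
  intro x hx
  obtain ⟨z, ⟨haz, hzb⟩, hmax⟩ := isCompact_Icc.exists_isMaxOn ⟨x, hx⟩ hf
  refine (hmax hx).trans ?_
  rcases le_total (z - a) (b - z) with hle | hle
  · have hreflect : z + (z - a) ∈ Icc a b := ⟨by linarith, by linarith⟩
    have hdiff := h z (z - a) (by rw [sub_sub_cancel]; exact ⟨le_rfl, haz.trans hzb⟩) hreflect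
    have hle : f (z + (z - a)) ≤ f z := hmax hreflect
    rw [sub_sub_cancel, ha] at hdiff
    linarith
  · have hreflect : z - (b - z) ∈ Icc a b := ⟨by linarith, by linarith⟩
    have hdiff := h z (b - z) hreflect (by rw [add_sub_cancel]; exact ⟨haz.trans hzb, le_rfl⟩)
    have hle : f (z - (b - z)) ≤ f z := hmax hreflect
    rw [add_sub_cancel, hb] at hdiff
    linarith

theorem abs_sub_slope_mul_le {f : ℝ → ℝ} {ρ κ : ℝ} (hρ : 0 < ρ)
    (hf : ContinuousOn f (Icc (-ρ) ρ))
    (h : ∀ x t, x - t ∈ Icc (-ρ) ρ → x + t ∈ Icc (-ρ) ρ → |f (x + t) + f (x - t) - 2 * f x| ≤ κ)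
    {x : ℝ} (hx : x ∈ Icc (-ρ) ρ) :
    |f x - f 0 - (f ρ - f (-ρ)) / (2 * ρ) * x| ≤ 2 * κ := by
  set g : ℝ → ℝ := fun x => f x - ((f ρ + f (-ρ)) / 2 + (f ρ - f (-ρ)) / (2 * ρ) * x)
  have hg : ContinuousOn g (Icc (-ρ) ρ) := hf.sub (by fun_prop)
  have hgρ : g ρ = 0 := by simp only [g]; field_simp; ring
  have hgρ' : g (-ρ) = 0 := by simp only [g]; field_simp; ring
  have hdiff : ∀ x t, g (x + t) + g (x - t) - 2 * g x = f (x + t) + f (x - t) - 2 * f x :=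
    fun x t => by simp only [g]; ring
  have upper := le_of_second_difference_ge (κ := κ) hg hgρ' hgρ fun x t h₁ h₂ => by
    rw [hdiff]; exact (abs_le.1 (h x t h₁ h₂)).1
  have lower := le_of_second_difference_ge (f := fun x => -g x) (κ := κ) hg.neg (by simp [hgρ'])
    (by simp [hgρ]) fun x t h₁ h₂ => by
      linarith [hdiff x t, (abs_le.1 (h x t h₁ h₂)).2]
  have h0 : (0 : ℝ) ∈ Icc (-ρ) ρ := ⟨by linarith, hρ.le⟩
  have hsub : f x - f 0 - (f ρ - f (-ρ)) / (2 * ρ) * x = g x - g 0 := by simp only [g]; ring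
  rw [hsub, abs_le]
  constructor <;> linarith [upper x hx, upper 0 h0, lower x hx, lower 0 h0]

theorem norm_single_le {i : ι} {s ρ : ℝ} (hs : |s| ≤ ρ) : ‖(Pi.single i s : ι → ℝ)‖ ≤ ρ := by
  rwa [Pi.norm_single, Real.norm_eq_abs]

theorem norm_piecewise_zero_le (J : Finset ι) (x : ι → ℝ) : ‖J.piecewise x 0‖ ≤ ‖x‖ :=
  (pi_norm_le_iff_of_nonneg (norm_nonneg x)).2 fun j =>
    J.piecewise_cases x 0 (‖·‖ ≤ ‖x‖) (norm_le_pi_norm x j) (by simp)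

section MixedDifference

variable {f : (ι → ℝ) → ℝ} {ρ κ : ℝ}

theorem abs_sub_slope_mul_le_of_mixed_difference (hρ : 0 < ρ)
    (hf : ContinuousOn f (closedBall 0 ρ))
    (h : ∀ x τ τ', ‖x‖ ≤ ρ → ‖τ‖ ≤ ρ → ‖τ'‖ ≤ ρ →
      |f (x + τ' + τ) - f (x + τ') - (f (x + τ) - f x)| ≤ κ) (i : ι) {s : ℝ} (hs : |s| ≤ ρ) :
    |f (Pi.single i s) - f 0 - (f (Pi.single i ρ) - f (Pi.single i (-ρ))) / (2 * ρ) * s| ≤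
      2 * κ := by
  have hline : ContinuousOn (fun t : ℝ => f (Pi.single i t)) (Icc (-ρ) ρ) :=
    hf.comp (continuous_single (A := fun _ => ℝ) i).continuousOn fun t ht =>
      mem_closedBall_zero_iff.2 (norm_single_le (abs_le.2 ht))
  have := abs_sub_slope_mul_le (κ := κ) hρ hline (fun x t hsub hadd => ?_) (abs_le.1 hs)
  · rwa [Pi.single_zero] at this
  have ht : ‖(Pi.single i t : ι → ℝ)‖ ≤ ρ :=
    norm_single_le (abs_le.2 ⟨by linarith [hsub.2, hadd.1], by linarith [hsub.1, hadd.2]⟩)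
  have hdiff := h (Pi.single i (x - t)) _ _ (norm_single_le (abs_le.2 hsub)) ht ht
  rw [← Pi.single_add, ← Pi.single_add, sub_add_cancel] at hdiff
  rwa [show ∀ a b c : ℝ, a + c - 2 * b = a - b - (b - c) from fun a b c => by ring]

theorem abs_sub_affine_le (hρ : 0 < ρ) (hf : ContinuousOn f (closedBall 0 ρ))
    (h : ∀ x τ τ', ‖x‖ ≤ ρ → ‖τ‖ ≤ ρ → ‖τ'‖ ≤ ρ →
      |f (x + τ' + τ) - f (x + τ') - (f (x + τ) - f x)| ≤ κ) {x : ι → ℝ} (hx : ‖x‖ ≤ ρ) :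
    |f x - f 0 - ∑ i, (f (Pi.single i ρ) - f (Pi.single i (-ρ))) / (2 * ρ) * x i| ≤
      3 * card ι * κ := by
  set b : ι → ℝ := fun i => (f (Pi.single i ρ) - f (Pi.single i (-ρ))) / (2 * ρ)
  have partial_sum : ∀ J : Finset ι, |f (J.piecewise x 0) - f 0 - ∑ i ∈ J, b i * x i| ≤
      3 * J.card * κ := by
    intro J
    induction J using Finset.induction_on with
    | empty => simp
    | insert i J hiJ ih =>
      have hxi : |x i| ≤ ρ := abs_apply_le_of_norm_le hx i
      have hmixed := h 0 (Pi.single i (x i)) (J.piecewise x 0) (by simpa using hρ.le)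
        (norm_single_le hxi) ((norm_piecewise_zero_le J x).trans hx)
      have hslope := abs_sub_slope_mul_le_of_mixed_difference hρ hf h i hxi
      have hinsert : (insert i J).piecewise x 0 = J.piecewise x 0 + Pi.single i (x i) := by
        rw [Finset.piecewise_insert]
        funext j
        rcases eq_or_ne j i with rfl | hj
        · simp [Finset.piecewise_eq_of_notMem _ _ _ hiJ]
        · simp [hj]
      rw [zero_add, zero_add, ← hinsert] at hmixed
      rw [Finset.sum_insert hiJ, Finset.card_insert_of_notMem hiJ]
      push_cast
      rw [abs_le] at *
      constructor <;> linarith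
  simpa using partial_sum Finset.univ

end MixedDifference

/-! ### Almost tangentially constant functions in a slab -/

/-- The part of the cube with centre `p` and radius `(card ι) ρ` in which the coordinate `l` lies
in `[0, ρ]`. -/
def slab (l : ι) (p : ι → ℝ) (ρ : ℝ) : Set (ι → ℝ) :=
  closedBall p (card ι * ρ) ∩ {y | y l ∈ Icc 0 ρ}

section Slab

variable {l : ι} {p : ι → ℝ} {ρ S E κ : ℝ} {v : (ι → ℝ) → ℝ}

theorem isCompact_slab {ι : Type*} [Fintype ι] {l : ι} {p : ι → ℝ} {ρ : ℝ} :
    IsCompact (slab l p ρ) :=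
  (isCompact_closedBall _ _).inter_right (isClosed_Icc.preimage (continuous_apply l))

theorem update_mem_slab (hp : p l = 0) {t : ℝ} (ht : t ∈ Icc 0 ρ) : update p l t ∈ slab l p ρ := by
  have hcard : (1 : ℝ) ≤ card ι := Nat.one_le_cast.2 (Fintype.card_pos_iff.2 ⟨l⟩)
  have hρ : 0 ≤ ρ := ht.1.trans ht.2
  refine ⟨mem_closedBall_iff_norm.2 ?_, by simpa using ht⟩
  refine (pi_norm_le_iff_of_nonneg (by positivity)).2 fun j => ?_
  rcases eq_or_ne j l with rfl | hj
  · rw [Pi.sub_apply, update_self, hp, sub_zero, Real.norm_of_nonneg ht.1]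
    exact ht.2.trans (le_mul_of_one_le_left hρ hcard)
  · simpa [hj] using mul_nonneg (zero_le_one.trans hcard) hρ

theorem slab_mem_nhds_or {ι : Type*} [Fintype ι] {l : ι} {p y : ι → ℝ} {ρ : ℝ} (hp : p l = 0)
    (hy : y l ∈ Icc 0 ρ) :
    y l = 0 ∨ y l = ρ ∨ (∃ j ≠ l, card ι * ρ ≤ |y j - p j|) ∨
      (y l ∈ Ioo 0 ρ ∧ slab l p ρ ∈ 𝓝 y) := by
  obtain ⟨hy₀, hyρ⟩ := hy
  rcases hy₀.eq_or_lt with h₀ | h₀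
  · exact Or.inl h₀.symm
  rcases hyρ.eq_or_lt with hρ | hρ
  · exact Or.inr (Or.inl hρ)
  by_cases hside : ∃ j ≠ l, card ι * ρ ≤ |y j - p j|
  · exact Or.inr (Or.inr (Or.inl hside))
  push Not at hside
  have hcard : (1 : ℝ) ≤ card ι := Nat.one_le_cast.2 (Fintype.card_pos_iff.2 ⟨l⟩)
  have hnorm : ‖y - p‖ < card ι * ρ := (pi_norm_lt_iff (by nlinarith)).2 fun j => by
    rcases eq_or_ne j l with rfl | hj
    · rw [Pi.sub_apply, hp, sub_zero, Real.norm_of_nonneg h₀.le]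
      nlinarith
    · exact hside j hj
  exact Or.inr (Or.inr (Or.inr ⟨⟨h₀, hρ⟩,
    inter_mem (closedBall_mem_nhds_of_mem (mem_ball_iff_norm.2 hnorm))
      ((continuous_apply l).continuousAt.eventually (Icc_mem_nhds h₀ hρ))⟩))

theorem abs_le_slab_barrier (hp : p l = 0) (hρ : 0 < ρ) (hE₀ : 0 ≤ E)
    (hv : ContinuousOn v (slab l p ρ)) (hS : ∀ y ∈ slab l p ρ, |v y| ≤ S)
    (hE : ∀ y ∈ slab l p ρ, y l = 0 ∨ y l = ρ → |v y| ≤ E)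
    (hL : ∀ y ∈ slab l p ρ, y l ∈ Ioo 0 ρ → ∃ L, HasLaplacian v y L ∧ ρ ^ 2 * |L| ≤ E) :
    ∀ y ∈ slab l p ρ,
      |v y| ≤ barrier l p ρ E (S / card ι + E) (S / card ι + E) (S / card ι ^ 2) y := by
  have : Nonempty ι := ⟨l⟩
  have hS₀ : 0 ≤ S := (abs_nonneg _).trans (hS _ (update_mem_slab hp ⟨le_rfl, hρ.le⟩))
  have hcard : (0 : ℝ) < card ι := Nat.cast_pos.2 Fintype.card_pos
  refine abs_le_of_barrier isCompact_slab hv continuous_barrier.continuousOn fun y hy => ?_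
  have hy₀ : 0 ≤ (y l - p l) / ρ := by rw [hp, sub_zero]; exact div_nonneg hy.2.1 hρ.le
  have hy₁ : (y l - p l) / ρ ≤ 1 := by rw [hp, sub_zero]; exact (div_le_one hρ).2 hy.2.2
  have hc₂ : 0 ≤ S / card ι + E := by positivity
  have hc₃ : 0 ≤ S / (card ι : ℝ) ^ 2 := by positivity
  have hface := fun hyl => (hE y hy hyl).trans (le_barrier hy₀ hy₁ hc₂ le_rfl hc₃)
  rcases slab_mem_nhds_or hp hy.2 with h | h | ⟨j, hj, hyj⟩ | ⟨hyl, hnhds⟩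
  · exact Or.inl (hface (Or.inl h))
  · exact Or.inl (hface (Or.inr h))
  · have := le_barrier_of_side (c₀ := E) hj hcard.le hρ hyj hy₀ hy₁ hc₂ le_rfl hc₃
    rw [div_mul_cancel₀ _ (pow_pos hcard 2).ne'] at this
    exact Or.inl ((hS y hy).trans (by linarith))
  · obtain ⟨L, hL, hLE⟩ := hL y hy hyl
    refine Or.inr ⟨hnhds, L, _, hL, hasLaplacian_barrier, ?_⟩
    rw [← neg_div, le_div_iff₀' (pow_pos hρ 2)]
    have : S / (card ι : ℝ) ^ 2 * card ι = S / card ι := by field_simp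
    linarith

theorem abs_update_le_of_tangentially_constant (hp : p l = 0) (hρ : 0 < ρ)
    (hv : ContinuousOn v (slab l p ρ))
    (hκ : ∀ y ∈ slab l p ρ, |v y - v (update p l (y l))| ≤ κ) (hκ₀ : |v p| ≤ κ)
    (hκρ : |v (update p l ρ)| ≤ κ)
    (hL : ∀ y ∈ slab l p ρ, y l ∈ Ioo 0 ρ → ∃ L, HasLaplacian v y L ∧ ρ ^ 2 * |L| ≤ κ) {t : ℝ}
    (ht : t ∈ Icc 0 ρ) : |v (update p l t)| ≤ 4 * κ := by
  have haxis : ContinuousOn (fun t => |v (update p l t)|) (Icc 0 ρ) :=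
    (hv.comp (by fun_prop) fun t ht => update_mem_slab hp ht).abs
  obtain ⟨s, hs, hmax⟩ := isCompact_Icc.exists_isMaxOn ⟨t, ht⟩ haxis
  refine (hmax ht).trans ?_
  set m := |v (update p l s)|
  have hκ_nonneg : 0 ≤ κ := (abs_nonneg _).trans hκ₀
  have hcard : (1 : ℝ) ≤ card ι := Nat.one_le_cast.2 (Fintype.card_pos_iff.2 ⟨l⟩)
  have hsum : ∀ y ∈ slab l p ρ, |v y| ≤ κ + |v (update p l (y l))| := fun y hy => by
    linarith [hκ y hy, abs_sub_abs_le_abs_sub (v y) (v (update p l (y l)))]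
  have hle := abs_le_slab_barrier (S := m + κ) (E := 2 * κ) hp hρ (by positivity) hv
    (fun y hy => (hsum y hy).trans (by linarith [show |v (update p l (y l))| ≤ m from hmax hy.2]))
    (fun y hy hyl => (hsum y hy).trans ?_)
    (fun y hy hyl => (hL y hy hyl).imp fun L hL => ⟨hL.1, by linarith⟩) _ (update_mem_slab hp hs)
  · rw [barrier_of_axis fun j hj => update_of_ne hj _ _, update_self, hp, sub_zero,
      ← mul_sub] at hle
    -- the barrier at the maximum point gives `m ≤ 2 κ + (m + 3 κ) / 4`
    have hquarter : s / ρ - (s / ρ) ^ 2 ≤ 1 / 4 := by nlinarith [sq_nonneg (s / ρ - 1 / 2)]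
    have hcoef : (m + κ) / card ι ≤ m + κ := div_le_self (by positivity) hcard
    have := mul_le_mul_of_nonneg_left hquarter
      (show 0 ≤ (m + κ) / card ι + 2 * κ by positivity)
    linarith
  · rcases hyl with hyl | hyl
    · rw [hyl, ← hp, update_eq_self]; linarith
    · rw [hyl]; linarith

end Slab

/-! ### Quadratic approximation of almost harmonic functions -/

/-- The function `(A + β · x) x_l`. Those with `β l = 0` are the harmonic polynomials of degree at
most two that vanish on the hyperplane `x l = 0`. -/
def affineMulCoord {ι : Type*} [Fintype ι] (l : ι) (A : ℝ) (β x : ι → ℝ) : ℝ :=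
  (A + ∑ i, β i * x i) * x l

theorem continuous_affineMulCoord {ι : Type*} [Fintype ι] (l : ι) (A : ℝ) (β : ι → ℝ) :
    Continuous (affineMulCoord l A β) := by
  unfold affineMulCoord
  fun_prop

theorem affineMulCoord_of_apply_eq_zero {ι : Type*} [Fintype ι] {l : ι} {A : ℝ} {β x : ι → ℝ}
    (hx : x l = 0) : affineMulCoord l A β x = 0 := by
  rw [affineMulCoord, hx, mul_zero]

theorem hasLaplacian_affineMulCoord (l : ι) (A : ℝ) (β x : ι → ℝ) :
    HasLaplacian (affineMulCoord l A β) x (2 * β l) := by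
  convert HasLaplacian.of_secondDiff_eq (x := x) (Pi.single l (2 * β l)) fun i t => ?_ using 1
  · rw [Finset.sum_pi_single', if_pos (Finset.mem_univ l)]
  · rcases eq_or_ne i l with rfl | hi
    · simp only [affineMulCoord, Pi.add_apply, Pi.sub_apply, mul_add, mul_sub,
        Finset.sum_add_distrib, Finset.sum_sub_distrib, Pi.single_apply, mul_ite, mul_zero,
        Finset.sum_ite_eq', Finset.mem_univ, if_true]
      ring
    · simp only [affineMulCoord, Pi.add_apply, Pi.sub_apply, mul_add, mul_sub,
        Finset.sum_add_distrib, Finset.sum_sub_distrib, Pi.single_apply, mul_ite, mul_zero,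
        Finset.sum_ite_eq', Finset.mem_univ, if_true, hi.symm, if_false, hi]
      ring

theorem affineMulCoord_mixed_difference {ι : Type*} [Fintype ι] (l : ι) (A : ℝ) (β x : ι → ℝ)
    {τ τ' : ι → ℝ} (hτ : τ l = 0) (hτ' : τ' l = 0) :
    affineMulCoord l A β (x + τ' + τ) - affineMulCoord l A β (x + τ') -
      (affineMulCoord l A β (x + τ) - affineMulCoord l A β x) = 0 := by
  simp only [affineMulCoord, Pi.add_apply, mul_add, Finset.sum_add_distrib, hτ, hτ']
  ring

section TangentialSymmetrization

variable {l : ι} {p y : ι → ℝ} {ρ κ : ℝ} {φ : (ι → ℝ) → ℝ}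

theorem reflect_erase_update (p : ι → ℝ) (l : ι) (t : ℝ) :
    reflect (Finset.univ.erase l) p (update p l t) = update p l t := by
  funext j
  rcases eq_or_ne j l with rfl | hj
  · exact reflect_apply_of_notMem (Finset.notMem_erase _ _)
  · rw [reflect_apply_of_mem (Finset.mem_erase.2 ⟨hj, Finset.mem_univ j⟩), update_of_ne hj]
    ring

theorem reflect_erase_eq_update_sub (l : ι) (p y : ι → ℝ) :
    reflect (Finset.univ.erase l) p y = update p l (y l) - (y - update p l (y l)) := by
  funext j
  rcases eq_or_ne j l with rfl | hj
  · rw [reflect_apply_of_notMem (Finset.notMem_erase _ _)]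
    simp
  · rw [reflect_apply_of_mem (Finset.mem_erase.2 ⟨hj, Finset.mem_univ j⟩)]
    simp only [Pi.sub_apply, update_of_ne hj]
    ring

theorem reflect_erase_mem_slab (hy : y ∈ slab l p ρ) :
    reflect (Finset.univ.erase l) p y ∈ slab l p ρ := by
  refine ⟨?_, ?_⟩
  · rw [mem_closedBall_iff_norm, norm_reflect_sub]
    exact mem_closedBall_iff_norm.1 hy.1
  · rw [mem_ofPred_eq, reflect_apply_of_notMem (Finset.notMem_erase _ _)]
    exact hy.2

theorem slab_subset_halfBox {ι : Type*} [Fintype ι] {l : ι} {p : ι → ℝ} {ρ : ℝ} (hp : ‖p‖ ≤ ρ) :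
    slab l p ρ ⊆ halfBox l ((card ι + 1) * ρ) := fun y hy => by
  have := mem_halfBox_of_mem_closedBall hp hy.1 hy.2.1
  rwa [add_comm, ← add_one_mul] at this

theorem norm_sub_update_le (p y : ι → ℝ) (l : ι) : ‖y - update p l (y l)‖ ≤ ‖y - p‖ :=
  (pi_norm_le_iff_of_nonneg (norm_nonneg _)).2 fun j => by
    rcases eq_or_ne j l with rfl | hj
    · simp
    · simpa [hj] using norm_le_pi_norm (y - p) j

/-- The average of `φ` and its reflection in the line through `p` in the direction `l`. -/
def axialAverage (l : ι) (p : ι → ℝ) (φ : (ι → ℝ) → ℝ) (y : ι → ℝ) : ℝ :=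
  2⁻¹ * (φ y + φ (reflect (Finset.univ.erase l) p y))

theorem axialAverage_update (l : ι) (p : ι → ℝ) (φ : (ι → ℝ) → ℝ) (t : ℝ) :
    axialAverage l p φ (update p l t) = φ (update p l t) := by
  rw [axialAverage, reflect_erase_update]
  ring

theorem abs_axialAverage_sub_le (hρ : 0 ≤ ρ) (hp : ‖p‖ ≤ ρ)
    (h : ∀ x τ τ', x ∈ halfBox l ((card ι + 1) * ρ) → τ l = 0 → τ' l = 0 →
      ‖τ‖ ≤ (card ι + 1) * ρ → ‖τ'‖ ≤ (card ι + 1) * ρ →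
      |φ (x + τ' + τ) - φ (x + τ') - (φ (x + τ) - φ x)| ≤ κ) (hy : y ∈ slab l p ρ) :
    |axialAverage l p φ y - axialAverage l p φ (update p l (y l))| ≤ κ := by
  have hτl : (y - update p l (y l)) l = 0 := by simp
  have hτ : ‖y - update p l (y l)‖ ≤ (card ι + 1) * ρ :=
    (norm_sub_update_le p y l).trans ((mem_closedBall_iff_norm.1 hy.1).trans (by linarith))
  have hreflect := reflect_erase_eq_update_sub l p y
  have hmem := slab_subset_halfBox hp (reflect_erase_mem_slab hy)
  have hdiff := h _ _ _ hmem hτl hτl hτ hτ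
  rw [hreflect, sub_add_cancel, add_sub_cancel] at hdiff
  rw [axialAverage_update, axialAverage, hreflect]
  rw [abs_le] at hdiff ⊢
  constructor <;> linarith

theorem hasLaplacian_axialAverage (hp : ‖p‖ ≤ ρ)
    (hL : ∀ x, ‖x‖ ≤ (card ι + 1) * ρ → x l ∈ Ioo 0 ρ → ∃ L, HasLaplacian φ x L ∧ ρ ^ 2 * |L| ≤ κ)
    (hy : y ∈ slab l p ρ) (hyl : y l ∈ Ioo 0 ρ) :
    ∃ L, HasLaplacian (axialAverage l p φ) y L ∧ ρ ^ 2 * |L| ≤ κ := by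
  obtain ⟨L, hL₁, hLκ⟩ := hL y (slab_subset_halfBox hp hy).1 hyl
  obtain ⟨L', hL', hLκ'⟩ := hL _ (slab_subset_halfBox hp (reflect_erase_mem_slab hy)).1
    (by rwa [reflect_apply_of_notMem (Finset.notMem_erase _ _)])
  refine ⟨_, (hL₁.add hL'.comp_reflect).const_mul 2⁻¹, ?_⟩
  have hadd := mul_le_mul_of_nonneg_left (abs_add_le L L') (sq_nonneg ρ)
  rw [abs_mul, abs_of_pos (by norm_num)]
  linarith

theorem abs_le_of_mixed_difference (hρ : 0 < ρ) (hφ : ContinuousOn φ (halfBox l ((card ι + 1) * ρ)))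
    (h : ∀ x τ τ', x ∈ halfBox l ((card ι + 1) * ρ) → τ l = 0 → τ' l = 0 →
      ‖τ‖ ≤ (card ι + 1) * ρ → ‖τ'‖ ≤ (card ι + 1) * ρ →
      |φ (x + τ' + τ) - φ (x + τ') - (φ (x + τ) - φ x)| ≤ κ)
    (hface : ∀ x ∈ halfBox l ρ, x l = 0 ∨ x l = ρ → |φ x| ≤ κ)
    (hL : ∀ x, ‖x‖ ≤ (card ι + 1) * ρ → x l ∈ Ioo 0 ρ → ∃ L, HasLaplacian φ x L ∧ ρ ^ 2 * |L| ≤ κ)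
    {x : ι → ℝ} (hx : x ∈ halfBox l ρ) : |φ x| ≤ 4 * κ := by
  set p := update x l 0
  have hpl : p l = 0 := update_self ..
  have hp : ‖p‖ ≤ ρ := norm_update_le hx.1 l (by simpa using hρ.le)
  have hx_eq : update p l (x l) = x := by simp [p]
  have hsub := slab_subset_halfBox (l := l) hp
  have hcont : ContinuousOn (axialAverage l p φ) (slab l p ρ) :=
    continuousOn_const.mul ((hφ.mono hsub).add
      (hφ.comp continuous_reflect.continuousOn fun y hy => hsub (reflect_erase_mem_slab hy)))
  have hbound : ∀ t ∈ Icc 0 ρ, t = 0 ∨ t = ρ → |axialAverage l p φ (update p l t)| ≤ κ :=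
    fun t ht htρ => by
      rw [axialAverage_update]
      exact hface _ ⟨norm_update_le hp l (by rw [abs_of_nonneg ht.1]; exact ht.2),
        by simpa using ht.1⟩ (by simpa using htρ)
  have := abs_update_le_of_tangentially_constant hpl hρ hcont
    (fun y hy => abs_axialAverage_sub_le hρ.le hp h hy)
    (by simpa [← hpl] using hbound 0 ⟨le_rfl, hρ.le⟩ (Or.inl rfl))
    (hbound ρ ⟨hρ.le, le_rfl⟩ (Or.inr rfl))
    (fun y hy hyl => hasLaplacian_axialAverage hp hL hy hyl)
    ⟨hx.2, (le_abs_self _).trans (abs_apply_le_of_norm_le hx.1 l)⟩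
  rwa [axialAverage_update, hx_eq] at this

end TangentialSymmetrization

section TangentialSlope

variable {l : ι} {S ρ κ : ℝ} {w : (ι → ℝ) → ℝ}

/-- The slopes of `w` along the coordinate directions, sampled at height `ρ`. The slope in the
direction `l` is zero. -/
def tangentialSlope (l : ι) (ρ : ℝ) (w : (ι → ℝ) → ℝ) (i : ι) : ℝ :=
  (w (update (Pi.single i ρ) l ρ) - w (update (Pi.single i (-ρ)) l ρ)) / (2 * ρ)

theorem tangentialSlope_self {ι : Type*} [DecidableEq ι] (l : ι) (ρ : ℝ) (w : (ι → ℝ) → ℝ) :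
    tangentialSlope l ρ w l = 0 := by
  simp [tangentialSlope, Pi.single]

theorem update_mem_halfBox {x : ι → ℝ} (hρ : 0 ≤ ρ) (hx : ‖x‖ ≤ ρ) :
    update x l ρ ∈ halfBox l ρ :=
  ⟨norm_update_le hx l (abs_of_nonneg hρ).le, by simpa using hρ⟩

theorem abs_tangentialSlope_mul_le (hρ : 0 < ρ) (hS : ∀ x ∈ halfBox l ρ, |w x| ≤ S) (i : ι) :
    |tangentialSlope l ρ w i| * ρ ≤ S := by
  have h : ∀ s, |s| ≤ ρ → |w (update (Pi.single i s) l ρ)| ≤ S := fun s hs =>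
    hS _ (update_mem_halfBox hρ.le (norm_single_le hs))
  have h₁ := h ρ (abs_of_pos hρ).le
  have h₂ := h (-ρ) (by rw [abs_neg, abs_of_pos hρ])
  have h₃ := abs_sub (w (update (Pi.single i ρ) l ρ)) (w (update (Pi.single i (-ρ)) l ρ))
  rw [tangentialSlope, abs_div, abs_of_pos (by positivity : 0 < 2 * ρ), div_mul_eq_mul_div,
    div_le_iff₀ (by positivity)]
  nlinarith

theorem abs_sub_tangentialSlope_le (hρ : 0 < ρ) (hw : ContinuousOn w (halfBox l ρ))
    (h : ∀ x τ τ', x ∈ halfBox l ρ → τ l = 0 → τ' l = 0 → ‖τ‖ ≤ ρ → ‖τ'‖ ≤ ρ →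
      |w (x + τ' + τ) - w (x + τ') - (w (x + τ) - w x)| ≤ κ) {x : ι → ℝ} (hx : ‖x‖ ≤ ρ)
    (hxl : x l = ρ) :
    |w x - w (Pi.single l ρ) - ∑ i, tangentialSlope l ρ w i * x i| ≤ 3 * card ι * κ := by
  have hadd : ∀ x τ : ι → ℝ, update (x + τ) l ρ = update x l ρ + update τ l 0 := fun x τ => by
    rw [← update_add, add_zero]
  have hτ : ∀ τ : ι → ℝ, ‖τ‖ ≤ ρ → ‖update τ l 0‖ ≤ ρ := fun τ hτ =>
    norm_update_le hτ l (by simpa using hρ.le)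
  have := abs_sub_affine_le (f := fun τ => w (update τ l ρ)) hρ
    (hw.comp (by fun_prop) fun τ hτ => update_mem_halfBox hρ.le (mem_closedBall_zero_iff.1 hτ))
    (fun y τ τ' hy hyτ hyτ' => by
      simpa only [hadd] using h _ _ _ (update_mem_halfBox hρ.le hy) (update_self ..)
        (update_self ..) (hτ τ hyτ) (hτ τ' hyτ')) hx
  rwa [← hxl, update_eq_self, hxl] at this

end TangentialSlope

theorem affineMulCoord_of_apply_eq {ι : Type*} [Fintype ι] {l : ι} {ρ c : ℝ} {b x : ι → ℝ}
    (hρ : ρ ≠ 0) (hx : x l = ρ) :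
    affineMulCoord l (c / ρ) (fun i => b i / ρ) x = c + ∑ i, b i * x i := by
  rw [affineMulCoord, hx, add_mul, div_mul_cancel₀ _ hρ, Finset.sum_mul]
  exact congrArg (c + ·) (Finset.sum_congr rfl fun i _ => by field_simp)

theorem AlmostHarmonic.sub_affineMulCoord {l : ι} {R S E R' S' A : ℝ} {w : (ι → ℝ) → ℝ}
    {β : ι → ℝ} (h : AlmostHarmonic l R S E w) (hR' : 0 ≤ R') (hR : R' ≤ R) (hβ : β l = 0)
    (hS' : ∀ x ∈ halfBox l R', |w x - affineMulCoord l A β x| ≤ S') :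
    AlmostHarmonic l R' S' E (fun x => w x - affineMulCoord l A β x) where
  continuousOn := (h.continuousOn.mono (halfBox_subset hR)).sub
    (continuous_affineMulCoord l A β).continuousOn
  bound := hS'
  bound_face x hx hxl := by
    rw [affineMulCoord_of_apply_eq_zero hxl, sub_zero]
    exact h.bound_face x (halfBox_subset hR hx) hxl
  laplacian x hx hxl := by
    obtain ⟨L, hL, hLE⟩ := h.laplacian x (hx.trans_le hR) hxl
    refine ⟨L, by simpa [hβ] using hL.sub (hasLaplacian_affineMulCoord l A β x), le_trans ?_ hLE⟩
    gcongr

theorem AlmostHarmonic.abs_sub_interpolant_le {l : ι} {R S E ρ κ : ℝ} {w : (ι → ℝ) → ℝ}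
    (h : AlmostHarmonic l R S E w) (hρ : 0 < ρ) (hR : (card ι + 1) * ρ < R) (hEκ : E ≤ κ)
    (hmixed : ∀ x τ τ', x ∈ halfBox l ((card ι + 1) * ρ) → τ l = 0 → τ' l = 0 →
      ‖τ‖ ≤ (card ι + 1) * ρ → ‖τ'‖ ≤ (card ι + 1) * ρ →
      |w (x + τ' + τ) - w (x + τ') - (w (x + τ) - w x)| ≤ κ)
    {x : ι → ℝ} (hx : x ∈ halfBox l ρ) :
    |w x - affineMulCoord l (w (Pi.single l ρ) / ρ) (fun i => tangentialSlope l ρ w i / ρ) x| ≤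
      12 * card ι * κ := by
  set A := w (Pi.single l ρ) / ρ
  set β : ι → ℝ := fun i => tangentialSlope l ρ w i / ρ
  have hβ : β l = 0 := by simp [β, tangentialSlope_self]
  have hcard : (1 : ℝ) ≤ card ι := Nat.one_le_cast.2 (Fintype.card_pos_iff.2 ⟨l⟩)
  have hρd : ρ ≤ (card ι + 1) * ρ := le_mul_of_one_le_left hρ.le (by linarith)
  have hκ₀ : 0 ≤ κ := (h.error_nonneg (by linarith)).trans hEκ
  have hκ : κ ≤ 3 * card ι * κ := le_mul_of_one_le_left hκ₀ (by linarith)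
  have hface : ∀ y ∈ halfBox l ρ, y l = 0 ∨ y l = ρ →
      |w y - affineMulCoord l A β y| ≤ 3 * card ι * κ := by
    rintro y hy (hyl | hyl)
    · rw [affineMulCoord_of_apply_eq_zero hyl, sub_zero]
      exact (h.bound_face y (halfBox_subset (by linarith) hy) hyl).trans (hEκ.trans hκ)
    · rw [affineMulCoord_of_apply_eq hρ.ne' hyl, ← sub_sub]
      exact abs_sub_tangentialSlope_le hρ (h.continuousOn.mono (halfBox_subset (by linarith)))
        (fun x τ τ' hx hτl hτl' hτ hτ' => hmixed x τ τ' (halfBox_subset hρd hx) hτl hτl'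
          (hτ.trans hρd) (hτ'.trans hρd)) hy.1 hyl
  refine (abs_le_of_mixed_difference (κ := 3 * card ι * κ)
    (φ := fun x => w x - affineMulCoord l A β x) hρ
    ((h.continuousOn.mono (halfBox_subset hR.le)).sub
      (continuous_affineMulCoord l A β).continuousOn)
    (fun x τ τ' hx hτl hτl' hτ hτ' => ?_) hface (fun x hx hxl => ?_) hx).trans_eq (by ring)
  · refine (congrArg abs ?_).trans_le ((hmixed x τ τ' hx hτl hτl' hτ hτ').trans hκ)
    linarith [affineMulCoord_mixed_difference l A β x hτl hτl']
  · obtain ⟨L, hL, hLE⟩ := h.laplacian x (by linarith) hxl.1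
    refine ⟨L, by simpa [hβ] using hL.sub (hasLaplacian_affineMulCoord l A β x), ?_⟩
    refine le_trans ?_ (hLE.trans (hEκ.trans hκ))
    gcongr
    linarith

theorem exists_abs_sub_affineMulCoord_le (ι : Type*) [Fintype ι] [DecidableEq ι] :
    ∃ C : ℝ, 1 ≤ C ∧ ∀ {l : ι} {R S E ρ : ℝ} {w : (ι → ℝ) → ℝ}, AlmostHarmonic l R S E w →
      0 < ρ → 32 * ((card ι + 1) * ρ) ≤ R → ∃ (A : ℝ) (β : ι → ℝ), β l = 0 ∧
        (∀ i, |β i| * ρ ^ 2 ≤ S) ∧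
        ∀ x ∈ halfBox l ρ, |w x - affineMulCoord l A β x| ≤ C * (S * (ρ / R) ^ 3 + E) := by
  obtain ⟨C, hC, hdiff⟩ := exists_abs_second_difference_le ι
  refine ⟨12 * (card ι + 1) ^ 4 * C, ?_, fun {l R S E ρ w} h hρ hR => ?_⟩
  · exact one_le_mul_of_one_le_of_one_le
      (one_le_mul_of_one_le_of_one_le (by norm_num) (one_le_pow₀ (by simp))) hC
  have hd : 0 < (card ι + 1) * ρ := by positivity
  have hR₀ : 0 < R := by linarith
  have hE₀ := h.error_nonneg hR₀.le
  have hS₀ := h.bound_nonneg hR₀.le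
  have hρR : ρ ≤ R := by linarith [mul_nonneg (Nat.cast_nonneg (α := ℝ) (card ι)) hρ.le]
  have hS : ∀ x ∈ halfBox l ρ, |w x| ≤ S := fun x hx => h.bound x (halfBox_subset hρR hx)
  refine ⟨w (Pi.single l ρ) / ρ, fun i => tangentialSlope l ρ w i / ρ,
    by simp [tangentialSlope_self], fun i => ?_, fun x hx => ?_⟩
  · rw [abs_div, abs_of_pos hρ, sq, ← mul_assoc, div_mul_cancel₀ _ hρ.ne']
    exact abs_tangentialSlope_mul_le hρ hS i
  have hE : E ≤ C * (S * ((card ι + 1) * ρ / R) ^ 3 + E) := by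
    have : 0 ≤ S * ((card ι + 1) * ρ / R) ^ 3 := by positivity
    exact (le_add_of_nonneg_left this).trans (le_mul_of_one_le_left (by positivity) hC)
  calc _ ≤ 12 * card ι * (C * (S * ((card ι + 1) * ρ / R) ^ 3 + E)) :=
        h.abs_sub_interpolant_le hρ (by linarith) hE
          (fun x τ τ' hx hτl hτl' hτ hτ' => hdiff h hd hR hx hτl hτl' hτ hτ') hx
    _ ≤ 12 * (card ι + 1) * (C * ((card ι + 1) ^ 3 * (S * (ρ / R) ^ 3 + E))) := by
        have : E ≤ (card ι + 1) ^ 3 * E := le_mul_of_one_le_left hE₀ (one_le_pow₀ (by simp))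
        rw [show S * ((card ι + 1) * ρ / R) ^ 3 = (card ι + 1) ^ 3 * (S * (ρ / R) ^ 3) by ring,
          mul_add (_ ^ 3)]
        gcongr
        linarith
    _ = 12 * (card ι + 1) ^ 4 * C * (S * (ρ / R) ^ 3 + E) := by ring

theorem exists_abs_sub_affineMulCoord_le_of_height (ι : Type*) [Fintype ι] [DecidableEq ι] :
    ∃ C : ℝ, 1 ≤ C ∧ ∀ {l : ι} {R S E ρ : ℝ} {w : (ι → ℝ) → ℝ}, AlmostHarmonic l R S E w →
      0 < ρ → 64 * ((card ι + 1) * ρ) ≤ R → ∃ (A : ℝ) (β : ι → ℝ), β l = 0 ∧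
        (∀ i, |β i| * ρ ^ 2 ≤ S) ∧ ∀ x ∈ halfBox l ρ,
          |w x - affineMulCoord l A β x| ≤ C * (S * (ρ / R) ^ 3 * (x l / ρ) + E) := by
  obtain ⟨C, hC, happrox⟩ := exists_abs_sub_affineMulCoord_le ι
  refine ⟨8 * (card ι + 1) * C + 2, ?_, fun {l R S E ρ w} h hρ hR => ?_⟩
  · have : 0 ≤ 8 * (card ι + 1) * C := by positivity
    linarith
  have hR₀ : 0 < R := lt_of_lt_of_le (by positivity) hR
  have hE₀ := h.error_nonneg hR₀.le
  have hS₀ := h.bound_nonneg hR₀.le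
  have hρR : 2 * ρ ≤ R := by linarith [mul_nonneg (Nat.cast_nonneg (α := ℝ) (card ι)) hρ.le]
  obtain ⟨A, β, hβl, hβ, hq⟩ := happrox h (ρ := 2 * ρ) (by positivity) (by linarith)
  refine ⟨A, β, hβl, fun i => ?_, fun x hx => ?_⟩
  · linarith [hβ i, mul_nonneg (abs_nonneg (β i)) (sq_nonneg ρ)]
  have hle := (h.sub_affineMulCoord (by positivity) hρR hβl hq).abs_le_of_height (by positivity)
    (x := x) (halfBox_subset (by linarith) hx)
  have hx₀ : 0 ≤ x l / ρ := div_nonneg hx.2 hρ.le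
  have hx₁ : x l / ρ ≤ 1 :=
    (div_le_one hρ).2 ((le_abs_self _).trans (abs_apply_le_of_norm_le hx.1 l))
  calc _ ≤ 2 * (card ι + 1) * (C * (S * (2 * ρ / R) ^ 3 + E)) * (x l / (2 * ρ)) + 2 * E := hle
    _ = 8 * (card ι + 1) * C * (S * (ρ / R) ^ 3 * (x l / ρ)) +
          (card ι + 1) * C * (E * (x l / ρ)) + 2 * E := by
        field_simp
        ring
    _ ≤ 8 * (card ι + 1) * C * (S * (ρ / R) ^ 3 * (x l / ρ)) +
          8 * (card ι + 1) * C * (E * 1) + 2 * (S * (ρ / R) ^ 3 * (x l / ρ) + E) := by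
        have : 0 ≤ S * (ρ / R) ^ 3 * (x l / ρ) := by positivity
        gcongr <;> linarith
    _ = _ := by ring

/-! ### One step of the iteration in a nearly flat domain -/

/-- `w` is almost harmonic in the part of the open set `O` inside the cube of radius `r`, where the
boundary of `O` deviates by at most `h` from the hyperplane `x_l = 0`: this is the analogue of
`AlmostHarmonic` for a curved boundary. -/
structure AlmostHarmonicNearFlat (l : ι) (O : Set (ι → ℝ)) (r h S E : ℝ) (w : (ι → ℝ) → ℝ) :
    Prop where
  isOpen : IsOpen O
  mem_of_lt_apply : ∀ x ∈ closedBall 0 r, h < x l → x ∈ O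
  neg_le_apply : ∀ x ∈ closure O ∩ closedBall 0 r, -h ≤ x l
  continuousOn : ContinuousOn w (closure O ∩ closedBall 0 r)
  bound : ∀ x ∈ closure O ∩ closedBall 0 r, |w x| ≤ S
  bound_boundary : ∀ x ∈ closure O ∩ closedBall 0 r, x ∉ O → |w x| ≤ E
  laplacian : ∀ x ∈ O ∩ closedBall 0 r, ∃ L, HasLaplacian w x L ∧ r ^ 2 * |L| ≤ E

theorem single_mem_closedBall (l : ι) {t r : ℝ} (ht₀ : 0 ≤ t) (ht : t ≤ r) :
    Pi.single l t ∈ closedBall (0 : ι → ℝ) r :=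
  mem_closedBall_zero_iff.2 (norm_single_le ((abs_of_nonneg ht₀).trans_le ht))

theorem abs_sum_mul_le {ι : Type*} [Fintype ι] {b x : ι → ℝ} {B r : ℝ} (hb : ∀ i, |b i| ≤ B)
    (hx : ‖x‖ ≤ r) : |∑ i, b i * x i| ≤ card ι * (B * r) := by
  calc |∑ i, b i * x i| ≤ ∑ i, |b i * x i| := Finset.abs_sum_le_sum_abs _ _
    _ ≤ ∑ _i : ι, B * r := Finset.sum_le_sum fun i _ => by
        rw [abs_mul]
        exact mul_le_mul (hb i) (abs_apply_le_of_norm_le hx i) (abs_nonneg _)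
          ((abs_nonneg _).trans (hb i))
    _ = card ι * (B * r) := by simp [Finset.card_univ]

theorem abs_affineMulCoord_zero_le {ι : Type*} [Fintype ι] {l : ι} {b x : ι → ℝ} {B r t : ℝ}
    (hb : ∀ i, |b i| ≤ B) (hx : ‖x‖ ≤ r) (hxl : |x l| ≤ t) :
    |affineMulCoord l 0 b x| ≤ card ι * (B * r) * t := by
  rw [affineMulCoord, zero_add, abs_mul]
  exact mul_le_mul (abs_sum_mul_le hb hx) hxl (abs_nonneg _)
    ((abs_nonneg _).trans (abs_sum_mul_le hb hx))

theorem sum_mul_single_self {l : ι} {b : ι → ℝ} (hb : b l = 0) (t : ℝ) :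
    ∑ i, b i * (Pi.single l t : ι → ℝ) i = 0 := by
  simp [Pi.single_apply, hb]

theorem affineMulCoord_single_self {l : ι} {b : ι → ℝ} (hb : b l = 0) (A t : ℝ) :
    affineMulCoord l A b (Pi.single l t) = A * t := by
  simp [affineMulCoord, sum_mul_single_self hb]

theorem affineMulCoord_zero_add_single {l : ι} {b : ι → ℝ} (hb : b l = 0) (A t : ℝ) (y : ι → ℝ) :
    affineMulCoord l 0 b (y + Pi.single l t) =
      affineMulCoord l A b y - A * y l + (∑ i, b i * y i) * t := by
  simp only [affineMulCoord, Pi.add_apply, Pi.single_eq_same, mul_add, Finset.sum_add_distrib,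
    sum_mul_single_self hb]
  ring

theorem abs_mul_le_of_sample {a t ρ θ T C X E : ℝ} (ht : 0 < t) (hθ : 0 < θ) (hρ : 0 < ρ)
    (htρ : θ * ρ ≤ 2 * t) (hC : 0 ≤ C) (hT : 0 ≤ T) (hE : 0 ≤ E)
    (h : |a * t| ≤ T + C * (X * (t / ρ) + E)) :
    |a| * ρ ≤ 2 * (T / θ) + C * (X + 2 * (E / θ)) := by
  have hratio : ρ / t ≤ 2 / θ := by
    rw [div_le_div_iff₀ ht hθ]
    linarith
  calc |a| * ρ = |a * t| * (ρ / t) := by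
        rw [abs_mul, abs_of_pos ht]
        field_simp
    _ ≤ (T + C * (X * (t / ρ) + E)) * (ρ / t) := by gcongr
    _ = T * (ρ / t) + C * (X + E * (ρ / t)) := by field_simp
    _ ≤ T * (2 / θ) + C * (X + E * (2 / θ)) := by gcongr
    _ = _ := by ring

namespace AlmostHarmonicNearFlat

variable {l : ι} {O : Set (ι → ℝ)} {r h S E : ℝ} {w : (ι → ℝ) → ℝ}

theorem mem_of_apply_eq (H : AlmostHarmonicNearFlat l O r h S E w) (hhr : h < r) {x : ι → ℝ}
    (hx : x ∈ closedBall 0 r) (hxl : x l = r) : x ∈ O :=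
  H.mem_of_lt_apply x hx (hxl.symm ▸ hhr)

theorem single_mem (H : AlmostHarmonicNearFlat l O r h S E w) (hr : 0 ≤ r) (hhr : h < r) :
    Pi.single l r ∈ O ∩ closedBall 0 r :=
  ⟨H.mem_of_apply_eq hhr (single_mem_closedBall l hr le_rfl) (by simp),
    single_mem_closedBall l hr le_rfl⟩

theorem bound_nonneg (H : AlmostHarmonicNearFlat l O r h S E w) (hr : 0 ≤ r) (hhr : h < r) :
    0 ≤ S :=
  (abs_nonneg _).trans
    (H.bound _ (inter_subset_inter_left _ subset_closure (H.single_mem hr hhr)))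

theorem error_nonneg (H : AlmostHarmonicNearFlat l O r h S E w) (hr : 0 ≤ r) (hhr : h < r) :
    0 ≤ E := by
  obtain ⟨L, -, hL⟩ := H.laplacian _ (H.single_mem hr hhr)
  exact le_trans (by positivity) hL

theorem abs_le_of_apply_le (H : AlmostHarmonicNearFlat l O r h S E w) (hr : 0 < r) (hh : 0 ≤ h)
    (hhr : 12 * h ≤ r) {x : ι → ℝ} (hx : x ∈ closure O) (hxr : ‖x‖ ≤ r / 2) (hxl : x l ≤ 2 * h) :
    |w x| ≤ 12 * (card ι + 1) * (E + S * (h / r)) := by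
  have hS := H.bound_nonneg hr.le (by linarith)
  have hE := H.error_nonneg hr.le (by linarith)
  have hxF : x ∈ closure O ∩ closedBall 0 r := ⟨hx, mem_closedBall_zero_iff.2 (by linarith)⟩
  have hp : ‖update x l (-h)‖ ≤ r / 2 :=
    norm_update_le hxr l (by rw [abs_neg, abs_of_nonneg hh]; linarith)
  have hdist : x ∈ closedBall (update x l (-h)) (r / 4) := by
    rw [mem_closedBall, dist_pi_le_iff (by positivity)]
    intro j
    rcases eq_or_ne j l with rfl | hj
    · have := H.neg_le_apply x hxF
      rw [update_self, Real.dist_eq, abs_le]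
      constructor <;> linarith
    · rw [update_of_ne hj, dist_self]
      positivity
  have hle := abs_le_on_axis (isClosed_closure.inter isClosed_closedBall)
    (H.continuousOn.mono inter_subset_left) (by positivity : 0 < r / 4) hE
    (fun y hy => by simpa using H.neg_le_apply y hy) (fun y hy => H.bound y hy.1)
    (fun y hy hyp => ?_) ⟨hxF, hdist⟩ (fun j hj => (update_of_ne hj _ x).symm)
  · rw [update_self] at hle
    calc |w x| ≤ (card ι + 1) * S * ((x l - -h) / (r / 4)) + 2 * E := hle
      _ ≤ (card ι + 1) * S * (3 * h / (r / 4)) + 12 * (card ι + 1) * E := by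
          gcongr
          · linarith
          · linarith [Nat.cast_nonneg (α := ℝ) (card ι)]
      _ = 12 * (card ι + 1) * (E + S * (h / r)) := by
          field_simp
          ring
  · by_cases hyO : y ∈ O
    · obtain ⟨L, hL, hLE⟩ := H.laplacian y ⟨hyO, hy.2⟩
      have hyr : y ∈ ball (0 : ι → ℝ) r := by
        rw [mem_ball_zero_iff]
        linarith [norm_sub_norm_le y (update x l (-h))]
      refine .inr ⟨inter_mem (mem_of_superset (H.isOpen.mem_nhds hyO) subset_closure)
        (mem_of_superset (isOpen_ball.mem_nhds hyr) ball_subset_closedBall), L, hL, ?_⟩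
      refine le_trans ?_ hLE
      gcongr
      linarith
    · exact .inl (H.bound_boundary y hy hyO)

theorem translate (H : AlmostHarmonicNearFlat l O r h S E w) (hr : 0 < r) (hh : 0 < h)
    (hhr : 12 * h ≤ r) :
    AlmostHarmonic l (r / 4) S (12 * (card ι + 1) * (E + S * (h / r)))
      (fun y => w (y + Pi.single l (2 * h))) := by
  have hS := H.bound_nonneg hr.le (by linarith)
  have hE := H.error_nonneg hr.le (by linarith)
  have hnorm : ∀ y ∈ halfBox l (r / 4), ‖y + Pi.single l (2 * h)‖ ≤ r / 2 := fun y hy => by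
    have : ‖(Pi.single l (2 * h) : ι → ℝ)‖ ≤ r / 4 :=
      norm_single_le (by rw [abs_of_nonneg (by positivity)]; linarith)
    linarith [norm_add_le y (Pi.single l (2 * h)), hy.1]
  have hmem : ∀ y ∈ halfBox l (r / 4), y + Pi.single l (2 * h) ∈ O ∩ closedBall 0 r := by
    intro y hy
    have hball : y + Pi.single l (2 * h) ∈ closedBall 0 r :=
      mem_closedBall_zero_iff.2 (by linarith [hnorm y hy])
    refine ⟨H.mem_of_lt_apply _ hball ?_, hball⟩
    rw [Pi.add_apply, Pi.single_eq_same]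
    linarith [hy.2]
  have hmem' := fun y hy => inter_subset_inter_left _ subset_closure (hmem y hy)
  refine ⟨H.continuousOn.comp (by fun_prop) hmem', fun y hy => H.bound _ (hmem' y hy),
    fun y hy hyl => ?_, fun y hy hyl => ?_⟩
  · exact H.abs_le_of_apply_le hr hh.le hhr (hmem' y hy).1 (hnorm y hy) (by simp [hyl])
  · obtain ⟨L, hL, hLE⟩ := H.laplacian _ (hmem y ⟨hy.le, hyl.le⟩)
    refine ⟨L, hL.comp_add_right _, ?_⟩
    calc (r / 4) ^ 2 * |L| ≤ r ^ 2 * |L| := by gcongr; linarith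
      _ ≤ E + S * (h / r) := hLE.trans (le_add_of_nonneg_right (by positivity))
      _ ≤ _ := le_mul_of_one_le_left (by positivity)
        (by linarith [Nat.cast_nonneg (α := ℝ) (card ι)])

end AlmostHarmonicNearFlat

-- At height `θ ^ 2 * r` the error term `X` carries an additional factor `θ`.
theorem abs_mul_le_of_approx_translate {l : ι} {A C E T X r h θ : ℝ} {b : ι → ℝ}
    {w : (ι → ℝ) → ℝ} (hbl : b l = 0) (hr : 0 < r) (hh : 0 ≤ h) (hθ : 0 < θ) (hθ₁ : θ ≤ 1)
    (hhθ : 4 * h ≤ θ ^ 2 * r) (hC : 0 ≤ C) (hE : 0 ≤ E)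
    (hq : ∀ y ∈ halfBox l (θ * r), |w (y + Pi.single l (2 * h)) - affineMulCoord l A b y| ≤
      C * (X * (y l / (θ * r)) + E))
    (hT : |w (Pi.single l (θ ^ 2 * r))| ≤ T) :
    |A| * (θ * r) ≤ 2 * (T / θ) + C * (X + 2 * (E / θ)) := by
  have hθr : 0 < θ ^ 2 * r := by positivity
  have ht : 0 < θ ^ 2 * r - 2 * h := by linarith
  have htρ : θ ^ 2 * r - 2 * h ≤ θ * r := by nlinarith [mul_pos hθ hr]
  have hsample := hq (Pi.single l (θ ^ 2 * r - 2 * h))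
    ⟨norm_single_le ((abs_of_pos ht).trans_le htρ), by simpa using ht.le⟩
  rw [← Pi.single_add, sub_add_cancel, affineMulCoord_single_self hbl,
    Pi.single_eq_same] at hsample
  refine abs_mul_le_of_sample ht hθ (mul_pos hθ hr) (by linarith) hC
    ((abs_nonneg _).trans hT) hE ?_
  linarith [abs_sub_abs_le_abs_sub (A * (θ ^ 2 * r - 2 * h)) (w (Pi.single l (θ ^ 2 * r))),
    abs_sub_comm (A * (θ ^ 2 * r - 2 * h)) (w (Pi.single l (θ ^ 2 * r)))]

theorem exists_affineMulCoord_approx_translate (ι : Type*) [Fintype ι] [DecidableEq ι] :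
    ∃ C : ℝ, 1 ≤ C ∧ ∀ {l : ι} {O : Set (ι → ℝ)} {r h S E θ T : ℝ} {w : (ι → ℝ) → ℝ},
      AlmostHarmonicNearFlat l O r h S E w → 0 < r → 0 < h → 0 < θ →
      256 * (card ι + 1) * θ ≤ 1 → 4 * h ≤ θ ^ 2 * r → |w (Pi.single l (θ ^ 2 * r))| ≤ T →
      ∃ (A : ℝ) (b : ι → ℝ), b l = 0 ∧ (∀ i, |b i| * (θ * r) ^ 2 ≤ S) ∧
        |A| * (θ * r) ≤ C * (S * θ ^ 3 + T / θ + (E + S * (h / r)) / θ) ∧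
        ∀ y ∈ halfBox l (θ * r), |w (y + Pi.single l (2 * h)) - affineMulCoord l A b y| ≤
          C * (S * θ ^ 3 + (E + S * (h / r))) := by
  obtain ⟨C, hC, happrox⟩ := exists_abs_sub_affineMulCoord_le_of_height ι
  have hn := Nat.cast_nonneg (α := ℝ) (card ι)
  refine ⟨64 * (card ι + 1) * C, one_le_mul_of_one_le_of_one_le (by linarith) hC,
    fun {l O r h S E θ T w} H hr hh hθ hθ₁ hhθ hT => ?_⟩
  have hθ₂ : θ ≤ 1 / 256 := by linarith [mul_nonneg hn hθ.le]
  have hhr : 12 * h ≤ r := by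
    nlinarith [mul_le_mul_of_nonneg_right (pow_le_pow_left₀ hθ.le hθ₂ 2) hr.le]
  have hS := H.bound_nonneg hr.le (by linarith)
  have hE := H.error_nonneg hr.le (by linarith)
  have : 0 ≤ T := (abs_nonneg _).trans hT
  obtain ⟨A, b, hbl, hb, hq⟩ := happrox (H.translate hr hh hhr) (ρ := θ * r) (by positivity)
    (by linarith [mul_le_mul_of_nonneg_right hθ₁ hr.le])
  have hcube : S * (θ * r / (r / 4)) ^ 3 = 64 * (S * θ ^ 3) := by
    field_simp
    ring
  rw [hcube] at hq
  set D := E + S * (h / r)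
  have : 0 ≤ D := by positivity
  refine ⟨A, b, hbl, hb, ?_, fun y hy => (hq y hy).trans ?_⟩
  · calc |A| * (θ * r)
        ≤ 2 * (T / θ) + C * (64 * (S * θ ^ 3) + 2 * (12 * (card ι + 1) * D / θ)) :=
          abs_mul_le_of_approx_translate hbl hr hh.le hθ (by linarith) hhθ (by linarith)
            (by positivity) hq hT
      _ = 2 * (T / θ) + 64 * C * (S * θ ^ 3) + 24 * (card ι + 1) * C * (D / θ) := by ring
      _ ≤ 64 * (card ι + 1) * C * (T / θ) + 64 * (card ι + 1) * C * (S * θ ^ 3) +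
            64 * (card ι + 1) * C * (D / θ) := by
          have hnC : 0 ≤ card ι * C := by positivity
          gcongr ?_ * _ + ?_ * _ + ?_ * _ <;> linarith
      _ = _ := by ring
  · have hy₁ : y l / (θ * r) ≤ 1 := (div_le_one (by positivity)).2
      ((le_abs_self _).trans (abs_apply_le_of_norm_le hy.1 l))
    calc C * (64 * (S * θ ^ 3) * (y l / (θ * r)) + 12 * (card ι + 1) * D)
        ≤ C * (64 * (S * θ ^ 3) * (card ι + 1) + 64 * (card ι + 1) * D) := by
          gcongr <;> linarith
      _ = _ := by ring

theorem abs_sub_affineMulCoord_zero_le_of_translate {l : ι} {A B M N t ρ : ℝ} {b x : ι → ℝ}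
    {w : (ι → ℝ) → ℝ} (hbl : b l = 0) (hb : ∀ i, |b i| ≤ B) (hA : |A| * ρ ≤ M)
    (hq : ∀ y ∈ halfBox l ρ, |w (y + Pi.single l t) - affineMulCoord l A b y| ≤ N)
    (ht : 0 ≤ t) (hx : ‖x‖ ≤ ρ) (hxl : t ≤ x l) :
    |w x - affineMulCoord l 0 b x| ≤ N + M + card ι * (B * ρ) * t := by
  have hyl : |x l - t| ≤ ρ := by
    rw [abs_of_nonneg (by linarith)]
    linarith [le_abs_self (x l), abs_apply_le_of_norm_le hx l]
  have hy : x - Pi.single l t ∈ halfBox l ρ := by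
    refine ⟨?_, by simpa using hxl⟩
    rw [show x - Pi.single l t = update x l (x l - t) by
      ext j; rcases eq_or_ne j l with rfl | hj <;> simp [*]]
    exact norm_update_le hx l hyl
  have hwy := hq _ hy
  have hxy := affineMulCoord_zero_add_single hbl A t (x - Pi.single l t)
  rw [sub_add_cancel] at hwy hxy
  have hAy : |A * (x - Pi.single l t : ι → ℝ) l| ≤ M := by
    rw [abs_mul]
    exact (mul_le_mul_of_nonneg_left (abs_apply_le_of_norm_le hy.1 l) (abs_nonneg _)).trans hA
  have hbt : |(∑ i, b i * (x - Pi.single l t : ι → ℝ) i) * t| ≤ card ι * (B * ρ) * t := by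
    rw [abs_mul, abs_of_nonneg ht]
    exact mul_le_mul_of_nonneg_right (abs_sum_mul_le hb hy.1) ht
  rw [hxy, abs_le]
  rw [abs_le] at hwy hAy hbt
  constructor <;> linarith

theorem exists_harmonic_quadratic_approx (ι : Type*) [Fintype ι] [DecidableEq ι] :
    ∃ C : ℝ, 1 ≤ C ∧ ∀ {l : ι} {O : Set (ι → ℝ)} {r h S E θ T : ℝ} {w : (ι → ℝ) → ℝ},
      AlmostHarmonicNearFlat l O r h S E w → 0 < r → 0 < h → 0 < θ →
      256 * (card ι + 1) * θ ≤ 1 → 4 * h ≤ θ ^ 2 * r → |w (Pi.single l (θ ^ 2 * r))| ≤ T →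
      ∃ b : ι → ℝ, b l = 0 ∧ ∀ x ∈ closure O ∩ closedBall 0 (θ * r),
        |w x - affineMulCoord l 0 b x| ≤ C * (S * θ ^ 3 + T / θ + (E + S * (h / r)) / θ) := by
  obtain ⟨C, hC, happrox⟩ := exists_affineMulCoord_approx_translate ι
  have hn := Nat.cast_nonneg (α := ℝ) (card ι)
  refine ⟨2 * C + 14 * (card ι + 1), by linarith,
    fun {l O r h S E θ T w} H hr hh hθ hθ₁ hhθ hT => ?_⟩
  have hθ₂ : θ ≤ 1 / 256 := by linarith [mul_nonneg hn hθ.le]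
  have hhr : 12 * h ≤ r := by
    nlinarith [mul_le_mul_of_nonneg_right (pow_le_pow_left₀ hθ.le hθ₂ 2) hr.le]
  have hS := H.bound_nonneg hr.le (by linarith)
  have hE := H.error_nonneg hr.le (by linarith)
  have hT₀ : 0 ≤ T / θ := div_nonneg ((abs_nonneg _).trans hT) hθ.le
  obtain ⟨A, b, hbl, hb, hA, hq⟩ := happrox H hr hh hθ hθ₁ hhθ hT
  set X := S * θ ^ 3
  set D := E + S * (h / r)
  have hX : 0 ≤ X := by positivity
  have hD₀ : 0 ≤ D := by positivity
  have hDθ : D ≤ D / θ := le_div_self hD₀ hθ (by linarith)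
  have hbD : card ι * (S / (θ * r) ^ 2 * (θ * r)) * (2 * h) ≤ 2 * card ι * (D / θ) := by
    calc _ = 2 * card ι * (S * (h / r) / θ) := by field_simp
      _ ≤ _ := by gcongr; linarith
  have hb' : ∀ i, |b i| ≤ S / (θ * r) ^ 2 := fun i => (le_div_iff₀ (by positivity)).2 (hb i)
  refine ⟨b, hbl, fun x ⟨hxO, hx⟩ => ?_⟩
  rw [mem_closedBall_zero_iff] at hx
  have hxr : ‖x‖ ≤ r / 2 := hx.trans (by nlinarith)
  suffices h : |w x - affineMulCoord l 0 b x| ≤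
      C * (X + D) + C * (X + T / θ + D / θ) + 2 * card ι * (D / θ) + 12 * (card ι + 1) * D by
    calc _ ≤ _ := h
      _ ≤ C * (X + T / θ + D / θ) + C * (X + T / θ + D / θ) +
            2 * (card ι + 1) * (X + T / θ + D / θ) + 12 * (card ι + 1) * (X + T / θ + D / θ) := by
          gcongr <;> linarith
      _ = _ := by ring
  rcases le_total (x l) (2 * h) with hxl | hxl
  · have hxl' : |x l| ≤ 2 * h := abs_le.2
      ⟨by linarith [H.neg_le_apply x ⟨hxO, mem_closedBall_zero_iff.2 (by linarith)⟩], hxl⟩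
    have : 0 ≤ C * (X + D) := by positivity
    have : 0 ≤ C * (X + T / θ + D / θ) := by positivity
    linarith [abs_sub (w x) (affineMulCoord l 0 b x), abs_affineMulCoord_zero_le hb' hx hxl',
      H.abs_le_of_apply_le hr hh.le hhr hxO hxr hxl]
  · have := abs_sub_affineMulCoord_zero_le_of_translate hbl hb' hA hq (by positivity) hx hxl
    have : 0 ≤ 12 * (card ι + 1) * D := by positivity
    linarith

/-! ### Iteration over the scales -/

/-- A constant for which `exists_harmonic_quadratic_approx` holds; it depends on the dimension
only. -/
def stepConst (ι : Type*) [Fintype ι] [DecidableEq ι] : ℝ :=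
  (exists_harmonic_quadratic_approx ι).choose

theorem one_le_stepConst (ι : Type*) [Fintype ι] [DecidableEq ι] : 1 ≤ stepConst ι :=
  (exists_harmonic_quadratic_approx ι).choose_spec.1

theorem affineMulCoord_zero_add {ι : Type*} [Fintype ι] (l : ι) (b b' x : ι → ℝ) :
    affineMulCoord l 0 (b + b') x = affineMulCoord l 0 b x + affineMulCoord l 0 b' x := by
  simp only [affineMulCoord, Pi.add_apply, add_mul, Finset.sum_add_distrib]
  ring

theorem affineMulCoord_zero_single_add_single {l i : ι} (hi : i ≠ l) {b : ι → ℝ} (hb : b l = 0)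
    (r : ℝ) : affineMulCoord l 0 b (Pi.single i r + Pi.single l r) = b i * r ^ 2 := by
  rw [affineMulCoord_zero_add_single hb 0, affineMulCoord]
  simp only [Pi.single_apply, hi.symm, mul_ite, mul_zero, Finset.sum_ite_eq', Finset.mem_univ,
    if_true, if_false]
  ring

theorem abs_coeff_sub_mul_sq_le {ι : Type*} [Fintype ι] {l : ι} {F : Set (ι → ℝ)} {r η η' : ℝ}
    {b b' : ι → ℝ} {v : (ι → ℝ) → ℝ} (hr : 0 ≤ r)
    (hF : ∀ x ∈ closedBall 0 r, x l = r → x ∈ F)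
    (hbl : b l = 0) (hbl' : b' l = 0)
    (hb : ∀ x ∈ F ∩ closedBall 0 r, |v x - affineMulCoord l 0 b x| ≤ η)
    (hb' : ∀ x ∈ F ∩ closedBall 0 r, |v x - affineMulCoord l 0 b' x| ≤ η') (i : ι) :
    |b i - b' i| * r ^ 2 ≤ η + η' := by
  classical
  rcases eq_or_ne i l with rfl | hi
  · have hmem : Pi.single i r ∈ F ∩ closedBall 0 r :=
      ⟨hF _ (single_mem_closedBall i hr le_rfl) (by simp), single_mem_closedBall i hr le_rfl⟩
    simpa [hbl, hbl'] using
      add_nonneg ((abs_nonneg _).trans (hb _ hmem)) ((abs_nonneg _).trans (hb' _ hmem))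
  have hball : Pi.single i r + Pi.single l r ∈ closedBall (0 : ι → ℝ) r := by
    rw [mem_closedBall_zero_iff, show (Pi.single i r + Pi.single l r : ι → ℝ) =
      update (Pi.single i r) l r by
        ext j; rcases eq_or_ne j l with rfl | hj <;> simp [*, hi.symm]]
    exact norm_update_le (norm_single_le (abs_of_nonneg hr).le) l (abs_of_nonneg hr).le
  have hmem := hF _ hball (by simp [hi.symm])
  have h₁ := hb _ ⟨hmem, hball⟩
  have h₂ := hb' _ ⟨hmem, hball⟩
  rw [affineMulCoord_zero_single_add_single hi ‹_›] at h₁ h₂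
  rw [← abs_of_nonneg (sq_nonneg r), ← abs_mul, sub_mul]
  rw [abs_le] at *
  constructor <;> linarith

namespace AlmostHarmonicNearFlat

variable {l : ι} {O : Set (ι → ℝ)} {r h S S' E θ T B : ℝ} {b : ι → ℝ} {v : (ι → ℝ) → ℝ}

theorem sub_affineMulCoord (H : AlmostHarmonicNearFlat l O r h S E v) (hr : 0 ≤ r) (hh : 0 ≤ h)
    (hbl : b l = 0) (hb : ∀ i, |b i| ≤ B)
    (hv : ∀ x ∈ closure O ∩ closedBall 0 r, |v x - affineMulCoord l 0 b x| ≤ S') :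
    AlmostHarmonicNearFlat l O r h S' (E + card ι * (B * r) * h)
      (fun x => v x - affineMulCoord l 0 b x) where
  isOpen := H.isOpen
  mem_of_lt_apply := H.mem_of_lt_apply
  neg_le_apply := H.neg_le_apply
  continuousOn := H.continuousOn.sub (continuous_affineMulCoord l 0 b).continuousOn
  bound := hv
  bound_boundary x hx hxO := by
    have hxl : |x l| ≤ h := abs_le.2
      ⟨H.neg_le_apply x hx, not_lt.1 fun hlt => hxO (H.mem_of_lt_apply x hx.2 hlt)⟩
    linarith [abs_sub (v x) (affineMulCoord l 0 b x), H.bound_boundary x hx hxO,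
      abs_affineMulCoord_zero_le hb (mem_closedBall_zero_iff.1 hx.2) hxl]
  laplacian x hx := by
    obtain ⟨L, hL, hLE⟩ := H.laplacian x hx
    have hB : 0 ≤ B := (abs_nonneg _).trans (hb l)
    refine ⟨L, by simpa [hbl] using hL.sub (hasLaplacian_affineMulCoord l 0 b x), ?_⟩
    exact hLE.trans (le_add_of_nonneg_right (by positivity))

theorem exists_improved_approx (H : AlmostHarmonicNearFlat l O r h S E v) (hr : 0 < r)
    (hh : 0 < h) (hθ : 0 < θ) (hθ₁ : 256 * (card ι + 1) * θ ≤ 1) (hhθ : 4 * h ≤ θ ^ 2 * r)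
    (hT : |v (Pi.single l (θ ^ 2 * r))| ≤ T) (hbl : b l = 0) (hb : ∀ i, |b i| ≤ B)
    (hv : ∀ x ∈ closure O ∩ closedBall 0 r, |v x - affineMulCoord l 0 b x| ≤ S') :
    ∃ b' : ι → ℝ, b' l = 0 ∧ ∀ x ∈ closure O ∩ closedBall 0 (θ * r),
      |v x - affineMulCoord l 0 b' x| ≤
        stepConst ι * (S' * θ ^ 3 + T / θ + (E + card ι * (B * r) * h + S' * (h / r)) / θ) := by
  obtain ⟨b', hbl', hb'⟩ := (exists_harmonic_quadratic_approx ι).choose_spec.2 (T := T)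
    (H.sub_affineMulCoord hr.le hh.le hbl hb hv) hr hh hθ hθ₁ hhθ
    (by rwa [affineMulCoord_single_self hbl, zero_mul, sub_zero])
  refine ⟨b + b', by simp [hbl, hbl'], fun x hx => ?_⟩
  rw [affineMulCoord_zero_add, ← sub_sub]
  exact hb' x hx

end AlmostHarmonicNearFlat

/-- Modulus of approximation at scale `r`. It interpolates between the known decay `ε * r ^ (1 + α)`
and the desired decay `r ^ (2 + α)`; the iteration starts with `ε > 0`, and `ε` is sent to `0` at
the end. -/
def scaleWeight (α ε r : ℝ) : ℝ := r * r ^ α * (r + ε)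

section ScaleWeight

variable {α ε r θ : ℝ}

theorem scaleWeight_pos (hε : 0 ≤ ε) (hr : 0 < r) : 0 < scaleWeight α ε r := by
  unfold scaleWeight
  positivity

theorem sq_mul_rpow_le_scaleWeight (hε : 0 ≤ ε) (hr : 0 < r) :
    r ^ 2 * r ^ α ≤ scaleWeight α ε r := by
  have : 0 ≤ r * r ^ α * ε := by positivity
  unfold scaleWeight
  linarith

theorem scaleWeight_mul_le (hθ : 0 < θ) (hθ₁ : θ ≤ 1) (hr : 0 < r) :
    scaleWeight α ε (θ * r) ≤ θ * θ ^ α * scaleWeight α ε r := by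
  unfold scaleWeight
  rw [Real.mul_rpow hθ.le hr.le]
  calc _ = θ * θ ^ α * (r * r ^ α * (θ * r + ε)) := by ring
    _ ≤ θ * θ ^ α * (r * r ^ α * (1 * r + ε)) := by gcongr
    _ = _ := by ring

theorem le_scaleWeight_mul (hε : 0 ≤ ε) (hθ : 0 < θ) (hθ₁ : θ ≤ 1) (hr : 0 < r) :
    θ ^ 2 * θ ^ α * scaleWeight α ε r ≤ scaleWeight α ε (θ * r) := by
  unfold scaleWeight
  rw [Real.mul_rpow hθ.le hr.le]
  calc _ = θ * θ ^ α * (r * r ^ α * (θ * r + θ * ε)) := by ring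
    _ ≤ θ * θ ^ α * (r * r ^ α * (θ * r + 1 * ε)) := by gcongr
    _ = _ := by ring

end ScaleWeight

/-- A ratio `θ` of consecutive scales and a largest radius `r₀` for which one step of the iteration
halves the error. -/
structure ScaleChoice (ι : Type*) [Fintype ι] [DecidableEq ι] (α K θ r₀ : ℝ) : Prop where
  ratio_pos : 0 < θ
  radius_pos : 0 < r₀
  card_mul_ratio_le : 256 * (card ι + 1) * θ ≤ 1
  const_mul_ratio_le : 6 * stepConst ι * θ ≤ θ ^ α
  const_mul_rpow_le : 6 * stepConst ι * θ ^ α ≤ 1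
  flatness_le : 4 * K * r₀ ^ α ≤ θ ^ 2
  perturbation_le : 36 * (card ι + 1) * K * stepConst ι * r₀ ^ α ≤ θ ^ 5 * θ ^ α

/-- The factor with which the data enter the error after one step of the iteration. -/
def dataConst (ι : Type*) [Fintype ι] [DecidableEq ι] (α K θ r₀ : ℝ) : ℝ :=
  stepConst ι * (1 + card ι * K / r₀ ^ 2) / (θ ^ 3 * θ ^ α) + 1 / (r₀ ^ 2 * r₀ ^ α)

namespace ScaleChoice

variable {α K θ r₀ r : ℝ}

theorem ratio_lt_one (hs : ScaleChoice ι α K θ r₀) : θ < 1 := by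
  linarith [hs.card_mul_ratio_le, hs.ratio_pos,
    mul_nonneg (Nat.cast_nonneg (α := ℝ) (card ι)) hs.ratio_pos.le]

theorem two_mul_ratio_le (hs : ScaleChoice ι α K θ r₀) : 2 * θ ≤ θ ^ α := by
  refine le_trans ?_ hs.const_mul_ratio_le
  have := hs.ratio_pos
  gcongr
  linarith [one_le_stepConst ι]

theorem two_mul_ratio_rpow_le (hs : ScaleChoice ι α K θ r₀) : 2 * θ ^ α ≤ 1 := by
  refine le_trans ?_ hs.const_mul_rpow_le
  have := Real.rpow_pos_of_pos hs.ratio_pos α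
  gcongr
  linarith [one_le_stepConst ι]

theorem scale_pos (hs : ScaleChoice ι α K θ r₀) (k : ℕ) : 0 < r₀ * θ ^ k :=
  mul_pos hs.radius_pos (pow_pos hs.ratio_pos k)

theorem scale_le (hs : ScaleChoice ι α K θ r₀) (k : ℕ) : r₀ * θ ^ k ≤ r₀ :=
  mul_le_of_le_one_right hs.radius_pos.le (pow_le_one₀ hs.ratio_pos.le hs.ratio_lt_one.le)

theorem scale_succ (θ r₀ : ℝ) (k : ℕ) : r₀ * θ ^ (k + 1) = θ * (r₀ * θ ^ k) := by ring

theorem rpow_scale (hs : ScaleChoice ι α K θ r₀) (k : ℕ) :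
    (r₀ * θ ^ k) ^ α = r₀ ^ α * (θ ^ α) ^ k := by
  rw [Real.mul_rpow hs.radius_pos.le (pow_nonneg hs.ratio_pos.le k), ← Real.rpow_natCast_mul
    hs.ratio_pos.le, mul_comm (k : ℝ), Real.rpow_mul_natCast hs.ratio_pos.le]

theorem two_mul_rpow_scale_succ_le (hs : ScaleChoice ι α K θ r₀) (k : ℕ) :
    2 * (r₀ * θ ^ (k + 1)) ^ α ≤ (r₀ * θ ^ k) ^ α := by
  rw [scale_succ, Real.mul_rpow hs.ratio_pos.le (hs.scale_pos k).le, ← mul_assoc]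
  exact mul_le_of_le_one_left (Real.rpow_nonneg (hs.scale_pos k).le α) hs.two_mul_ratio_rpow_le

theorem two_mul_rpow_div_scale_le (hs : ScaleChoice ι α K θ r₀) (k : ℕ) :
    2 * ((r₀ * θ ^ k) ^ α / (r₀ * θ ^ k)) ≤ (r₀ * θ ^ (k + 1)) ^ α / (r₀ * θ ^ (k + 1)) := by
  rw [scale_succ, Real.mul_rpow hs.ratio_pos.le (hs.scale_pos k).le, mul_div_mul_comm]
  exact mul_le_mul_of_nonneg_right ((le_div_iff₀ hs.ratio_pos).2 hs.two_mul_ratio_le)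
    (div_nonneg (Real.rpow_nonneg (hs.scale_pos k).le α) (hs.scale_pos k).le)

theorem four_mul_height_le (hs : ScaleChoice ι α K θ r₀) (hα : 0 ≤ α) (hK : 0 ≤ K) (hr : 0 < r)
    (hr₀ : r ≤ r₀) : 4 * (K * r * r ^ α) ≤ θ ^ 2 * r := by
  calc 4 * (K * r * r ^ α) ≤ 4 * (K * r * r₀ ^ α) := by gcongr
    _ = 4 * K * r₀ ^ α * r := by ring
    _ ≤ θ ^ 2 * r := by gcongr; exact hs.flatness_le

theorem height_lt (hs : ScaleChoice ι α K θ r₀) (hα : 0 ≤ α) (hK : 0 ≤ K) (hr : 0 < r)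
    (hr₀ : r ≤ r₀) : K * r * r ^ α < r := by
  have hsq : θ ^ 2 * r ≤ 1 * r :=
    mul_le_mul_of_nonneg_right (pow_le_one₀ hs.ratio_pos.le hs.ratio_lt_one.le) hr.le
  linarith [hs.four_mul_height_le hα hK hr hr₀]

end ScaleChoice

/-- At each of the scales `r₀ * θ ^ k`, `v` is within `A * scaleWeight α ε (r₀ * θ ^ k)` of a
harmonic quadratic polynomial vanishing on the hyperplane `x_l = 0`. -/
def ApproxAtScales {ι : Type*} [Fintype ι] (l : ι) (O : Set (ι → ℝ)) (v : (ι → ℝ) → ℝ)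
    (α ε θ r₀ A : ℝ) : Prop :=
  ∀ k : ℕ, ∃ b : ι → ℝ, b l = 0 ∧ ∀ x ∈ closure O ∩ closedBall 0 (r₀ * θ ^ k),
    |v x - affineMulCoord l 0 b x| ≤ A * scaleWeight α ε (r₀ * θ ^ k)

theorem abs_coeff_sub_le_of_approx {ι : Type*} [Fintype ι] {l : ι} {F : Set (ι → ℝ)}
    {v : (ι → ℝ) → ℝ} {α ε θ r A : ℝ} {b b' : ι → ℝ} (hr : 0 < r) (hθ : 0 < θ) (hθ₁ : θ ≤ 1)
    (hα : 0 ≤ α) (hε : 0 ≤ ε) (hA : 0 ≤ A)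
    (hF : ∀ x ∈ closedBall 0 (θ * r), x l = θ * r → x ∈ F) (hbl : b l = 0) (hbl' : b' l = 0)
    (hb : ∀ x ∈ F ∩ closedBall 0 r, |v x - affineMulCoord l 0 b x| ≤ A * scaleWeight α ε r)
    (hb' : ∀ x ∈ F ∩ closedBall 0 (θ * r),
      |v x - affineMulCoord l 0 b' x| ≤ A * scaleWeight α ε (θ * r)) (i : ι) :
    |b' i - b i| ≤ 2 * A / θ ^ 2 * (r ^ α + ε * (r ^ α / r)) := by
  have hθr : θ * r ≤ r := mul_le_of_le_one_left hr.le hθ₁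
  have hdiff := abs_coeff_sub_mul_sq_le (by positivity) hF hbl' hbl hb'
    (fun x hx => hb x ⟨hx.1, closedBall_subset_closedBall hθr hx.2⟩) i
  have hmono : scaleWeight α ε (θ * r) ≤ scaleWeight α ε r := by
    unfold scaleWeight
    gcongr
  rw [← mul_le_mul_iff_left₀ (by positivity : 0 < (θ * r) ^ 2)]
  calc |b' i - b i| * (θ * r) ^ 2 ≤ A * scaleWeight α ε (θ * r) + A * scaleWeight α ε r := hdiff
    _ ≤ A * scaleWeight α ε r + A * scaleWeight α ε r := by gcongr
    _ = _ := by
        unfold scaleWeight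
        field_simp
        ring

theorem abs_coeff_le_of_approx {ι : Type*} [Fintype ι] {l : ι} {F : Set (ι → ℝ)}
    {v : (ι → ℝ) → ℝ} {α ε r A N : ℝ} {b : ι → ℝ} (hr : 0 < r)
    (hF : ∀ x ∈ closedBall 0 r, x l = r → x ∈ F) (hv : ∀ x ∈ F ∩ closedBall 0 r, |v x| ≤ N)
    (hbl : b l = 0)
    (hb : ∀ x ∈ F ∩ closedBall 0 r, |v x - affineMulCoord l 0 b x| ≤ A * scaleWeight α ε r)
    (i : ι) : |b i| ≤ N / r ^ 2 + A * (r ^ α + ε * (r ^ α / r)) := by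
  have hdiff := abs_coeff_sub_mul_sq_le (b' := 0) hr.le hF hbl rfl hb
    (fun x hx => by simpa [affineMulCoord] using hv x hx) i
  rw [← mul_le_mul_iff_left₀ (by positivity : 0 < r ^ 2)]
  calc |b i| * r ^ 2 ≤ A * scaleWeight α ε r + N := by simpa using hdiff
    _ = _ := by
        unfold scaleWeight
        field_simp
        ring

theorem le_add_of_geometric_increments {c s p : ℕ → ℝ} {M κ : ℝ} (hκ : 0 ≤ κ)
    (hs : ∀ k, 2 * s (k + 1) ≤ s k) (hp : ∀ k, 2 * p k ≤ p (k + 1))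
    (h₀ : c 0 ≤ M + κ * (s 0 + p 0)) (hstep : ∀ k, c (k + 1) ≤ c k + κ * (s k + p k)) (k : ℕ) :
    c k ≤ M + κ * (3 * s 0 - 2 * s k + p k) := by
  induction k with
  | zero => exact h₀.trans_eq (by ring)
  | succ k ih =>
    have : κ * (3 * s 0 - 2 * s k + p k + (s k + p k)) ≤
        κ * (3 * s 0 - 2 * s (k + 1) + p (k + 1)) :=
      mul_le_mul_of_nonneg_left (by linarith [hs k, hp k]) hκ
    linarith [hstep k]

section Contraction

variable {l : ι} {O : Set (ι → ℝ)} {v : (ι → ℝ) → ℝ} {α ε K θ r₀ r A N : ℝ} {b b' : ι → ℝ}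

theorem ScaleChoice.abs_coeff_succ_sub_le (hs : ScaleChoice ι α K θ r₀) (hα : 0 ≤ α)
    (hK : 0 ≤ K) (hε : 0 ≤ ε) (hA : 0 ≤ A)
    (H : ∀ r, 0 < r → r ≤ r₀ →
      AlmostHarmonicNearFlat l O r (K * r * r ^ α) N (N * (r ^ 2 * r ^ α)) v) {k : ℕ}
    (hbl : b l = 0) (hbl' : b' l = 0)
    (hb : ∀ x ∈ closure O ∩ closedBall 0 (r₀ * θ ^ k),
      |v x - affineMulCoord l 0 b x| ≤ A * scaleWeight α ε (r₀ * θ ^ k))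
    (hb' : ∀ x ∈ closure O ∩ closedBall 0 (r₀ * θ ^ (k + 1)),
      |v x - affineMulCoord l 0 b' x| ≤ A * scaleWeight α ε (r₀ * θ ^ (k + 1))) (i : ι) :
    |b' i - b i| ≤
      2 * A / θ ^ 2 * ((r₀ * θ ^ k) ^ α + ε * ((r₀ * θ ^ k) ^ α / (r₀ * θ ^ k))) := by
  have hr := hs.scale_pos (k + 1)
  have hr₀ := hs.scale_le (k + 1)
  rw [scale_succ] at hb' hr hr₀
  exact abs_coeff_sub_le_of_approx (hs.scale_pos k) hs.ratio_pos hs.ratio_lt_one.le hα hε hA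
    (fun x hx hxl => subset_closure
      ((H _ hr hr₀).mem_of_apply_eq (hs.height_lt hα hK hr hr₀) hx hxl)) hbl hbl' hb hb' i

theorem ApproxAtScales.exists_bounded (happ : ApproxAtScales l O v α ε θ r₀ A)
    (hs : ScaleChoice ι α K θ r₀) (hα : 0 ≤ α) (hK : 0 ≤ K) (hε : 0 ≤ ε) (hA : 0 ≤ A)
    (H : ∀ r, 0 < r → r ≤ r₀ →
      AlmostHarmonicNearFlat l O r (K * r * r ^ α) N (N * (r ^ 2 * r ^ α)) v) (k : ℕ) :
    ∃ b : ι → ℝ, b l = 0 ∧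
      (∀ i, |b i| ≤ N / r₀ ^ 2 + 2 * A / θ ^ 2 *
        (3 * r₀ ^ α + ε * ((r₀ * θ ^ k) ^ α / (r₀ * θ ^ k)))) ∧
      ∀ x ∈ closure O ∩ closedBall 0 (r₀ * θ ^ k),
        |v x - affineMulCoord l 0 b x| ≤ A * scaleWeight α ε (r₀ * θ ^ k) := by
  choose b hbl hb using happ
  have hθ := hs.ratio_pos
  have hr₀ := hs.radius_pos
  refine ⟨b k, hbl k, fun i => ?_, hb k⟩
  have htel := le_add_of_geometric_increments (c := fun k => |b k i|) (M := N / r₀ ^ 2)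
    (s := fun k => (r₀ * θ ^ k) ^ α) (p := fun k => ε * ((r₀ * θ ^ k) ^ α / (r₀ * θ ^ k)))
    (κ := 2 * A / θ ^ 2) (by positivity) hs.two_mul_rpow_scale_succ_le (fun k => ?_) ?_
    (fun k => ?_) k
  · refine htel.trans ?_
    rw [pow_zero, mul_one]
    gcongr
    linarith [Real.rpow_pos_of_pos (hs.scale_pos k) α]
  · rw [mul_left_comm]
    exact mul_le_mul_of_nonneg_left (hs.two_mul_rpow_div_scale_le k) hε
  · have hA' : A ≤ 2 * A / θ ^ 2 := by
      rw [le_div_iff₀ (by positivity)]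
      linarith [mul_le_of_le_one_right hA (pow_le_one₀ hθ.le hs.ratio_lt_one.le : θ ^ 2 ≤ 1)]
    rw [pow_zero, mul_one]
    refine (abs_coeff_le_of_approx hr₀ (fun x hx hxl => subset_closure
      ((H r₀ hr₀ le_rfl).mem_of_apply_eq (hs.height_lt hα hK hr₀ le_rfl) hx hxl))
       (H r₀ hr₀ le_rfl).bound (hbl 0)
      (by simpa using hb 0) i).trans ?_
    gcongr
  · have := hs.abs_coeff_succ_sub_le hα hK hε hA H (hbl k) (hbl (k + 1)) (hb k) (hb (k + 1)) i
    linarith [abs_sub_abs_le_abs_sub (b (k + 1) i) (b k i)]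

theorem ScaleChoice.error_le (hs : ScaleChoice ι α K θ r₀) (hα : 0 ≤ α) (hK : 0 ≤ K) (hε : 0 ≤ ε)
    (hA : 0 ≤ A) (hN : 0 ≤ N) (hr : 0 < r) (hr₀ : r ≤ r₀) :
    N * (r ^ 2 * r ^ α) + card ι * ((N / r₀ ^ 2 + 2 * A / θ ^ 2 *
        (3 * r₀ ^ α + ε * (r ^ α / r))) * r) * (K * r * r ^ α) +
      A * scaleWeight α ε r * (K * r * r ^ α / r) ≤
    ((1 + card ι * K / r₀ ^ 2) * N + 6 * (card ι + 1) * K * r₀ ^ α / θ ^ 2 * A) *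
      scaleWeight α ε r := by
  have hθ := hs.ratio_pos
  have hr₀' := hs.radius_pos
  have hω := scaleWeight_pos (α := α) hε hr
  have hpow : r ^ α ≤ r₀ ^ α := Real.rpow_le_rpow hr.le hr₀ hα
  have hdecay := sq_mul_rpow_le_scaleWeight (α := α) hε hr
  have hcoeff : 3 * r₀ ^ α * (r ^ 2 * r ^ α) + r ^ α * (ε * (r * r ^ α)) ≤
      3 * r₀ ^ α * scaleWeight α ε r := by
    calc _ ≤ 3 * r₀ ^ α * (r ^ 2 * r ^ α) + 3 * r₀ ^ α * (ε * (r * r ^ α)) := by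
          gcongr
          linarith [Real.rpow_pos_of_pos hr₀' α]
      _ = _ := by unfold scaleWeight; ring
  have hheight : K * r ^ α ≤ 6 * K * r₀ ^ α / θ ^ 2 := by
    rw [le_div_iff₀ (by positivity)]
    calc K * r ^ α * θ ^ 2 ≤ K * r₀ ^ α * 1 := by
          gcongr
          exact pow_le_one₀ hθ.le hs.ratio_lt_one.le
      _ ≤ 6 * K * r₀ ^ α := by linarith [mul_nonneg hK (Real.rpow_nonneg hr₀'.le α)]
  calc _ = N * (r ^ 2 * r ^ α) + card ι * K / r₀ ^ 2 * N * (r ^ 2 * r ^ α) +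
          card ι * K * (2 * A / θ ^ 2) *
            (3 * r₀ ^ α * (r ^ 2 * r ^ α) + r ^ α * (ε * (r * r ^ α))) +
          A * scaleWeight α ε r * (K * r ^ α) := by
        field_simp
        ring
    _ ≤ N * scaleWeight α ε r + card ι * K / r₀ ^ 2 * N * scaleWeight α ε r +
          card ι * K * (2 * A / θ ^ 2) * (3 * r₀ ^ α * scaleWeight α ε r) +
          A * scaleWeight α ε r * (6 * K * r₀ ^ α / θ ^ 2) := by gcongr
    _ = _ := by ring

theorem ScaleChoice.step_le (hs : ScaleChoice ι α K θ r₀) (hK : 0 ≤ K) (hε : 0 ≤ ε)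
    (hA : 0 ≤ A) (hN : 0 ≤ N) (hr : 0 < r) :
    stepConst ι * (A * scaleWeight α ε r * θ ^ 3 + A * scaleWeight α ε (θ ^ 2 * r) / θ +
      ((1 + card ι * K / r₀ ^ 2) * N + 6 * (card ι + 1) * K * r₀ ^ α / θ ^ 2 * A) *
        scaleWeight α ε r / θ) ≤
    (A / 2 + dataConst ι α K θ r₀ * N) * scaleWeight α ε (θ * r) := by
  have hθ := hs.ratio_pos
  have hr₀ := hs.radius_pos
  have hC := one_le_stepConst ι
  have hω := scaleWeight_pos (α := α) hε (mul_pos hθ hr)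
  have hdown : scaleWeight α ε r ≤ scaleWeight α ε (θ * r) / (θ ^ 2 * θ ^ α) := by
    rw [le_div_iff₀ (by positivity), mul_comm]
    exact le_scaleWeight_mul hε hθ hs.ratio_lt_one.le hr
  have hup : scaleWeight α ε (θ ^ 2 * r) ≤ θ * θ ^ α * scaleWeight α ε (θ * r) := by
    rw [sq, mul_assoc θ θ]
    exact scaleWeight_mul_le hθ hs.ratio_lt_one.le (mul_pos hθ hr)
  have hcubic : stepConst ι * θ / θ ^ α ≤ 1 / 6 := by
    rw [div_le_div_iff₀ (by positivity) (by norm_num)]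
    linarith [hs.const_mul_ratio_le]
  have hsample : stepConst ι * θ ^ α ≤ 1 / 6 := by linarith [hs.const_mul_rpow_le]
  have hperturb : stepConst ι * (6 * (card ι + 1) * K * r₀ ^ α) / (θ ^ 5 * θ ^ α) ≤ 1 / 6 := by
    rw [div_le_div_iff₀ (by positivity) (by norm_num)]
    linarith [hs.perturbation_le]
  have hdata : stepConst ι * (1 + card ι * K / r₀ ^ 2) / (θ ^ 3 * θ ^ α) ≤
      dataConst ι α K θ r₀ := le_add_of_nonneg_right (by positivity)
  set ω := scaleWeight α ε (θ * r)
  calc _ ≤ stepConst ι * (A * (ω / (θ ^ 2 * θ ^ α)) * θ ^ 3 + A * (θ * θ ^ α * ω) / θ +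
          ((1 + card ι * K / r₀ ^ 2) * N + 6 * (card ι + 1) * K * r₀ ^ α / θ ^ 2 * A) *
            (ω / (θ ^ 2 * θ ^ α)) / θ) := by gcongr
    _ = (stepConst ι * θ / θ ^ α * A + stepConst ι * θ ^ α * A +
          stepConst ι * (6 * (card ι + 1) * K * r₀ ^ α) / (θ ^ 5 * θ ^ α) * A +
          stepConst ι * (1 + card ι * K / r₀ ^ 2) / (θ ^ 3 * θ ^ α) * N) * ω := by
        field_simp
        ring
    _ ≤ (1 / 6 * A + 1 / 6 * A + 1 / 6 * A + dataConst ι α K θ r₀ * N) * ω := by gcongr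
    _ = _ := by ring

theorem ScaleChoice.dataConst_pos (hs : ScaleChoice ι α K θ r₀) (hK : 0 ≤ K) :
    0 < dataConst ι α K θ r₀ := by
  have hθ := hs.ratio_pos
  have hr₀ := hs.radius_pos
  have hC := one_le_stepConst ι
  unfold dataConst
  positivity

theorem ScaleChoice.le_dataConst_mul (hs : ScaleChoice ι α K θ r₀) (hK : 0 ≤ K) (hε : 0 ≤ ε)
    (hA : 0 ≤ A) (hN : 0 ≤ N) :
    N ≤ (A / 2 + dataConst ι α K θ r₀ * N) * scaleWeight α ε r₀ := by
  have hθ := hs.ratio_pos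
  have hr₀ := hs.radius_pos
  have hC := one_le_stepConst ι
  have hdata : 1 / (r₀ ^ 2 * r₀ ^ α) ≤ dataConst ι α K θ r₀ :=
    le_add_of_nonneg_left (by positivity)
  have := hs.dataConst_pos hK
  calc N = (0 + 1 / (r₀ ^ 2 * r₀ ^ α) * N) * (r₀ ^ 2 * r₀ ^ α) := by field_simp; ring
    _ ≤ (A / 2 + dataConst ι α K θ r₀ * N) * scaleWeight α ε r₀ := by
        gcongr
        · positivity
        · exact sq_mul_rpow_le_scaleWeight hε hr₀

theorem ApproxAtScales.contract (happ : ApproxAtScales l O v α ε θ r₀ A)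
    (hs : ScaleChoice ι α K θ r₀) (hα : 0 ≤ α) (hK : 0 < K) (hε : 0 ≤ ε) (hA : 0 ≤ A)
    (H : ∀ r, 0 < r → r ≤ r₀ →
      AlmostHarmonicNearFlat l O r (K * r * r ^ α) N (N * (r ^ 2 * r ^ α)) v) :
    ApproxAtScales l O v α ε θ r₀ (A / 2 + dataConst ι α K θ r₀ * N) := by
  have hθ := hs.ratio_pos
  have hr₀ := hs.radius_pos
  have hC := one_le_stepConst ι
  have hN : 0 ≤ N := (H r₀ hr₀ le_rfl).bound_nonneg hr₀.le (hs.height_lt hα hK.le hr₀ le_rfl)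
  rintro (_ | k)
  · refine ⟨0, rfl, fun x hx => ?_⟩
    rw [pow_zero, mul_one] at hx ⊢
    simpa [affineMulCoord] using
      ((H r₀ hr₀ le_rfl).bound x hx).trans (hs.le_dataConst_mul hK.le hε hA hN)
  obtain ⟨b, hbl, hb, hv⟩ := happ.exists_bounded hs hα hK.le hε hA H k
  obtain ⟨b₂, hbl₂, hv₂⟩ := happ (k + 2)
  have hr := hs.scale_pos k
  have hr' := hs.scale_le k
  have hsample : |v (Pi.single l (θ ^ 2 * (r₀ * θ ^ k)))| ≤
      A * scaleWeight α ε (θ ^ 2 * (r₀ * θ ^ k)) := by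
    have hr₂ := hs.scale_pos (k + 2)
    have hmem := (H _ hr₂ (hs.scale_le _)).single_mem hr₂.le
      (hs.height_lt hα hK.le hr₂ (hs.scale_le _))
    have hv₂ := hv₂ _ (inter_subset_inter_left _ subset_closure hmem)
    rwa [affineMulCoord_single_self hbl₂, zero_mul, sub_zero, show r₀ * θ ^ (k + 2) =
      θ ^ 2 * (r₀ * θ ^ k) by ring] at hv₂
  obtain ⟨b', hbl', hb'⟩ := (H _ hr hr').exists_improved_approx hr (by positivity) hθ
    hs.card_mul_ratio_le (hs.four_mul_height_le hα hK.le hr hr') hsample hbl hb hv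
  rw [ScaleChoice.scale_succ]
  refine ⟨b', hbl', fun x hx => (hb' x hx).trans ((mul_le_mul_of_nonneg_left ?_ ?_).trans
    (hs.step_le hK.le hε hA hN hr))⟩
  · gcongr
    exact hs.error_le hα hK.le hε hA hN hr hr'
  · linarith

end Contraction

theorem eventually_mul_rpow_le (c : ℝ) {α δ : ℝ} (hα : 0 < α) (hδ : 0 < δ) :
    ∀ᶠ r : ℝ in 𝓝[>] 0, c * r ^ α ≤ δ := by
  have hcont : Tendsto (fun r : ℝ => c * r ^ α) (𝓝[>] 0) (𝓝 0) := by
    have := (Real.continuousAt_rpow_const 0 α (.inr hα.le)).tendsto.const_mul c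
    rw [Real.zero_rpow hα.ne', mul_zero] at this
    exact this.mono_left nhdsWithin_le_nhds
  exact (hcont.eventually_lt_const hδ).mono fun _ => le_of_lt

theorem exists_scaleChoice (ι : Type*) [Fintype ι] [DecidableEq ι] {α R : ℝ} (hα : 0 < α)
    (hα₁ : α < 1) (K : ℝ) (hR : 0 < R) : ∃ θ r₀, ScaleChoice ι α K θ r₀ ∧ r₀ ≤ R := by
  obtain ⟨θ, hcard, hratio, hrpow, hθ : 0 < θ⟩ :=
    ((eventually_mul_rpow_le (256 * (card ι + 1)) one_pos one_pos).and
      ((eventually_mul_rpow_le (6 * stepConst ι) (sub_pos.2 hα₁) one_pos).and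
        ((eventually_mul_rpow_le (6 * stepConst ι) hα one_pos).and self_mem_nhdsWithin))).exists
  obtain ⟨r₀, hflat, hperturb, hr₀R, hr₀ : 0 < r₀⟩ :=
    ((eventually_mul_rpow_le (4 * K) hα (by positivity : 0 < θ ^ 2)).and
      ((eventually_mul_rpow_le (36 * (card ι + 1) * K * stepConst ι) hα
        (by positivity : 0 < θ ^ 5 * θ ^ α)).and
        ((eventually_mul_rpow_le 1 one_pos hR).and self_mem_nhdsWithin))).exists
  refine ⟨θ, r₀, ⟨hθ, hr₀, by simpa using hcard, ?_, hrpow, hflat, hperturb⟩, by simpa using hr₀R⟩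
  calc 6 * stepConst ι * θ = 6 * stepConst ι * θ ^ (1 - α) * θ ^ α := by
        rw [mul_assoc _ (θ ^ _), ← Real.rpow_add hθ, sub_add_cancel, Real.rpow_one]
    _ ≤ 1 * θ ^ α := by gcongr
    _ = θ ^ α := one_mul _

namespace ApproxAtScales

variable {l : ι} {O : Set (ι → ℝ)} {v : (ι → ℝ) → ℝ} {α ε K θ r₀ A A' N : ℝ}

theorem mono {ι : Type*} [Fintype ι] {l : ι} {O : Set (ι → ℝ)} {v : (ι → ℝ) → ℝ}
    (happ : ApproxAtScales l O v α ε θ r₀ A) (hε : 0 ≤ ε) (hθ : 0 < θ) (hr₀ : 0 < r₀)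
    (hA : A ≤ A') : ApproxAtScales l O v α ε θ r₀ A' := fun k => by
  obtain ⟨b, hbl, hb⟩ := happ k
  exact ⟨b, hbl, fun x hx => (hb x hx).trans
    (mul_le_mul_of_nonneg_right hA (scaleWeight_pos hε (by positivity)).le)⟩

theorem of_decay (hs : ScaleChoice ι α K θ r₀) (hε : 0 < ε) {M : ℝ}
    (hdecay : ∀ r, 0 < r → r ≤ r₀ → ∀ x ∈ closure O ∩ closedBall 0 r, |v x| ≤ M * (r * r ^ α)) :
    ApproxAtScales l O v α ε θ r₀ (|M| / ε) := fun k => by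
  refine ⟨0, rfl, fun x hx => ?_⟩
  have hr := hs.scale_pos k
  rw [affineMulCoord]
  simp only [Pi.zero_apply, zero_mul, Finset.sum_const_zero, add_zero, sub_zero]
  calc |v x| ≤ M * (r₀ * θ ^ k * (r₀ * θ ^ k) ^ α) := hdecay _ hr (hs.scale_le k) x hx
    _ ≤ |M| * (r₀ * θ ^ k * (r₀ * θ ^ k) ^ α) := by gcongr; exact le_abs_self M
    _ = |M| / ε * (r₀ * θ ^ k * (r₀ * θ ^ k) ^ α * (0 + ε)) := by field_simp; ring
    _ ≤ |M| / ε * scaleWeight α ε (r₀ * θ ^ k) := by unfold scaleWeight; gcongr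

theorem iterate (happ : ApproxAtScales l O v α ε θ r₀ A) (hs : ScaleChoice ι α K θ r₀)
    (hα : 0 ≤ α) (hK : 0 < K) (hε : 0 ≤ ε) (hA : 0 ≤ A) (hN : 0 < N)
    (H : ∀ r, 0 < r → r ≤ r₀ →
      AlmostHarmonicNearFlat l O r (K * r * r ^ α) N (N * (r ^ 2 * r ^ α)) v) :
    ApproxAtScales l O v α ε θ r₀ (4 * (dataConst ι α K θ r₀ * N)) := by
  have hd : 0 < dataConst ι α K θ r₀ * N := mul_pos (hs.dataConst_pos hK.le) hN
  have hiter : ∀ j : ℕ,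
      ApproxAtScales l O v α ε θ r₀ (A * (1 / 2) ^ j + 2 * (dataConst ι α K θ r₀ * N)) := by
    intro j
    induction j with
    | zero => exact happ.mono hε hs.ratio_pos hs.radius_pos (by linarith)
    | succ j ih =>
      exact (ih.contract hs hα hK hε (by positivity) H).mono hε hs.ratio_pos hs.radius_pos
        (by rw [pow_succ]; linarith)
  have htend : Tendsto (fun j : ℕ => A * (1 / 2 : ℝ) ^ j) atTop (𝓝 0) := by
    simpa using (tendsto_pow_atTop_nhds_zero_of_lt_one (by norm_num : (0 : ℝ) ≤ 1 / 2)
      (by norm_num)).const_mul A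
  obtain ⟨j, hj⟩ := (htend.eventually_lt_const (by linarith : 0 < 2 * (_ * N))).exists
  exact (hiter j).mono hε hs.ratio_pos hs.radius_pos (by linarith)

-- With `ε` equal to the scale itself the two terms of `scaleWeight` coincide.
theorem of_forall_pos (happ : ∀ ε > 0, ApproxAtScales l O v α ε θ r₀ A)
    (hs : ScaleChoice ι α K θ r₀) : ApproxAtScales l O v α 0 θ r₀ (2 * A) := fun k => by
  obtain ⟨b, hbl, hb⟩ := happ _ (hs.scale_pos k) k
  exact ⟨b, hbl, fun x hx => (hb x hx).trans_eq (by unfold scaleWeight; ring)⟩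

theorem exists_limit (happ : ApproxAtScales l O v α 0 θ r₀ A)
    (hs : ScaleChoice ι α K θ r₀) (hα : 0 ≤ α) (hK : 0 ≤ K) (hA : 0 ≤ A)
    (H : ∀ r, 0 < r → r ≤ r₀ →
      AlmostHarmonicNearFlat l O r (K * r * r ^ α) N (N * (r ^ 2 * r ^ α)) v) :
    ∃ b : ι → ℝ, b l = 0 ∧ (∀ i, |b i| ≤ N / r₀ ^ 2 + 6 * A / θ ^ 2 * r₀ ^ α) ∧
      ∀ k : ℕ, ∀ x ∈ closure O ∩ closedBall 0 (r₀ * θ ^ k), |v x - affineMulCoord l 0 b x| ≤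
        A * (1 + 4 * card ι / θ ^ 2) * ((r₀ * θ ^ k) ^ 2 * (r₀ * θ ^ k) ^ α) := by
  have hθ := hs.ratio_pos
  have hr₀ := hs.radius_pos
  choose b hbl hb hv using happ.exists_bounded hs hα hK le_rfl hA H
  have hdist : ∀ k, dist (b k) (b (k + 1)) ≤ 2 * A / θ ^ 2 * r₀ ^ α * (θ ^ α) ^ k := by
    intro k
    rw [dist_comm, dist_eq_norm, pi_norm_le_iff_of_nonneg (by positivity)]
    intro i
    refine (hs.abs_coeff_succ_sub_le hα hK le_rfl hA H (hbl k) (hbl (k + 1)) (hv k) (hv (k + 1))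
      i).trans_eq ?_
    rw [hs.rpow_scale]
    ring
  have hθα : θ ^ α < 1 := by linarith [hs.two_mul_ratio_rpow_le, Real.rpow_pos_of_pos hθ α]
  obtain ⟨β, hβ⟩ := cauchySeq_tendsto_of_complete (cauchySeq_of_le_geometric _ _ hθα hdist)
  have hβ' := fun i => (tendsto_pi_nhds.1 hβ) i
  have hclose : ∀ k i, |(b k - β) i| ≤ 4 * A / θ ^ 2 * (r₀ * θ ^ k) ^ α := fun k i =>
    calc |(b k - β) i| ≤ dist (b k) β := dist_le_pi_dist (b k) β i
      _ ≤ 2 * A / θ ^ 2 * r₀ ^ α * (θ ^ α) ^ k / (1 - θ ^ α) :=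
          dist_le_of_le_geometric_of_tendsto _ _ hθα hdist hβ k
      _ ≤ 2 * A / θ ^ 2 * r₀ ^ α * (θ ^ α) ^ k / (1 / 2) := by
          gcongr
          linarith [hs.two_mul_ratio_rpow_le]
      _ = 4 * A / θ ^ 2 * (r₀ * θ ^ k) ^ α := by rw [hs.rpow_scale]; ring
  refine ⟨β, tendsto_nhds_unique (hβ' l) (by simp [hbl]),
    fun i => le_of_tendsto (hβ' i).abs (.of_forall fun k => (hb k i).trans_eq (by ring)),
    fun k x hx => ?_⟩
  have hx' := mem_closedBall_zero_iff.1 hx.2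
  have hq := abs_affineMulCoord_zero_le (hclose k) hx' (abs_apply_le_of_norm_le hx' l)
  have hsplit := affineMulCoord_zero_add l (b k - β) β x
  rw [sub_add_cancel] at hsplit
  calc |v x - affineMulCoord l 0 β x|
      = |v x - affineMulCoord l 0 (b k) x + affineMulCoord l 0 (b k - β) x| := by
        rw [hsplit]; ring_nf
    _ ≤ A * scaleWeight α 0 (r₀ * θ ^ k) + card ι * (4 * A / θ ^ 2 * (r₀ * θ ^ k) ^ α *
          (r₀ * θ ^ k)) * (r₀ * θ ^ k) := (abs_add_le _ _).trans (add_le_add (hv k x hx) hq)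
    _ = _ := by unfold scaleWeight; ring

end ApproxAtScales

theorem exists_scale_near {θ r₀ r : ℝ} (hθ : 0 < θ) (hθ₁ : θ < 1) (hr : 0 < r) (hr₀ : r ≤ r₀) :
    ∃ k : ℕ, r ≤ r₀ * θ ^ k ∧ r₀ * θ ^ k ≤ r / θ := by
  have hpos : 0 < r₀ := hr.trans_le hr₀
  obtain ⟨k, hk, hk'⟩ := exists_nat_pow_near_of_lt_one (div_pos hr hpos)
    ((div_le_one hpos).2 hr₀) hθ hθ₁
  refine ⟨k, (div_le_iff₀' hpos).1 hk', ?_⟩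
  rw [le_div_iff₀ hθ, mul_assoc, ← pow_succ]
  exact ((lt_div_iff₀' hpos).1 hk).le

/-- The factor with which the data enter the coefficients and the error of the limiting
polynomial. -/
def expansionConst (ι : Type*) [Fintype ι] [DecidableEq ι] (α K θ r₀ : ℝ) : ℝ :=
  1 / r₀ ^ 2 + 48 * dataConst ι α K θ r₀ / θ ^ 2 * r₀ ^ α +
    8 * dataConst ι α K θ r₀ * (1 + 4 * card ι / θ ^ 2) / (θ ^ 2 * θ ^ α)

theorem ScaleChoice.expansionConst_pos {α K θ r₀ : ℝ} (hs : ScaleChoice ι α K θ r₀) (hK : 0 ≤ K) :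
    0 < expansionConst ι α K θ r₀ := by
  have := hs.ratio_pos
  have := hs.radius_pos
  have := hs.dataConst_pos hK
  unfold expansionConst
  positivity

theorem ScaleChoice.exists_harmonic_quadratic_expansion {l : ι} {O : Set (ι → ℝ)}
    {v : (ι → ℝ) → ℝ} {α K θ r₀ N M : ℝ} (hs : ScaleChoice ι α K θ r₀) (hα : 0 ≤ α) (hK : 0 < K)
    (H : ∀ r, 0 < r → r ≤ r₀ →
      AlmostHarmonicNearFlat l O r (K * r * r ^ α) N (N * (r ^ 2 * r ^ α)) v)
    (hdecay : ∀ r, 0 < r → r ≤ r₀ → ∀ x ∈ closure O ∩ closedBall 0 r, |v x| ≤ M * (r * r ^ α)) :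
    ∃ b : ι → ℝ, b l = 0 ∧ (∀ i, |b i| ≤ expansionConst ι α K θ r₀ * N) ∧
      ∀ r, 0 < r → r ≤ r₀ → ∀ x ∈ closure O ∩ closedBall 0 r,
        |v x - affineMulCoord l 0 b x| ≤ expansionConst ι α K θ r₀ * N * (r ^ 2 * r ^ α) := by
  have hθ := hs.ratio_pos
  have hr₀ := hs.radius_pos
  have hd := hs.dataConst_pos hK.le
  have hN : 0 ≤ N := (H r₀ hr₀ le_rfl).bound_nonneg hr₀.le (hs.height_lt hα hK.le hr₀ le_rfl)
  rcases hN.eq_or_lt with rfl | hN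
  · refine ⟨0, rfl, by simp, fun r hr hrr₀ x hx => ?_⟩
    simpa [affineMulCoord] using (H r hr hrr₀).bound x hx
  obtain ⟨b, hbl, hb, hv⟩ := ApproxAtScales.exists_limit (A := 8 * dataConst ι α K θ r₀ * N)
    ((ApproxAtScales.of_forall_pos (fun ε hε => (ApproxAtScales.of_decay hs hε hdecay).iterate hs hα
      hK hε.le (by positivity) hN H) hs).mono le_rfl hθ hr₀ (by linarith))
    hs hα hK.le (by positivity) H
  refine ⟨b, hbl, fun i => (hb i).trans ?_, fun r hr hrr₀ x hx => ?_⟩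
  · rw [expansionConst, add_mul]
    exact le_add_of_le_of_nonneg (by apply le_of_eq; ring) (by positivity)
  obtain ⟨k, hk, hk'⟩ := exists_scale_near hθ hs.ratio_lt_one hr hrr₀
  have := hs.scale_pos k
  refine (hv k x ⟨hx.1, closedBall_subset_closedBall hk hx.2⟩).trans ?_
  calc _ ≤ 8 * dataConst ι α K θ r₀ * N * (1 + 4 * card ι / θ ^ 2) *
          ((r / θ) ^ 2 * (r / θ) ^ α) := by gcongr
    _ = 8 * dataConst ι α K θ r₀ * (1 + 4 * card ι / θ ^ 2) / (θ ^ 2 * θ ^ α) * N *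
          (r ^ 2 * r ^ α) := by
        rw [Real.div_rpow hr.le hθ.le]
        field_simp
    _ ≤ _ := by
        rw [expansionConst]
        gcongr
        exact le_add_of_nonneg_left (by positivity)

/-! ### Classical Laplacians -/

theorem tendsto_symmetric_slope {φ : ℝ → ℝ} {L : ℝ} (hφ : HasDerivAt φ L 0) :
    Tendsto (fun t => (φ t - φ (-t)) / (2 * t)) (𝓝[>] 0) (𝓝 L) := by
  have hneg : HasDerivAt (fun t => φ (-t)) (L * -1) 0 :=
    HasDerivAt.comp (0 : ℝ) (by simpa using hφ) (hasDerivAt_neg 0)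
  have hodd := ((hφ.sub hneg).div_const 2).tendsto_slope_zero_right
  rw [show (L - L * -1) / 2 = L by ring] at hodd
  refine hodd.congr fun t => ?_
  simp only [Pi.sub_apply, zero_add, neg_zero, smul_eq_mul]
  ring

theorem tendsto_second_difference_quotient {φ φ' : ℝ → ℝ} {L : ℝ}
    (hφ : ∀ᶠ t in 𝓝 0, HasDerivAt φ (φ' t) t) (hφ' : HasDerivAt φ' L 0) :
    Tendsto (fun t => (φ t + φ (-t) - 2 * φ 0) / t ^ 2) (𝓝[>] 0) (𝓝 L) := by
  have hneg : Tendsto (fun t : ℝ => -t) (𝓝 0) (𝓝 0) := by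
    simpa using (continuous_neg (G := ℝ)).tendsto 0
  have hcont : Tendsto φ (𝓝 0) (𝓝 (φ 0)) := hφ.self_of_nhds.continuousAt
  refine HasDerivAt.lhopital_zero_nhdsGT (f' := fun t => φ' t - φ' (-t)) (g' := fun t => 2 * t)
    ?_ ?_ ?_ ?_ ?_ (tendsto_symmetric_slope hφ')
  · refine nhdsWithin_le_nhds ?_
    filter_upwards [hφ, hneg.eventually hφ] with t ht ht'
    exact ((ht.add (ht'.comp t (hasDerivAt_neg t))).sub_const _).congr_deriv (by ring)
  · exact Eventually.of_forall fun t => by simpa using hasDerivAt_pow 2 t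
  · filter_upwards [self_mem_nhdsWithin] with t ht
    exact (mul_pos two_pos ht).ne'
  · refine tendsto_nhdsWithin_of_tendsto_nhds ?_
    have := (hcont.add (hcont.comp hneg)).sub_const (2 * φ 0)
    rwa [← two_mul, sub_self] at this
  · exact tendsto_nhdsWithin_of_tendsto_nhds (by simpa using (continuous_pow (M := ℝ) 2).tendsto 0)

theorem hasLaplacian_of_hasDerivAt {w : (ι → ℝ) → ℝ} {x L : ι → ℝ} {w' : ι → ℝ → ℝ}
    (hw : ∀ i, ∀ᶠ t in 𝓝 0, HasDerivAt (fun t => w (x + Pi.single i t)) (w' i t) t)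
    (hw' : ∀ i, HasDerivAt (w' i) (L i) 0) : HasLaplacian w x (∑ i, L i) := by
  refine tendsto_finsetSum _ fun i _ => ?_
  simpa [sub_eq_add_neg, Pi.single_neg] using tendsto_second_difference_quotient (hw i) (hw' i)

theorem toLp_add_single {n : ℕ} (x : Fin n → ℝ) (i : Fin n) (t : ℝ) :
    (WithLp.toLp 2 (x + Pi.single i t) : En n) =
      WithLp.toLp 2 x + t • EuclideanSpace.single i 1 := by
  ext j
  simp [Pi.single_apply]

theorem hasLaplacian_lapAt {n : ℕ} {u : En n → ℝ} {x : Fin n → ℝ}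
    (hu : ∀ᶠ y in 𝓝 (WithLp.toLp 2 x), DifferentiableAt ℝ u y)
    (hu' : DifferentiableAt ℝ (fderiv ℝ u) (WithLp.toLp 2 x)) :
    HasLaplacian (fun y => u (WithLp.toLp 2 y)) x (lapAt u (WithLp.toLp 2 x)) := by
  have hline (i : Fin n) (t : ℝ) : HasDerivAt
      (fun t => (WithLp.toLp 2 (x + Pi.single i t) : En n)) (EuclideanSpace.single i 1) t := by
    simp only [toLp_add_single]
    simpa using ((hasDerivAt_id t).smul_const (EuclideanSpace.single i (1 : ℝ))).const_add
      (WithLp.toLp 2 x : En n)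
  have hzero (i : Fin n) : (WithLp.toLp 2 (x + Pi.single i 0) : En n) = WithLp.toLp 2 x := by
    rw [Pi.single_zero, add_zero]
  refine hasLaplacian_of_hasDerivAt (w' := fun i t =>
    fderiv ℝ u (WithLp.toLp 2 (x + Pi.single i t)) (EuclideanSpace.single i 1)) (fun i => ?_)
    fun i => ?_
  · have hmem := (hline i 0).continuousAt.tendsto
    rw [hzero] at hmem
    filter_upwards [hmem.eventually hu] with t ht
    exact ht.hasFDerivAt.comp_hasDerivAt t (hline i t)
  · have hD : HasFDerivAt (fderiv ℝ u) (fderiv ℝ (fderiv ℝ u) (WithLp.toLp 2 x))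
        (WithLp.toLp 2 (x + Pi.single i 0)) := by
      rw [hzero]; exact hu'.hasFDerivAt
    exact (ContinuousLinearMap.apply ℝ ℝ (EuclideanSpace.single i (1 : ℝ))).hasFDerivAt
      |>.comp_hasDerivAt 0 (hD.comp_hasDerivAt 0 (hline i 0))

theorem hasDerivAt_eval_add_single {ι : Type*} [DecidableEq ι] (P : MvPolynomial ι ℝ)
    (x : ι → ℝ) (i : ι) (t : ℝ) :
    HasDerivAt (fun t => eval (x + Pi.single i t) P) (eval (x + Pi.single i t) (pderiv i P)) t := by
  induction P using MvPolynomial.induction_on with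
  | C a => simpa using hasDerivAt_const t a
  | add p q hp hq =>
    simp only [map_add]
    exact hp.add hq
  | mul_X p j hp =>
    have hj : HasDerivAt (fun t => eval (x + Pi.single i t) (X j))
        (eval (x + Pi.single i t) (pderiv i (X j))) t := by
      rcases eq_or_ne j i with rfl | hj
      · simpa using (hasDerivAt_id t).const_add (x j)
      · simpa [hj, pderiv_X_of_ne hj] using hasDerivAt_const t (x j)
    simp only [map_mul, pderiv_mul, map_add]
    exact hp.mul hj

theorem hasLaplacian_peval {n : ℕ} (P : MvPolynomial (Fin n) ℝ) (x : Fin n → ℝ) :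
    HasLaplacian (fun y => peval P (WithLp.toLp 2 y)) x (peval (plap P) (WithLp.toLp 2 x)) := by
  have h := hasLaplacian_of_hasDerivAt (w := fun y => eval y P) (x := x)
    (fun i => Eventually.of_forall (hasDerivAt_eval_add_single P x i))
    fun i => hasDerivAt_eval_add_single (pderiv i P) x i 0
  simpa [peval, plap] using h

/-! ### Polynomials -/

section Polynomial

variable {n : ℕ}

theorem pnorm_nonneg (P : MvPolynomial (Fin n) ℝ) : 0 ≤ pnorm P :=
  Finset.sum_nonneg fun _ _ => by positivity

theorem one_le_mfact (d : Fin n →₀ ℕ) : (1 : ℝ) ≤ mfact d := by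
  exact_mod_cast Nat.one_le_iff_ne_zero.2
    (Finset.prod_ne_zero_iff.2 fun _ _ => Nat.factorial_ne_zero _)

theorem pnorm_eq_sum (P : MvPolynomial (Fin n) ℝ) {S : Finset (Fin n →₀ ℕ)} (h : P.support ⊆ S) :
    pnorm P = ∑ d ∈ S, (mfact d : ℝ) * |coeff d P| :=
  Finset.sum_subset h fun d _ hd => by rw [notMem_support_iff.1 hd, abs_zero, mul_zero]

theorem sum_mfact_mul_abs_coeff_le_pnorm (P : MvPolynomial (Fin n) ℝ)
    (S : Finset (Fin n →₀ ℕ)) : ∑ d ∈ S, (mfact d : ℝ) * |coeff d P| ≤ pnorm P := by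
  classical
  rw [pnorm_eq_sum P (Finset.subset_union_right : P.support ⊆ S ∪ P.support)]
  exact Finset.sum_le_sum_of_subset_of_nonneg Finset.subset_union_left fun _ _ _ => by positivity

theorem abs_coeff_le_pnorm (P : MvPolynomial (Fin n) ℝ) (d : Fin n →₀ ℕ) :
    |coeff d P| ≤ pnorm P := by
  refine (le_mul_of_one_le_left (abs_nonneg _) (one_le_mfact d)).trans ?_
  simpa using sum_mfact_mul_abs_coeff_le_pnorm P {d}

theorem sum_abs_coeff_le_pnorm (P : MvPolynomial (Fin n) ℝ) :
    ∑ d ∈ P.support, |coeff d P| ≤ pnorm P :=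
  Finset.sum_le_sum fun d _ => le_mul_of_one_le_left (abs_nonneg _) (one_le_mfact d)

theorem pnorm_mono {P Q : MvPolynomial (Fin n) ℝ} (h : ∀ d, |coeff d P| ≤ |coeff d Q|) :
    pnorm P ≤ pnorm Q :=
  (Finset.sum_le_sum fun d _ => mul_le_mul_of_nonneg_left (h d) (by positivity)).trans
    (sum_mfact_mul_abs_coeff_le_pnorm Q P.support)

theorem pnorm_add_le (P Q : MvPolynomial (Fin n) ℝ) : pnorm (P + Q) ≤ pnorm P + pnorm Q := by
  refine le_trans ?_ (add_le_add (sum_mfact_mul_abs_coeff_le_pnorm P (P + Q).support)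
    (sum_mfact_mul_abs_coeff_le_pnorm Q (P + Q).support))
  rw [pnorm, ← Finset.sum_add_distrib]
  refine Finset.sum_le_sum fun d _ => ?_
  rw [coeff_add, ← mul_add]
  gcongr
  exact abs_add_le _ _

theorem pnorm_sum_le {κ : Type*} (S : Finset κ) (p : κ → MvPolynomial (Fin n) ℝ) :
    pnorm (∑ d ∈ S, p d) ≤ ∑ d ∈ S, pnorm (p d) :=
  Finset.le_sum_of_subadditive pnorm (by simp [pnorm]) pnorm_add_le S p

theorem derivNorm_le_pnorm (i : ℕ) (P : MvPolynomial (Fin n) ℝ) : derivNorm i P ≤ pnorm P := by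
  refine Real.sqrt_le_iff.2 ⟨pnorm_nonneg P, ?_⟩
  calc _ ≤ ∑ d ∈ P.support, ((mfact d : ℝ) * coeff d P) ^ 2 :=
        Finset.sum_le_sum_of_subset_of_nonneg (Finset.filter_subset _ _) fun _ _ _ => sq_nonneg _
    _ = ∑ d ∈ P.support, ((mfact d : ℝ) * |coeff d P|) ^ 2 :=
        Finset.sum_congr rfl fun d _ => by rw [mul_pow, mul_pow, sq_abs]
    _ ≤ _ := Finset.sum_sq_le_sq_sum_of_nonneg fun _ _ => by positivity

theorem continuous_peval (P : MvPolynomial (Fin n) ℝ) : Continuous (peval P) :=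
  (MvPolynomial.continuous_eval P).comp (by fun_prop)

theorem peval_zero_right (P : MvPolynomial (Fin n) ℝ) : peval P 0 = coeff 0 P := by
  simp [peval, constantCoeff_eq]

theorem isHomogeneous_two_of_coeff_eq_zero {P : MvPolynomial (Fin n) ℝ} (h₂ : P.totalDegree ≤ 2)
    (h₀ : coeff 0 P = 0) (h₁ : ∀ i, coeff (Finsupp.single i 1) P = 0) : P.IsHomogeneous 2 := by
  intro d hd
  have hle : d.degree ≤ 2 := (le_totalDegree (mem_support_iff.2 hd)).trans h₂
  have hne₀ : d.degree ≠ 0 := fun h => hd (by rw [(Finsupp.degree_eq_zero_iff d).1 h, h₀])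
  have hne₁ : d.degree ≠ 1 := fun h => by
    obtain ⟨i, rfl⟩ := (Finsupp.sum_eq_one_iff d).1 h
    exact hd (h₁ i)
  change Finsupp.weight (fun _ => 1) d = 2
  rw [← Finsupp.degree_eq_weight_one]
  omega

theorem plap_add (P Q : MvPolynomial (Fin n) ℝ) : plap (P + Q) = plap P + plap Q := by
  simp [plap, Finset.sum_add_distrib]

theorem plap_eq_C {P : MvPolynomial (Fin n) ℝ} (hP : P.IsHomogeneous 2) :
    plap P = C (coeff 0 (plap P)) := by
  refine totalDegree_eq_zero_iff_eq_C.1 ((totalDegree_zero_iff_isHomogeneous _).2 ?_)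
  exact IsHomogeneous.sum _ _ 0 fun i _ => hP.pderiv.pderiv

theorem abs_coeff_zero_plap_le (P : MvPolynomial (Fin n) ℝ) : |coeff 0 (plap P)| ≤ pnorm P := by
  have hcoeff (i : Fin n) : |coeff 0 (pderiv i (pderiv i P))| =
      mfact (Finsupp.single i 2) * |coeff (Finsupp.single i 2) P| := by
    rw [coeff_pderiv, coeff_pderiv, zero_add, ← Finsupp.single_add, mfact,
      Finsupp.prod_single_index rfl]
    norm_num [abs_mul, mul_comm]
  calc |coeff 0 (plap P)| ≤ ∑ i, |coeff 0 (pderiv i (pderiv i P))| := by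
        rw [plap, coeff_sum]
        exact Finset.abs_sum_le_sum_abs _ _
    _ = ∑ d ∈ Finset.univ.map ⟨_, Finsupp.single_left_injective (two_ne_zero (α := ℕ))⟩,
          mfact d * |coeff d P| := by
        simp [hcoeff]
    _ ≤ pnorm P := sum_mfact_mul_abs_coeff_le_pnorm P _

theorem abs_prod_pow_le {x : Fin n → ℝ} {r : ℝ} (d : Fin n →₀ ℕ) (hx : ∀ i, |x i| ≤ r) :
    |∏ i, x i ^ d i| ≤ r ^ d.degree := by
  rw [Finset.abs_prod, Finsupp.degree_eq_sum, ← Finset.prod_pow_eq_pow_sum]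
  refine Finset.prod_le_prod (fun _ _ => abs_nonneg _) fun i _ => ?_
  rw [abs_pow]
  exact pow_le_pow_left₀ (abs_nonneg _) (hx i) _

theorem abs_sum_coeff_mul_le_pnorm_mul (P : MvPolynomial (Fin n) ℝ) {m : (Fin n →₀ ℕ) → ℝ}
    {B : ℝ} (hB : 0 ≤ B) (hm : ∀ d ∈ P.support, |m d| ≤ B) :
    |∑ d ∈ P.support, coeff d P * m d| ≤ pnorm P * B := by
  calc _ ≤ ∑ d ∈ P.support, |coeff d P| * B :=
        (Finset.abs_sum_le_sum_abs _ _).trans <| Finset.sum_le_sum fun d hd => by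
          rw [abs_mul]
          exact mul_le_mul_of_nonneg_left (hm d hd) (abs_nonneg _)
    _ ≤ _ := by
        rw [← Finset.sum_mul]
        exact mul_le_mul_of_nonneg_right (sum_abs_coeff_le_pnorm P) hB

theorem abs_peval_le {P : MvPolynomial (Fin n) ℝ} {k : ℕ} (hP : P.IsHomogeneous k) {x : En n}
    {r : ℝ} (hr : 0 ≤ r) (hx : ∀ i, |x i| ≤ r) : |peval P x| ≤ pnorm P * r ^ k := by
  rw [peval, eval_eq']
  refine abs_sum_coeff_mul_le_pnorm_mul P (by positivity) fun d hd => ?_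
  exact hP.degree_eq_sum_deg_support hd ▸ abs_prod_pow_le d hx

end Polynomial

section SubstLast

theorem peval_substLast_zero (P : MvPolynomial (Fin n) ℝ) (x : En n) :
    peval (substLast 0 P) x = eval (update x (lastIdx n) 0) P := by
  induction P using MvPolynomial.induction_on with
  | C a => simp [peval, substLast]
  | add p q hp hq => simpa [peval, substLast] using congrArg₂ (· + ·) hp hq
  | mul_X p j hp =>
    simp only [peval, substLast] at hp
    simp only [peval, substLast, map_mul, hp, aeval_X, eval_X]
    split_ifs with hj <;> simp [hj]

theorem substLast_add (q P Q : MvPolynomial (Fin n) ℝ) :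
    substLast q (P + Q) = substLast q P + substLast q Q := by
  simp [substLast]

theorem coeff_substLast_zero (P : MvPolynomial (Fin n) ℝ) (d : Fin n →₀ ℕ) :
    coeff d (substLast 0 P) = if d (lastIdx n) = 0 then coeff d P else 0 := by
  classical
  induction P using MvPolynomial.induction_on generalizing d with
  | C a =>
    rw [substLast, aeval_C, algebraMap_eq, coeff_C]
    rcases eq_or_ne 0 d with rfl | hd
    · simp
    · simp [hd]
  | add p q hp hq =>
    rw [substLast_add, coeff_add, hp, hq, coeff_add]
    split_ifs <;> simp
  | mul_X p j hp =>
    have hmul : substLast 0 (p * X j) = substLast 0 p * if j = lastIdx n then 0 else X j := by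
      simp [substLast]
    rw [hmul, coeff_mul_X']
    rcases eq_or_ne j (lastIdx n) with rfl | hj
    · simp_all
    · simp only [if_neg hj, coeff_mul_X', hp]
      split_ifs <;> simp_all

theorem substLast_zero_substLast_zero (P : MvPolynomial (Fin n) ℝ) :
    substLast 0 (substLast 0 P) = substLast 0 P := by
  ext d
  simp only [coeff_substLast_zero]
  split_ifs <;> rfl

theorem pnorm_substLast_zero_le (P : MvPolynomial (Fin n) ℝ) : pnorm (substLast 0 P) ≤ pnorm P := by
  refine pnorm_mono fun d => ?_
  rw [coeff_substLast_zero]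
  split_ifs
  · exact le_rfl
  · simp

theorem isHomogeneous_substLast_zero {P : MvPolynomial (Fin n) ℝ} {k : ℕ} (hP : P.IsHomogeneous k) :
    (substLast 0 P).IsHomogeneous k := by
  have hsubst (i : Fin n) :
      (if i = lastIdx n then 0 else X i : MvPolynomial (Fin n) ℝ).IsHomogeneous 1 := by
    split_ifs
    exacts [isHomogeneous_zero _ _ _, isHomogeneous_X _ _]
  exact one_mul k ▸ hP.aeval _ hsubst

theorem abs_prod_pow_le_of_apply_ne_zero {n k : ℕ} {d : Fin n →₀ ℕ} {l : Fin n} (hd : d l ≠ 0)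
    (hk : d.degree = k + 1) {x : Fin n → ℝ} {r h : ℝ} (hx : ∀ i, |x i| ≤ r) (hxl : |x l| ≤ h) :
    |∏ i, x i ^ d i| ≤ r ^ k * h := by
  obtain ⟨e, rfl⟩ : ∃ e, d = e + Finsupp.single l 1 :=
    ⟨d - Finsupp.single l 1, (tsub_add_cancel_of_le (by simpa [Nat.one_le_iff_ne_zero])).symm⟩
  have hr : 0 ≤ r := (abs_nonneg _).trans (hx l)
  have hprod : ∏ i, x i ^ (e + Finsupp.single l 1 : Fin n →₀ ℕ) i = (∏ i, x i ^ e i) * x l := by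
    simp only [Finsupp.add_apply, pow_add, Finset.prod_mul_distrib, Finsupp.single_apply]
    rw [Finset.prod_pow_boole, if_pos (Finset.mem_univ l)]
  obtain rfl : e.degree = k := by simpa using hk
  rw [hprod, abs_mul]
  exact mul_le_mul (abs_prod_pow_le e hx) hxl (abs_nonneg _) (by positivity)

theorem abs_peval_sub_peval_substLast_zero_le {P : MvPolynomial (Fin n) ℝ} {k : ℕ}
    (hP : P.IsHomogeneous (k + 1)) {x : En n} {r h : ℝ} (hx : ∀ i, |x i| ≤ r)
    (hxl : |x (lastIdx n)| ≤ h) :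
    |peval P x - peval (substLast 0 P) x| ≤ pnorm P * (r ^ k * h) := by
  have hr : 0 ≤ r := (abs_nonneg _).trans (hx (lastIdx n))
  have hh : 0 ≤ h := (abs_nonneg _).trans hxl
  rw [peval_substLast_zero, peval, eval_eq', eval_eq', ← Finset.sum_sub_distrib]
  simp only [← mul_sub]
  refine abs_sum_coeff_mul_le_pnorm_mul P (by positivity) fun d hd => ?_
  by_cases hdl : d (lastIdx n) = 0
  · have heq : ∏ i, x i ^ d i = ∏ i, update (⇑x) (lastIdx n) 0 i ^ d i := by
      refine Finset.prod_congr rfl fun i _ => ?_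
      rcases eq_or_ne i (lastIdx n) with rfl | hi
      · rw [hdl, pow_zero, pow_zero]
      · rw [update_of_ne hi]
    rw [heq, sub_self, abs_zero]
    positivity
  · rw [Finset.prod_eq_zero (i := lastIdx n) (f := fun i => update (⇑x) (lastIdx n) 0 i ^ d i)
      (Finset.mem_univ _) (by simp [hdl]), sub_zero]
    exact abs_prod_pow_le_of_apply_ne_zero hdl (hP.degree_eq_sum_deg_support hd).symm hx hxl

end SubstLast

/-- The homogeneous quadratic polynomial `(∑ᵢ bᵢ xᵢ) xₙ`, which vanishes on `{xₙ = 0}`. -/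
def linearMulLast (b : Fin n → ℝ) : MvPolynomial (Fin n) ℝ := (∑ i, C (b i) * X i) * X (lastIdx n)

section LinearMulLast

variable (b : Fin n → ℝ)

theorem isHomogeneous_linearMulLast : (linearMulLast b).IsHomogeneous 2 :=
  (IsHomogeneous.sum _ _ 1 fun i _ => isHomogeneous_C_mul_X (b i) i).mul (isHomogeneous_X ℝ _)

theorem substLast_zero_linearMulLast : substLast 0 (linearMulLast b) = 0 := by
  simp [substLast, linearMulLast]

theorem plap_linearMulLast : plap (linearMulLast b) = C (2 * b (lastIdx n)) := by
  have hlinear (i : Fin n) : pderiv i (∑ j, C (b j) * X j) = C (b i) := by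
    simp [pderiv_X, Pi.single_apply]
  simp only [plap, linearMulLast, pderiv_mul, hlinear, map_add, pderiv_C, zero_mul, zero_add]
  rw [Finset.sum_eq_single (lastIdx n)]
  · simp [two_mul]
  · intro i _ hi
    simp [pderiv_X_of_ne hi.symm]
  · simp

theorem peval_linearMulLast (x : En n) :
    peval (linearMulLast b) x = affineMulCoord (lastIdx n) 0 b x := by
  simp [peval, linearMulLast, affineMulCoord]

theorem mfact_single_add_single_le {n : ℕ} (i j : Fin n) :
    mfact (Finsupp.single i 1 + Finsupp.single j 1) ≤ 2 := by
  rcases eq_or_ne i j with rfl | hij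
  · rw [mfact, ← Finsupp.single_add, Finsupp.prod_single_index rfl]
    rfl
  · rw [mfact, Finsupp.prod_add_index_of_disjoint
      ((Finsupp.support_single_disjoint one_ne_zero one_ne_zero).2 hij),
      Finsupp.prod_single_index rfl, Finsupp.prod_single_index rfl]
    simp

theorem pnorm_linearMulLast_le : pnorm (linearMulLast b) ≤ 2 * ∑ i, |b i| := by
  rw [linearMulLast, Finset.sum_mul, Finset.mul_sum]
  refine (pnorm_sum_le _ _).trans (Finset.sum_le_sum fun i _ => ?_)
  rw [C_mul_X_eq_monomial, X, monomial_mul, mul_one, pnorm_eq_sum _ support_monomial_subset,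
    Finset.sum_singleton, coeff_monomial, if_pos rfl]
  gcongr
  exact_mod_cast mfact_single_add_single_le i _

end LinearMulLast

/-- The homogeneous quadratic polynomial with Laplacian `f₀` that agrees with `G` on `{xₙ = 0}`
and has no mixed terms `xᵢ xₙ`. -/
def dirichletQuadratic (G : MvPolynomial (Fin n) ℝ) (f₀ : ℝ) : MvPolynomial (Fin n) ℝ :=
  substLast 0 G + linearMulLast (Pi.single (lastIdx n) ((f₀ - coeff 0 (plap (substLast 0 G))) / 2))

section DirichletQuadratic

variable {G : MvPolynomial (Fin n) ℝ} {f₀ : ℝ}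

theorem isHomogeneous_dirichletQuadratic (hG : G.IsHomogeneous 2) :
    (dirichletQuadratic G f₀).IsHomogeneous 2 :=
  (isHomogeneous_substLast_zero hG).add (isHomogeneous_linearMulLast _)

theorem plap_dirichletQuadratic (hG : G.IsHomogeneous 2) :
    plap (dirichletQuadratic G f₀) = C f₀ := by
  rw [dirichletQuadratic, plap_add, plap_linearMulLast, plap_eq_C (isHomogeneous_substLast_zero hG),
    coeff_C, if_pos rfl, ← C_add, Pi.single_eq_same]
  ring_nf

theorem substLast_zero_dirichletQuadratic :
    substLast 0 (dirichletQuadratic G f₀) = substLast 0 G := by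
  rw [dirichletQuadratic, substLast_add, substLast_zero_substLast_zero,
    substLast_zero_linearMulLast, add_zero]

theorem abs_sub_coeff_zero_plap_le (G : MvPolynomial (Fin n) ℝ) (f₀ : ℝ) :
    |f₀ - coeff 0 (plap (substLast 0 G))| ≤ pnorm G + |f₀| := by
  have := (abs_coeff_zero_plap_le _).trans (pnorm_substLast_zero_le G)
  linarith [abs_sub f₀ (coeff 0 (plap (substLast 0 G)))]

theorem pnorm_dirichletQuadratic_le (G : MvPolynomial (Fin n) ℝ) (f₀ : ℝ) :
    pnorm (dirichletQuadratic G f₀) ≤ 2 * pnorm G + |f₀| := by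
  have hsum (c : ℝ) : ∑ i, |(Pi.single (lastIdx n) c : Fin n → ℝ) i| = |c| := by
    simp [Pi.single_apply, apply_ite abs]
  have hlast := pnorm_linearMulLast_le
    (Pi.single (lastIdx n) ((f₀ - coeff 0 (plap (substLast 0 G))) / 2))
  rw [hsum, abs_div, abs_two, mul_div_cancel₀ _ two_ne_zero] at hlast
  rw [dirichletQuadratic]
  refine (pnorm_add_le _ _).trans ?_
  linarith [pnorm_substLast_zero_le G, abs_sub_coeff_zero_plap_le G f₀]

theorem abs_peval_sub_dirichletQuadratic_le (hG : G.IsHomogeneous 2) {x : En n} {r h : ℝ}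
    (hx : ∀ i, |x i| ≤ r) (hxl : |x (lastIdx n)| ≤ h) :
    |peval G x - peval (dirichletQuadratic G f₀) x| ≤ (2 * pnorm G + |f₀|) * (r * h) := by
  have hr : 0 ≤ r := (abs_nonneg _).trans (hx (lastIdx n))
  set c := f₀ - coeff 0 (plap (substLast 0 G)) with hc
  have hsplit : peval (dirichletQuadratic G f₀) x =
      peval (substLast 0 G) x + c / 2 * (x (lastIdx n) * x (lastIdx n)) := by
    simp [dirichletQuadratic, peval, linearMulLast, Pi.single_apply, mul_assoc, hc]
  have hflat := abs_peval_sub_peval_substLast_zero_le (k := 1) hG hx hxl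
  have hlast : |c / 2 * (x (lastIdx n) * x (lastIdx n))| ≤ (pnorm G + |f₀|) * (r * h) := by
    rw [abs_mul, abs_mul]
    have hc2 : |c / 2| ≤ pnorm G + |f₀| := by
      rw [abs_div, abs_two]
      linarith [abs_sub_coeff_zero_plap_le G f₀, abs_nonneg c]
    gcongr
    · exact (abs_nonneg _).trans hc2
    · exact hx _
  rw [hsplit, ← sub_sub]
  linarith [abs_sub (peval G x - peval (substLast 0 G) x)
    (c / 2 * (x (lastIdx n) * x (lastIdx n)))]

end DirichletQuadratic

/-! ### Transport to Euclidean space -/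

theorem norm_toLp_two_le {n : ℕ} {x : Fin n → ℝ} {r : ℝ} (hx : ‖x‖ ≤ r) :
    ‖(WithLp.toLp 2 x : En n)‖ ≤ n * r := by
  have hr : 0 ≤ r := (norm_nonneg x).trans hx
  rw [EuclideanSpace.norm_eq]
  refine Real.sqrt_le_iff.2 ⟨by positivity, ?_⟩
  calc ∑ i, ‖x i‖ ^ 2 ≤ ∑ _i : Fin n, r ^ 2 := by
        gcongr with i
        exact (norm_le_pi_norm x i).trans hx
    _ = n * r ^ 2 := by simp
    _ ≤ (n : ℝ) ^ 2 * r ^ 2 := by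
        gcongr
        exact_mod_cast Nat.le_self_pow two_ne_zero n
    _ = (n * r) ^ 2 := by ring

theorem toLp_mem_ball {n : ℕ} {x : Fin n → ℝ} {r : ℝ} (hnr : n * r < 1) (hx : ‖x‖ ≤ r) :
    (WithLp.toLp 2 x : En n) ∈ ball 0 1 :=
  mem_ball_zero_iff.2 ((norm_toLp_two_le hx).trans_lt hnr)

theorem mem_closure_preimage_toLp {n : ℕ} {Ω : Set (En n)} {x : Fin n → ℝ} :
    x ∈ closure (WithLp.toLp 2 ⁻¹' Ω) ↔ (WithLp.toLp 2 x : En n) ∈ closure Ω :=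
  (Set.ext_iff.1 ((PiLp.homeomorph 2 fun _ : Fin n => ℝ).symm.preimage_closure Ω) x).symm

theorem xpn_le_norm (x : En n) : xpn x ≤ ‖x‖ := by
  rw [EuclideanSpace.norm_eq, xpn]
  simp only [Real.norm_eq_abs, sq_abs]
  exact Real.sqrt_le_sqrt <| Finset.sum_le_sum_of_subset_of_nonneg (Finset.erase_subset _ _)
    fun _ _ _ => sq_nonneg _

theorem continuous_xpn : Continuous (xpn : En n → ℝ) := by
  unfold xpn
  fun_prop

theorem le_of_mem_closure_inter {E : Type*} [TopologicalSpace E] {s U : Set E} (hU : IsOpen U)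
    {φ ψ : E → ℝ} (hφ : ContinuousOn φ (closure s ∩ U)) (hψ : ContinuousOn ψ (closure s ∩ U))
    (h : ∀ x ∈ s ∩ U, φ x ≤ ψ x) {x : E} (hx : x ∈ closure s ∩ U) : φ x ≤ ψ x :=
  have hs : s ∩ U ⊆ closure s ∩ U := inter_subset_inter_left _ subset_closure
  ContinuousWithinAt.closure_le (hU.closure_inter hx) ((hφ x hx).mono hs) ((hψ x hx).mono hs) h

theorem rpow_natCast_add_le {c r y α : ℝ} (k : ℕ) (hc : 1 ≤ c) (hr : 0 < r) (hα : 0 ≤ α)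
    (hα₁ : α ≤ 1) (hy : 0 ≤ y) (hyc : y ≤ c * r) :
    y ^ ((k : ℝ) + α) ≤ c ^ (k + 1) * (r ^ k * r ^ α) := by
  calc y ^ ((k : ℝ) + α) ≤ (c * r) ^ ((k : ℝ) + α) := by gcongr
    _ = c ^ ((k : ℝ) + α) * (r ^ k * r ^ α) := by
        rw [Real.mul_rpow (by positivity) hr.le, Real.rpow_add hr, Real.rpow_natCast]
    _ ≤ c ^ (((k + 1 : ℕ)) : ℝ) * (r ^ k * r ^ α) := by
        gcongr
        push_cast
        linarith
    _ = c ^ (k + 1) * (r ^ k * r ^ α) := by rw [Real.rpow_natCast]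

theorem domain1α_mono {α K K' : ℝ} {Ω : Set (En n)} (h : K ≤ K') (hΩ : Domain1α α K Ω) :
    Domain1α α K' Ω := by
  have hle (x : En n) : K * xpn x ^ (1 + α) ≤ K' * xpn x ^ (1 + α) :=
    mul_le_mul_of_nonneg_right h (Real.rpow_nonneg (Real.sqrt_nonneg _) _)
  exact ⟨fun x hx hgt => hΩ.1 x hx ((hle x).trans_lt hgt),
    fun x hx hlt => hΩ.2 x hx (hlt.trans_le (neg_le_neg (hle x)))⟩

theorem neg_mul_xpn_rpow_le_xn {α K : ℝ} (hα : 0 ≤ α) {Ω : Set (En n)} (hΩ : Domain1α α K Ω)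
    {x : En n} (hx : x ∈ closure Ω ∩ ball 0 1) : -(K * xpn x ^ (1 + α)) ≤ xn x := by
  refine le_of_mem_closure_inter (φ := fun y => -(K * xpn y ^ (1 + α))) (ψ := xn) isOpen_ball
    (Continuous.continuousOn ?_) (Continuous.continuousOn ?_) (fun y hy => ?_) hx
  · exact (continuous_const.mul (continuous_xpn.rpow_const fun _ => Or.inr (by positivity))).neg
  · unfold xn
    fun_prop
  · by_contra! hlt
    exact hΩ.2 y (mem_ball_zero_iff.1 hy.2) hlt hy.1

theorem mul_xpn_toLp_rpow_le {α K r : ℝ} (hα : 0 ≤ α) (hα₁ : α ≤ 1) (hK : 0 ≤ K) (hr : 0 < r)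
    {x : Fin n → ℝ} (hx : ‖x‖ ≤ r) :
    K * xpn (WithLp.toLp 2 x : En n) ^ (1 + α) ≤ K * n ^ 2 * r * r ^ α := by
  have hn : (1 : ℝ) ≤ n := by exact_mod_cast NeZero.one_le
  have hpow := rpow_natCast_add_le 1 hn hr hα hα₁ (Real.sqrt_nonneg _)
    ((xpn_le_norm (WithLp.toLp 2 x : En n)).trans (norm_toLp_two_le hx))
  rw [Nat.cast_one, pow_one] at hpow
  calc _ ≤ K * (n ^ (1 + 1) * (r * r ^ α)) := by gcongr; exact hpow
    _ = K * n ^ 2 * r * r ^ α := by ring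

/-- The data of the Dirichlet problem at a boundary point, normalised by one constant `N`: `u` is
bounded by `N`, its Laplacian is `N |x|^α`-close to `f₀`, and on `∂Ω` it is `N |x|^{2+α}`-close to
the homogeneous quadratic polynomial `G`; `K` is the `C^{1,α}` constant of `∂Ω`. -/
structure DirichletData (α K N : ℝ) (Ω : Set (En n)) (u : En n → ℝ) (G : MvPolynomial (Fin n) ℝ)
    (f₀ : ℝ) : Prop where
  isOpen : IsOpen Ω
  zero_mem_frontier : (0 : En n) ∈ frontier Ω
  domain : Domain1α α K Ω
  continuousOn : ContinuousOn u (closure Ω ∩ ball 0 1)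
  differentiableAt : ∀ x ∈ Ω ∩ ball 0 1, DifferentiableAt ℝ u x
  differentiableAt_fderiv : ∀ x ∈ Ω ∩ ball 0 1, DifferentiableAt ℝ (fderiv ℝ u) x
  abs_lapAt_sub_le : ∀ x ∈ Ω ∩ ball 0 1, |lapAt u x - f₀| ≤ N * ‖x‖ ^ α
  abs_sub_peval_le : ∀ x ∈ frontier Ω ∩ ball 0 1, |u x - peval G x| ≤ N * ‖x‖ ^ (2 + α)
  bound : ∀ x ∈ Ω ∩ ball 0 1, |u x| ≤ N
  isHomogeneous : G.IsHomogeneous 2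
  pnorm_add_abs_le : pnorm G + |f₀| ≤ N

/-- The factor lost in passing from Euclidean balls to the sup-norm balls of `Fin n → ℝ` and from
`u` to `u - dirichletQuadratic G f₀`. -/
def transportConst (n : ℕ) (K : ℝ) : ℝ := n ^ 3 + 2 * (K * n ^ 2) + 3

theorem transportConst_pos (n : ℕ) {K : ℝ} (hK : 0 ≤ K) : 0 < transportConst n K := by
  unfold transportConst
  positivity

namespace DirichletData

variable {α K N r f₀ : ℝ} {Ω : Set (En n)} {u : En n → ℝ} {G : MvPolynomial (Fin n) ℝ}
  {x : Fin n → ℝ}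

theorem nonneg (H : DirichletData α K N Ω u G f₀) : 0 ≤ N :=
  (add_nonneg (pnorm_nonneg G) (abs_nonneg f₀)).trans H.pnorm_add_abs_le

theorem two_mul_pnorm_add_abs_le (H : DirichletData α K N Ω u G f₀) :
    2 * pnorm G + |f₀| ≤ 2 * N := by
  linarith [H.pnorm_add_abs_le, abs_nonneg f₀]

theorem pnorm_dirichletQuadratic_le (H : DirichletData α K N Ω u G f₀) :
    pnorm (dirichletQuadratic G f₀) ≤ 2 * N :=
  (_root_.pnorm_dirichletQuadratic_le G f₀).trans H.two_mul_pnorm_add_abs_le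

theorem abs_dirichletQuadratic_le (H : DirichletData α K N Ω u G f₀) (hx : ‖x‖ ≤ r) :
    |peval (dirichletQuadratic G f₀) (WithLp.toLp 2 x)| ≤ 2 * N * r ^ 2 :=
  (abs_peval_le (isHomogeneous_dirichletQuadratic H.isHomogeneous) ((norm_nonneg x).trans hx)
    (abs_apply_le_of_norm_le hx)).trans <|
    mul_le_mul_of_nonneg_right H.pnorm_dirichletQuadratic_le (sq_nonneg r)

theorem mem_of_lt_apply_last (H : DirichletData α K N Ω u G f₀) (hα : 0 ≤ α) (hα₁ : α ≤ 1)
    (hK : 0 ≤ K) (hr : 0 < r) (hnr : n * r < 1) (hx : ‖x‖ ≤ r)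
    (hxl : K * n ^ 2 * r * r ^ α < x (lastIdx n)) : (WithLp.toLp 2 x : En n) ∈ Ω :=
  H.domain.1 _ (mem_ball_zero_iff.1 (toLp_mem_ball hnr hx))
    ((mul_xpn_toLp_rpow_le hα hα₁ hK hr hx).trans_lt hxl)

theorem neg_le_apply_last (H : DirichletData α K N Ω u G f₀) (hα : 0 ≤ α) (hα₁ : α ≤ 1)
    (hK : 0 ≤ K) (hr : 0 < r) (hnr : n * r < 1) (hx : ‖x‖ ≤ r)
    (hxΩ : (WithLp.toLp 2 x : En n) ∈ closure Ω) :
    -(K * n ^ 2 * r * r ^ α) ≤ x (lastIdx n) :=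
  (neg_le_neg (mul_xpn_toLp_rpow_le hα hα₁ hK hr hx)).trans
    (neg_mul_xpn_rpow_le_xn hα H.domain ⟨hxΩ, toLp_mem_ball hnr hx⟩)

theorem abs_sub_dirichletQuadratic_le (H : DirichletData α K N Ω u G f₀) (hK : 0 ≤ K)
    (hnr : n * r < 1) (hx : ‖x‖ ≤ r) (hxΩ : (WithLp.toLp 2 x : En n) ∈ closure Ω) :
    |u (WithLp.toLp 2 x) - peval (dirichletQuadratic G f₀) (WithLp.toLp 2 x)| ≤
      transportConst n K * N := by
  have hN := H.nonneg
  have hr : 0 ≤ r := (norm_nonneg x).trans hx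
  have hn : (1 : ℝ) ≤ n := by exact_mod_cast NeZero.one_le
  have hr₁ : r ≤ 1 := (le_mul_of_one_le_left hr hn).trans hnr.le
  have hu : |u (WithLp.toLp 2 x)| ≤ N := le_of_mem_closure_inter isOpen_ball H.continuousOn.abs
    continuousOn_const H.bound ⟨hxΩ, toLp_mem_ball hnr hx⟩
  have hQ : |peval (dirichletQuadratic G f₀) (WithLp.toLp 2 x)| ≤ 2 * N * 1 :=
    (H.abs_dirichletQuadratic_le hx).trans (by gcongr; exact pow_le_one₀ hr hr₁)
  calc _ ≤ |u (WithLp.toLp 2 x)| + |peval (dirichletQuadratic G f₀) (WithLp.toLp 2 x)| :=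
        abs_sub _ _
    _ ≤ 3 * N := by linarith
    _ ≤ transportConst n K * N := by
        gcongr
        exact le_add_of_nonneg_left (by positivity)

theorem abs_boundary_sub_dirichletQuadratic_le (H : DirichletData α K N Ω u G f₀) (hα : 0 ≤ α)
    (hα₁ : α ≤ 1) (hK : 0 ≤ K) (hr : 0 < r) (hnr : n * r < 1) (hx : ‖x‖ ≤ r)
    (hxΩ : (WithLp.toLp 2 x : En n) ∈ frontier Ω) :
    |u (WithLp.toLp 2 x) - peval (dirichletQuadratic G f₀) (WithLp.toLp 2 x)| ≤
      transportConst n K * N * (r ^ 2 * r ^ α) := by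
  have hN := H.nonneg
  have hn : (1 : ℝ) ≤ n := by exact_mod_cast NeZero.one_le
  have hpow := rpow_natCast_add_le 2 hn hr hα hα₁ (norm_nonneg _) (norm_toLp_two_le hx)
  rw [Nat.cast_ofNat] at hpow
  have hxl : |x (lastIdx n)| ≤ K * n ^ 2 * r * r ^ α := by
    refine abs_le.2 ⟨H.neg_le_apply_last hα hα₁ hK hr hnr hx (frontier_subset_closure hxΩ), ?_⟩
    by_contra! hlt
    exact (H.isOpen.frontier_eq ▸ hxΩ).2 (H.mem_of_lt_apply_last hα hα₁ hK hr hnr hx hlt)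
  have hG := abs_peval_sub_dirichletQuadratic_le (f₀ := f₀) H.isHomogeneous
    (x := WithLp.toLp 2 x) (abs_apply_le_of_norm_le hx) hxl
  have hu := H.abs_sub_peval_le _ ⟨hxΩ, toLp_mem_ball hnr hx⟩
  calc _ ≤ |u (WithLp.toLp 2 x) - peval G (WithLp.toLp 2 x)| +
        |peval G (WithLp.toLp 2 x) - peval (dirichletQuadratic G f₀) (WithLp.toLp 2 x)| :=
        abs_sub_le _ _ _
    _ ≤ N * (n ^ (2 + 1) * (r ^ 2 * r ^ α)) + 2 * N * (r * (K * n ^ 2 * r * r ^ α)) := by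
        refine add_le_add (hu.trans (by gcongr)) (hG.trans ?_)
        gcongr
        exact H.two_mul_pnorm_add_abs_le
    _ ≤ N * (n ^ (2 + 1) * (r ^ 2 * r ^ α)) + 2 * N * (r * (K * n ^ 2 * r * r ^ α)) +
        3 * N * (r ^ 2 * r ^ α) := le_add_of_nonneg_right (by positivity)
    _ = transportConst n K * N * (r ^ 2 * r ^ α) := by
        rw [transportConst]
        ring

theorem exists_hasLaplacian_sub_dirichletQuadratic (H : DirichletData α K N Ω u G f₀)
    (hα : 0 ≤ α) (hα₁ : α ≤ 1) (hK : 0 ≤ K) (hr : 0 < r) (hnr : n * r < 1) (hx : ‖x‖ ≤ r)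
    (hxΩ : (WithLp.toLp 2 x : En n) ∈ Ω) :
    ∃ L, HasLaplacian (fun y => u (WithLp.toLp 2 y) -
        peval (dirichletQuadratic G f₀) (WithLp.toLp 2 y)) x L ∧
      r ^ 2 * |L| ≤ transportConst n K * N * (r ^ 2 * r ^ α) := by
  have hmem : (WithLp.toLp 2 x : En n) ∈ Ω ∩ ball 0 1 := ⟨hxΩ, toLp_mem_ball hnr hx⟩
  have hdiff : ∀ᶠ y in 𝓝 (WithLp.toLp 2 x : En n), DifferentiableAt ℝ u y :=
    eventually_of_mem ((H.isOpen.inter isOpen_ball).mem_nhds hmem) H.differentiableAt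
  refine ⟨_, (hasLaplacian_lapAt hdiff (H.differentiableAt_fderiv _ hmem)).sub
    (hasLaplacian_peval _ x), ?_⟩
  have hN := H.nonneg
  have hn : (1 : ℝ) ≤ n := by exact_mod_cast NeZero.one_le
  have hpow := rpow_natCast_add_le 0 hn hr hα hα₁ (norm_nonneg _) (norm_toLp_two_le hx)
  simp only [Nat.cast_zero, zero_add, pow_zero, one_mul] at hpow
  have hconst : (n : ℝ) ^ 1 ≤ transportConst n K := by
    have : (n : ℝ) ^ 1 ≤ n ^ 3 := pow_le_pow_right₀ hn (by norm_num)
    have : 0 ≤ K * (n : ℝ) ^ 2 := by positivity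
    rw [transportConst]
    linarith
  rw [plap_dirichletQuadratic H.isHomogeneous, peval, eval_C]
  calc _ ≤ r ^ 2 * (N * (transportConst n K * r ^ α)) := by
        gcongr
        exact (H.abs_lapAt_sub_le _ hmem).trans
          (mul_le_mul_of_nonneg_left (hpow.trans (by gcongr)) hN)
    _ = transportConst n K * N * (r ^ 2 * r ^ α) := by ring

theorem almostHarmonicNearFlat (H : DirichletData α K N Ω u G f₀) (hα : 0 ≤ α) (hα₁ : α ≤ 1)
    (hK : 0 ≤ K) (hr : 0 < r) (hnr : n * r < 1) :
    AlmostHarmonicNearFlat (lastIdx n) (WithLp.toLp 2 ⁻¹' Ω) r (K * n ^ 2 * r * r ^ α)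
      (transportConst n K * N) (transportConst n K * N * (r ^ 2 * r ^ α))
      (fun x => u (WithLp.toLp 2 x) - peval (dirichletQuadratic G f₀) (WithLp.toLp 2 x)) := by
  have htoLp : Continuous (WithLp.toLp 2 : (Fin n → ℝ) → En n) := PiLp.continuous_toLp 2 _
  refine ⟨H.isOpen.preimage htoLp, ?_, ?_, ?_, ?_, ?_, ?_⟩ <;>
    simp only [mem_inter_iff, mem_closure_preimage_toLp, mem_closedBall_zero_iff, and_imp]
  · exact fun x hx hxl => H.mem_of_lt_apply_last hα hα₁ hK hr hnr hx hxl
  · exact fun x hxΩ hx => H.neg_le_apply_last hα hα₁ hK hr hnr hx hxΩ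
  · refine (H.continuousOn.comp htoLp.continuousOn fun x hx => ?_).sub
      ((continuous_peval _).comp htoLp).continuousOn
    exact ⟨mem_closure_preimage_toLp.1 hx.1, toLp_mem_ball hnr (mem_closedBall_zero_iff.1 hx.2)⟩
  · exact fun x hxΩ hx => H.abs_sub_dirichletQuadratic_le hK hnr hx hxΩ
  · intro x hxcl hx hxΩ
    exact H.abs_boundary_sub_dirichletQuadratic_le hα hα₁ hK hr hnr hx
      (H.isOpen.frontier_eq ▸ ⟨hxcl, hxΩ⟩)
  · exact fun x hxΩ hx =>
      H.exists_hasLaplacian_sub_dirichletQuadratic hα hα₁ hK hr hnr hx hxΩ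

theorem abs_sub_dirichletQuadratic_le_rpow (H : DirichletData α K N Ω u G f₀) (hα : 0 ≤ α)
    (hα₁ : α ≤ 1) {Ku : ℝ} (hu : ∀ x ∈ Ω ∩ ball 0 1, |u x| ≤ Ku * ‖x‖ ^ (1 + α)) (hr : 0 < r)
    (hnr : n * r < 1) (hx : ‖x‖ ≤ r) (hxΩ : (WithLp.toLp 2 x : En n) ∈ closure Ω) :
    |u (WithLp.toLp 2 x) - peval (dirichletQuadratic G f₀) (WithLp.toLp 2 x)| ≤
      (|Ku| * n ^ 2 + 2 * N) * (r * r ^ α) := by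
  have hN := H.nonneg
  have hn : (1 : ℝ) ≤ n := by exact_mod_cast NeZero.one_le
  have hpow := rpow_natCast_add_le 1 hn hr hα hα₁ (norm_nonneg _) (norm_toLp_two_le hx)
  rw [Nat.cast_one, pow_one] at hpow
  have hrα : r ≤ r ^ α := by
    simpa using Real.rpow_le_rpow_of_exponent_ge hr
      ((le_mul_of_one_le_left hr.le hn).trans hnr.le) hα₁
  have hu' : |u (WithLp.toLp 2 x)| ≤ Ku * ‖(WithLp.toLp 2 x : En n)‖ ^ (1 + α) :=
    le_of_mem_closure_inter isOpen_ball H.continuousOn.abs (Continuous.continuousOn <|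
      continuous_const.mul (continuous_norm.rpow_const fun _ => Or.inr (by positivity))) hu
      ⟨hxΩ, toLp_mem_ball hnr hx⟩
  calc _ ≤ |u (WithLp.toLp 2 x)| + |peval (dirichletQuadratic G f₀) (WithLp.toLp 2 x)| :=
        abs_sub _ _
    _ ≤ |Ku| * (n ^ (1 + 1) * (r * r ^ α)) + 2 * N * (r * r ^ α) := by
        refine add_le_add (hu'.trans ?_) ((H.abs_dirichletQuadratic_le hx).trans ?_)
        · gcongr
          exact le_abs_self Ku
        · rw [sq]
          gcongr
    _ = (|Ku| * n ^ 2 + 2 * N) * (r * r ^ α) := by ring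

end DirichletData

theorem abs_sub_peval_le_of_le_norm {n : ℕ} {P : MvPolynomial (Fin n) ℝ} (hP : P.IsHomogeneous 2)
    {α a r N A : ℝ} (hα : 0 ≤ α) (hr : 0 < r) (ha : |a| ≤ N) (hA : pnorm P ≤ A * N) {x : En n}
    (hrx : r ≤ ‖x‖) (hx : ‖x‖ ≤ 1) :
    |a - peval P x| ≤ (1 + A) / r ^ (2 + α) * ‖x‖ ^ (2 + α) * N := by
  have hsum : 0 ≤ (1 + A) * N := by linarith [abs_nonneg a, pnorm_nonneg P]
  have hPx : |peval P x| ≤ A * N := by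
    refine (abs_peval_le hP (norm_nonneg x) (PiLp.norm_apply_le x)).trans (le_trans ?_ hA)
    exact mul_le_of_le_one_right (pnorm_nonneg P) (pow_le_one₀ (norm_nonneg x) hx)
  have hratio : 1 ≤ ‖x‖ ^ (2 + α) / r ^ (2 + α) := by
    rw [one_le_div (by positivity)]
    gcongr
  calc |a - peval P x| ≤ (1 + A) * N := by linarith [abs_sub a (peval P x)]
    _ ≤ (1 + A) * N * (‖x‖ ^ (2 + α) / r ^ (2 + α)) := le_mul_of_one_le_right hsum hratio
    _ = (1 + A) / r ^ (2 + α) * ‖x‖ ^ (2 + α) * N := by ring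

theorem abs_sub_peval_le_of_near {n : ℕ} {P : MvPolynomial (Fin n) ℝ} (hP : P.IsHomogeneous 2)
    {α r N A B : ℝ} (hα : 0 ≤ α) (hr : 0 < r) (hA : 0 ≤ A) (hB : 0 ≤ B) {Ω : Set (En n)}
    {u : En n → ℝ} (hu : ∀ x ∈ Ω ∩ ball 0 1, |u x| ≤ N) (hPA : pnorm P ≤ A * N)
    (hnear : ∀ x ∈ Ω, ‖x‖ ≤ r → |u x - peval P x| ≤ B * N * ‖x‖ ^ (2 + α)) :
    ∀ x ∈ Ω ∩ ball 0 1,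
      |u x - peval P x| ≤ (B + (1 + A) / r ^ (2 + α)) * ‖x‖ ^ (2 + α) * N := by
  intro x hx
  have hN : 0 ≤ ‖x‖ ^ (2 + α) * N := mul_nonneg (by positivity) ((abs_nonneg _).trans (hu x hx))
  rcases le_total ‖x‖ r with hle | hge
  · have : 0 ≤ (1 + A) / r ^ (2 + α) * (‖x‖ ^ (2 + α) * N) := by positivity
    linarith [hnear x hx.1 hle]
  · linarith [mul_nonneg hB hN,
      abs_sub_peval_le_of_le_norm hP hα hr (hu x hx) hPA hge (mem_ball_zero_iff.1 hx.2).le]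

namespace DirichletData

variable {α K N f₀ : ℝ} {Ω : Set (En n)} {u : En n → ℝ} {G : MvPolynomial (Fin n) ℝ}

theorem exists_linearMulLast_expansion {θ r₀ Ku : ℝ} (H : DirichletData α K N Ω u G f₀)
    (hα : 0 ≤ α) (hα₁ : α ≤ 1) (hK : 0 < K) (hs : ScaleChoice (Fin n) α (K * n ^ 2) θ r₀)
    (hr₀ : n * r₀ < 1) (hu : ∀ x ∈ Ω ∩ ball 0 1, |u x| ≤ Ku * ‖x‖ ^ (1 + α)) :
    ∃ b : Fin n → ℝ, b (lastIdx n) = 0 ∧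
      (∀ i, |b i| ≤ expansionConst (Fin n) α (K * n ^ 2) θ r₀ * (transportConst n K * N)) ∧
      ∀ x ∈ Ω, ‖x‖ ≤ r₀ → |u x - peval (dirichletQuadratic G f₀ + linearMulLast b) x| ≤
        expansionConst (Fin n) α (K * n ^ 2) θ r₀ * (transportConst n K * N) * ‖x‖ ^ (2 + α) := by
  have hsmall {r : ℝ} (hr : r ≤ r₀) : n * r < 1 := (by gcongr : n * r ≤ n * r₀).trans_lt hr₀
  have hn : (0 : ℝ) < n := by exact_mod_cast NeZero.pos n
  obtain ⟨b, hbl, hb, hexp⟩ := hs.exists_harmonic_quadratic_expansion hα (by positivity)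
    (fun r hr hrr₀ => H.almostHarmonicNearFlat hα hα₁ hK.le hr (hsmall hrr₀))
    (fun r hr hrr₀ x hx => H.abs_sub_dirichletQuadratic_le_rpow hα hα₁ hu hr (hsmall hrr₀)
      (mem_closedBall_zero_iff.1 hx.2) (mem_closure_preimage_toLp.1 hx.1))
  refine ⟨b, hbl, hb, fun x hxΩ hx => ?_⟩
  have hx0 : x ≠ 0 := by
    rintro rfl
    exact (H.isOpen.frontier_eq ▸ H.zero_mem_frontier).2 hxΩ
  have hxpos : 0 < ‖x‖ := norm_pos_iff.2 hx0
  have hsq : ‖x‖ ^ (2 + α) = ‖x‖ ^ 2 * ‖x‖ ^ α := by rw [Real.rpow_add hxpos, Real.rpow_two]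
  have := hexp ‖x‖ hxpos hx x.ofLp ⟨subset_closure hxΩ, mem_closedBall_zero_iff.2
    ((pi_norm_le_iff_of_nonneg hxpos.le).2 (PiLp.norm_apply_le x))⟩
  rwa [WithLp.toLp_ofLp, ← peval_linearMulLast b x, sub_sub, peval, peval, ← map_add,
    ← hsq] at this

theorem pnorm_dirichletQuadratic_add_linearMulLast_le (H : DirichletData α K N Ω u G f₀)
    {b : Fin n → ℝ} {B : ℝ} (hb : ∀ i, |b i| ≤ B * N) :
    pnorm (dirichletQuadratic G f₀ + linearMulLast b) ≤ (2 + 2 * (n * B)) * N := by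
  have hsum : ∑ i, |b i| ≤ n * (B * N) := by
    simpa using Finset.sum_le_card_nsmul Finset.univ _ _ fun i _ => hb i
  linarith [pnorm_add_le (dirichletQuadratic G f₀) (linearMulLast b), pnorm_linearMulLast_le b,
    H.pnorm_dirichletQuadratic_le]

theorem exists_quadratic_expansion (n : ℕ) [NeZero n] {α K : ℝ} (hα : 0 < α) (hα₁ : α < 1)
    (hK : 0 < K) : ∃ C : ℝ, 0 < C ∧ ∀ (Ω : Set (En n)) (u : En n → ℝ)
      (G : MvPolynomial (Fin n) ℝ) (f₀ N Ku : ℝ), DirichletData α K N Ω u G f₀ →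
      (∀ x ∈ Ω ∩ ball 0 1, |u x| ≤ Ku * ‖x‖ ^ (1 + α)) →
      ∃ P : MvPolynomial (Fin n) ℝ, P.IsHomogeneous 2 ∧
        (∀ x ∈ Ω ∩ ball 0 1, |u x - peval P x| ≤ C * ‖x‖ ^ (2 + α) * N) ∧
        pnorm P ≤ C * N ∧ plap P = MvPolynomial.C f₀ ∧ substLast 0 P = substLast 0 G := by
  have hn : (0 : ℝ) < n := by exact_mod_cast NeZero.pos n
  obtain ⟨θ, r₀, hs, hr₀⟩ := exists_scaleChoice (Fin n) hα hα₁ (K * n ^ 2)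
    (show (0 : ℝ) < 1 / (2 * n) by positivity)
  have hnr₀ : n * r₀ < 1 := by
    rw [le_div_iff₀ (by positivity)] at hr₀
    linarith [mul_pos hn hs.radius_pos]
  have hpos := hs.radius_pos
  set B := expansionConst (Fin n) α (K * n ^ 2) θ r₀ * transportConst n K with hB
  have hBpos : 0 < B := by
    have := transportConst_pos n hK.le
    have := hs.expansionConst_pos (by positivity)
    positivity
  set A := 2 + 2 * (n * B)
  have hApos : 0 < A := by positivity
  refine ⟨B + (1 + A) / r₀ ^ (2 + α) + A, by positivity, fun Ω u G f₀ N Ku H hu => ?_⟩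
  have hN := H.nonneg
  obtain ⟨b, hbl, hb, hnear⟩ := H.exists_linearMulLast_expansion hα.le hα₁.le hK hs hnr₀ hu
  simp only [← mul_assoc, ← hB] at hb hnear
  have hP := (isHomogeneous_dirichletQuadratic H.isHomogeneous (f₀ := f₀)).add
    (isHomogeneous_linearMulLast b)
  have hPnorm := H.pnorm_dirichletQuadratic_add_linearMulLast_le hb
  refine ⟨dirichletQuadratic G f₀ + linearMulLast b, hP, fun x hx => ?_, ?_, ?_, ?_⟩
  · have hCle : 0 ≤ A * (‖x‖ ^ (2 + α) * N) := by positivity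
    linarith [abs_sub_peval_le_of_near hP hα.le hpos hApos.le hBpos.le H.bound hPnorm hnear x hx]
  · refine hPnorm.trans (mul_le_mul_of_nonneg_right ?_ hN)
    exact le_add_of_nonneg_left (by positivity)
  · rw [plap_add, plap_dirichletQuadratic H.isHomogeneous, plap_linearMulLast, hbl]
    simp
  · rw [substLast_add, substLast_zero_dirichletQuadratic, substLast_zero_linearMulLast, add_zero]

end DirichletData

theorem eq_zero_of_coeff_eq_zero {n m : ℕ} {P : MvPolynomial (Fin n) ℝ} (hP : P.totalDegree ≤ m)
    (hcoeff : ∀ d, mdeg d ≤ m → coeff d P = 0) : P = 0 := by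
  ext d
  by_contra hd
  exact hd (hcoeff d ((le_totalDegree (mem_support_iff.2 hd)).trans hP))

theorem peval_eq_coeff_zero {n : ℕ} {P : MvPolynomial (Fin n) ℝ} (hP : P.totalDegree ≤ 0)
    (x : En n) : peval P x = coeff 0 P := by
  rw [peval, totalDegree_eq_zero_iff_eq_C.1 (Nat.le_zero.1 hP), eval_C, coeff_C, if_pos rfl]

theorem eq_zero_of_abs_le_rpow {n : ℕ} {α Ku : ℝ} (hα : 0 ≤ α) {Ω : Set (En n)} {u : En n → ℝ}
    (hcont : ContinuousOn u (closure Ω ∩ ball 0 1)) (h0 : (0 : En n) ∈ closure Ω)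
    (hu : ∀ x ∈ Ω ∩ ball 0 1, |u x| ≤ Ku * ‖x‖ ^ (1 + α)) : u 0 = 0 := by
  have hle : |u 0| ≤ Ku * ‖(0 : En n)‖ ^ (1 + α) :=
    le_of_mem_closure_inter isOpen_ball hcont.abs (Continuous.continuousOn <|
      continuous_const.mul (continuous_norm.rpow_const fun _ => Or.inr (by positivity))) hu
      ⟨h0, mem_ball_self one_pos⟩
  rwa [norm_zero, Real.zero_rpow (by positivity), mul_zero, abs_nonpos_iff] at hle

section SolvesDirichlet

variable {α Ku Kf Kg Mu : ℝ} {Ω : Set (En n)} {u f g : En n → ℝ} {Pf Pg : MvPolynomial (Fin n) ℝ}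

theorem coeff_zero_eq_zero_of_solvesDirichlet {n : ℕ} {α Ku Kg : ℝ} {Ω : Set (En n)}
    {u f g : En n → ℝ} {Pg : MvPolynomial (Fin n) ℝ} (hα : 0 ≤ α) (h0 : (0 : En n) ∈ frontier Ω)
    (hsol : SolvesDirichlet Ω u f g) (hu : ∀ x ∈ Ω ∩ ball 0 1, |u x| ≤ Ku * ‖x‖ ^ (1 + α))
    (hg : ∀ x ∈ frontier Ω ∩ ball 0 1, |g x - peval Pg x| ≤ Kg * ‖x‖ ^ (2 + α)) :
    coeff 0 Pg = 0 := by
  have h0' : (0 : En n) ∈ frontier Ω ∩ ball 0 1 := ⟨h0, mem_ball_self one_pos⟩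
  have hle := hg 0 h0'
  rwa [← hsol.2.2 0 h0', eq_zero_of_abs_le_rpow hα hsol.1 (frontier_subset_closure h0) hu,
    norm_zero, Real.zero_rpow (by positivity), mul_zero, peval_zero_right, zero_sub, abs_neg,
    abs_nonpos_iff] at hle

theorem dirichletData_of_solvesDirichlet {K : ℝ} (hα : 0 ≤ α) (hΩ : IsOpen Ω)
    (h0 : (0 : En n) ∈ frontier Ω) (hsol : SolvesDirichlet Ω u f g) (hdom : Domain1α α K Ω)
    (hu : ∀ x ∈ Ω ∩ ball 0 1, |u x| ≤ Ku * ‖x‖ ^ (1 + α))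
    (hPf : Pf.totalDegree ≤ 0) (hKf : 0 ≤ Kf)
    (hf : ∀ x ∈ Ω ∩ ball 0 1, |f x - peval Pf x| ≤ Kf * ‖x‖ ^ α)
    (hPg : Pg.totalDegree ≤ 2) (hKg : 0 ≤ Kg)
    (hg : ∀ x ∈ frontier Ω ∩ ball 0 1, |g x - peval Pg x| ≤ Kg * ‖x‖ ^ (2 + α))
    (hPg₁ : ∀ i, coeff (Finsupp.single i 1) Pg = 0) (hMu : 0 ≤ Mu)
    (hbound : ∀ x ∈ Ω ∩ ball 0 1, |u x| ≤ Mu) :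
    DirichletData α K (Mu + (pnorm Pf + Kf) + (pnorm Pg + Kg)) Ω u Pg (coeff 0 Pf) := by
  have hPf₀ := pnorm_nonneg Pf
  have hPg₀ := pnorm_nonneg Pg
  refine ⟨hΩ, h0, hdom, hsol.1, fun x hx => (hsol.2.1 x hx).1, fun x hx => (hsol.2.1 x hx).2.1,
    fun x hx => ?_, fun x hx => ?_, fun x hx => (hbound x hx).trans (by linarith),
    isHomogeneous_two_of_coeff_eq_zero hPg
      (coeff_zero_eq_zero_of_solvesDirichlet hα h0 hsol hu hg) hPg₁,
    by linarith [abs_coeff_le_pnorm Pf 0]⟩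
  · rw [(hsol.2.1 x hx).2.2, ← peval_eq_coeff_zero hPf x]
    refine (hf x hx).trans (mul_le_mul_of_nonneg_right ?_ (by positivity))
    linarith
  · rw [hsol.2.2 x hx]
    refine (hg x hx).trans (mul_le_mul_of_nonneg_right ?_ (by positivity))
    linarith

end SolvesDirichlet

theorem stmt_7_general (n : ℕ) [NeZero n] (α : ℝ) (hα0 : 0 < α) (hα1 : α < 1) (M : ℝ) :
    ∃ C : ℝ, 0 < C ∧
      ∀ (Ω : Set (En n)) (u f g : En n → ℝ)
        (Pu Pf Pg : MvPolynomial (Fin n) ℝ) (Ku Kf Kg KΩ Mu : ℝ),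
        IsOpen Ω → (0 : En n) ∈ frontier Ω →
        SolvesDirichlet Ω u f g →
        Domain1α α KΩ Ω → KΩ ≤ M →
        Pu.totalDegree ≤ 1 →
        (∀ x ∈ Ω ∩ ball (0 : En n) 1, |u x - peval Pu x| ≤ Ku * ‖x‖ ^ ((1 : ℝ) + α)) →
        (∀ d : Fin n →₀ ℕ, mdeg d ≤ 1 → MvPolynomial.coeff d Pu = 0) →
        Pf.totalDegree ≤ 0 → 0 ≤ Kf →
        (∀ x ∈ Ω ∩ ball (0 : En n) 1, |f x - peval Pf x| ≤ Kf * ‖x‖ ^ α) →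
        Pg.totalDegree ≤ 2 → 0 ≤ Kg →
        (∀ x ∈ frontier Ω ∩ ball (0 : En n) 1,
          |g x - peval Pg x| ≤ Kg * ‖x‖ ^ ((2 : ℝ) + α)) →
        (∀ i, MvPolynomial.coeff (Finsupp.single i 1) Pg = 0) →
        0 ≤ Mu → (∀ x ∈ Ω ∩ ball (0 : En n) 1, |u x| ≤ Mu) →
        ∃ P : MvPolynomial (Fin n) ℝ, P.IsHomogeneous 2 ∧
          (∀ x ∈ Ω ∩ ball (0 : En n) 1,
            |u x - peval P x| ≤
              C * ‖x‖ ^ ((2 : ℝ) + α) * (Mu + (pnorm Pf + Kf) + (pnorm Pg + Kg))) ∧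
          derivNorm 2 P ≤ C * (Mu + (pnorm Pf + Kf) + (pnorm Pg + Kg)) ∧
          plap P = MvPolynomial.C (MvPolynomial.coeff 0 Pf) ∧
          substLast 0 P = substLast 0 Pg := by
  obtain ⟨C, hC, hexp⟩ := DirichletData.exists_quadratic_expansion n hα0 hα1
    (show 0 < |M| + 1 by positivity)
  refine ⟨C, hC, fun Ω u f g Pu Pf Pg Ku Kf Kg KΩ Mu hΩ h0 hsol hdom hKM hPu hu hPu₀ hPf hKf hf
    hPg hKg hg hPg₁ hMu hbound => ?_⟩
  rw [eq_zero_of_coeff_eq_zero hPu hPu₀] at hu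
  simp only [peval, map_zero, sub_zero] at hu
  obtain ⟨P, hP, hexpansion, hnorm, hlap, hflat⟩ := hexp Ω u Pg (coeff 0 Pf) _ Ku
    (dirichletData_of_solvesDirichlet hα0.le hΩ h0 hsol
      (domain1α_mono (by linarith [le_abs_self M]) hdom) hu hPf hKf hf hPg hKg hg hPg₁ hMu hbound)
    hu
  exact ⟨P, hP, hexpansion, (derivNorm_le_pnorm 2 P).trans hnorm, hlap, hflat⟩

/-- Lemma 2.1: boundary pointwise `C^{2,α}` regularity for the Dirichlet
problem when `u(0) = |Du(0)| = 0` and `|Dg(0)| = 0`. -/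
theorem stmt_7 (n : ℕ) [NeZero n] (hn : 2 ≤ n) (α : ℝ) (hα0 : 0 < α) (hα1 : α < 1) (M : ℝ) :
    ∃ C : ℝ, 0 < C ∧
      ∀ (Ω : Set (En n)) (u f g : En n → ℝ)
        (Pu Pf Pg : MvPolynomial (Fin n) ℝ) (Ku Kf Kg KΩ Mu : ℝ),
        IsOpen Ω → IsConnected Ω → IsBounded Ω → (0 : En n) ∈ frontier Ω →
        SolvesDirichlet Ω u f g →
        -- `∂Ω ∈ C^{1,α}(0)` with `‖∂Ω∩B₁‖_{C^{1,α}(0)} ≤ M`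
        0 ≤ KΩ → Domain1α α KΩ Ω → KΩ ≤ M →
        -- `u ∈ C^{1,α}(0)` with `u(0) = |Du(0)| = 0`
        Pu.totalDegree ≤ 1 →
        (∀ x ∈ Ω ∩ ball (0 : En n) 1, |u x - peval Pu x| ≤ Ku * ‖x‖ ^ ((1 : ℝ) + α)) →
        (∀ d : Fin n →₀ ℕ, mdeg d ≤ 1 → MvPolynomial.coeff d Pu = 0) →
        -- `f ∈ C^{α}(0)` (the polynomial `Pf` is the constant `f(0)`)
        Pf.totalDegree ≤ 0 → 0 ≤ Kf →
        (∀ x ∈ Ω ∩ ball (0 : En n) 1, |f x - peval Pf x| ≤ Kf * ‖x‖ ^ α) →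
        -- `g ∈ C^{2,α}(0)` with `|Dg(0)| = 0`
        Pg.totalDegree ≤ 2 → 0 ≤ Kg →
        (∀ x ∈ frontier Ω ∩ ball (0 : En n) 1,
          |g x - peval Pg x| ≤ Kg * ‖x‖ ^ ((2 : ℝ) + α)) →
        (∀ i, MvPolynomial.coeff (Finsupp.single i 1) Pg = 0) →
        -- `‖u‖_{L^∞(Ω∩B₁)} ≤ Mu`
        0 ≤ Mu → (∀ x ∈ Ω ∩ ball (0 : En n) 1, |u x| ≤ Mu) →
        -- conclusion: `u ∈ C^{2,α}(0)` with homogeneous quadratic `P`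
        ∃ P : MvPolynomial (Fin n) ℝ, P.IsHomogeneous 2 ∧
          (∀ x ∈ Ω ∩ ball (0 : En n) 1,
            |u x - peval P x| ≤
              C * ‖x‖ ^ ((2 : ℝ) + α) * (Mu + (pnorm Pf + Kf) + (pnorm Pg + Kg))) ∧
          derivNorm 2 P ≤ C * (Mu + (pnorm Pf + Kf) + (pnorm Pg + Kg)) ∧
          plap P = MvPolynomial.C (MvPolynomial.coeff 0 Pf) ∧
          substLast 0 P = substLast 0 Pg := by
  obtain ⟨C, hC, hexp⟩ := stmt_7_general n α hα0 hα1 M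
  exact ⟨C, hC, fun Ω u f g Pu Pf Pg Ku Kf Kg KΩ Mu hΩ _ _ h0 hsol _ =>
    hexp Ω u f g Pu Pf Pg Ku Kf Kg KΩ Mu hΩ h0 hsol⟩
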